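/- arXiv:1809.03049 — 2 statements merged into one kernel-verified Lean document; each statement's English description precedes it below -/
import Mathlib

section
/- If G is the block intersection graph of a balanced incomplete block design with parameters (v, k, 1) and v > k(k−1)² + 1, then the cop number and the zombie number of G both equal k: c(G) = z(G) = k. -/
open SimpleGraph

/-! ### Pursuit games on graphs

A round of the game is recorded as a pair `(c, r)` where `c : Fin k → V` is the
configuration of the `k` pursuers (cops or zombies) and `r : V` the position of the
evader (robber or survivor).  In a round the pursuers move first (knowing the full
history), then the evader moves (knowing the full history and the pursuers' new
configuration).  Strategies are functions of the full history, so no generality is lost. -/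

/-- The history of a play: the list of (pursuer configuration, evader position) pairs
for the completed rounds so far. -/
abbrev GameHist (V : Type*) (k : ℕ) := List ((Fin k → V) × V)

/-- The history determined by the sequences `c` (pursuer configurations) and `r`
(evader positions), recording rounds `0, …, n-1`. -/
def histUpTo {V : Type*} {k : ℕ} (c : ℕ → Fin k → V) (r : ℕ → V) (n : ℕ) : GameHist V k :=
  (List.range n).map fun i => (c i, r i)

/-- The robber/survivor always moves along an edge or stays still. -/
def RobberLegal {V : Type*} (G : SimpleGraph V) (r : ℕ → V) : Prop :=
  ∀ n, r (n+1) = r n ∨ G.Adj (r n) (r (n+1))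

/-- At step `n`, each cop stays still or moves along an edge. -/
def CopStepLegal {V : Type*} (G : SimpleGraph V) {k : ℕ} (c : ℕ → Fin k → V) (n : ℕ) : Prop :=
  ∀ i, c (n+1) i = c n i ∨ G.Adj (c n i) (c (n+1) i)

/-- At step `n`, each zombie moves along an edge to a vertex strictly closer to the
survivor's current position `r n`. -/
def ZombieStepLegal {V : Type*} (G : SimpleGraph V) {k : ℕ} (c : ℕ → Fin k → V) (r : ℕ → V)
    (n : ℕ) : Prop :=
  ∀ i, G.Adj (c n i) (c (n+1) i) ∧ G.dist (c (n+1) i) (r n) < G.dist (c n i) (r n)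

/-- The pursuers follow the history-dependent strategy `mv`: their configuration at time
`n+1` is the strategy applied to the history of rounds `0, …, n`. -/
def FollowsStrat {V : Type*} {k : ℕ} (mv : GameHist V k → Fin k → V)
    (c : ℕ → Fin k → V) (r : ℕ → V) : Prop :=
  ∀ n, c (n+1) = mv (histUpTo c r (n+1))

/-- Starting from the cop configuration `cpos` (the robber then chooses any starting
vertex, and the cops move first), the cops have a strategy catching the robber: in every
play consistent with the strategy there is a time at which some cop and the robber occupy
the same vertex, all cop moves made up to and including the capturing move being legal. -/
def CopsCatchFrom {V : Type*} (G : SimpleGraph V) {k : ℕ} (cpos : Fin k → V) : Prop :=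
  ∃ mv : GameHist V k → Fin k → V,
    ∀ (c : ℕ → Fin k → V) (r : ℕ → V),
      c 0 = cpos → FollowsStrat mv c r → RobberLegal G r →
      ∃ n, ((∃ i, c n i = r n) ∧ ∀ m < n, CopStepLegal G c m) ∨
           ((∃ i, c (n+1) i = r n) ∧ ∀ m ≤ n, CopStepLegal G c m)

/-- `k` cops have a winning strategy on `G`. -/
def CopsWinWith {V : Type*} (G : SimpleGraph V) (k : ℕ) : Prop :=
  ∃ cpos : Fin k → V, CopsCatchFrom G cpos

/-- The cop number of `G`: the least `k` such that `k` cops have a winning strategy. -/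
noncomputable def copNumber {V : Type*} (G : SimpleGraph V) : ℕ :=
  sInf {k | CopsWinWith G k}

/-- Starting from the zombie configuration `zpos` and survivor position `spos`, with the
zombies to move, the zombies have a strategy catching the survivor: in every play
consistent with the strategy there is a time at which some zombie and the survivor occupy
the same vertex, all zombie moves made up to and including the capturing move being legal
(each zombie moves along an edge, strictly decreasing its distance to the survivor). -/
def ZombiesCatchFrom {V : Type*} (G : SimpleGraph V) {k : ℕ} (zpos : Fin k → V) (spos : V) :
    Prop :=
  ∃ mv : GameHist V k → Fin k → V,
    ∀ (c : ℕ → Fin k → V) (r : ℕ → V),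
      c 0 = zpos → r 0 = spos → FollowsStrat mv c r → RobberLegal G r →
      ∃ n, ((∃ i, c n i = r n) ∧ ∀ m < n, ZombieStepLegal G c r m) ∨
           ((∃ i, c (n+1) i = r n) ∧ ∀ m ≤ n, ZombieStepLegal G c r m)

/-- `k` zombies have a winning strategy on `G`: they can choose starting vertices so that
wherever the survivor starts, they catch the survivor. -/
def ZombiesWinWith {V : Type*} (G : SimpleGraph V) (k : ℕ) : Prop :=
  ∃ zpos : Fin k → V, ∀ spos : V, ZombiesCatchFrom G zpos spos

/-- The zombie number of `G`: the least `k` such that `k` zombies have a winning strategy. -/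
noncomputable def zombieNumber {V : Type*} (G : SimpleGraph V) : ℕ :=
  sInf {k | ZombiesWinWith G k}

/-- Starting from the zombie configuration `zpos` and survivor position `spos`, with the
zombies to move, the survivor has a strategy evading capture forever: in every play where
the survivor follows the strategy and the zombies move legally, the survivor's moves are
legal and no zombie ever occupies the survivor's vertex. -/
def SurvivorEvadesFrom {V : Type*} (G : SimpleGraph V) {k : ℕ} (zpos : Fin k → V) (spos : V) :
    Prop :=
  ∃ mv : GameHist V k → (Fin k → V) → V,
    ∀ (c : ℕ → Fin k → V) (r : ℕ → V),
      c 0 = zpos → r 0 = spos →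
      (∀ n, r (n+1) = mv (histUpTo c r (n+1)) (c (n+1))) →
      (∀ n, ZombieStepLegal G c r n) →
      RobberLegal G r ∧ ∀ n, (∀ i, c n i ≠ r n) ∧ (∀ i, c (n+1) i ≠ r n)

/-- Zombie-move legality in the variant where in each round the survivor moves first:
at step `n` each zombie moves along an edge, strictly decreasing its distance to the
survivor's current position `r (n+1)`. -/
def ZombieStepLegalAfter {V : Type*} (G : SimpleGraph V) {k : ℕ} (c : ℕ → Fin k → V)
    (r : ℕ → V) (n : ℕ) : Prop :=
  ∀ i, G.Adj (c n i) (c (n+1) i) ∧ G.dist (c (n+1) i) (r (n+1)) < G.dist (c n i) (r (n+1))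

/-- Starting from the zombie configuration `zpos` and survivor position `spos`, with the
survivor to move (the zombies then responding each round), the zombies have a strategy
catching the survivor. -/
def ZombiesCatchFromSurvivorToMove {V : Type*} (G : SimpleGraph V) {k : ℕ}
    (zpos : Fin k → V) (spos : V) : Prop :=
  ∃ mv : GameHist V k → V → Fin k → V,
    ∀ (c : ℕ → Fin k → V) (r : ℕ → V),
      c 0 = zpos → r 0 = spos →
      (∀ n, c (n+1) = mv (histUpTo c r (n+1)) (r (n+1))) →
      RobberLegal G r →
      ∃ n, (∃ i, c 0 i = r 0) ∨
           ((∃ i, c n i = r (n+1)) ∧ ∀ m < n, ZombieStepLegalAfter G c r m) ∨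
           ((∃ i, c (n+1) i = r (n+1)) ∧ ∀ m ≤ n, ZombieStepLegalAfter G c r m)

/-! ### The graphs `T_x`, the arm graphs `A_n`, and attaching an arm to a graph -/

/-- `|i - j| = 1 or 4` for `i j : Fin 5`, i.e. `i` and `j` are cyclically consecutive. -/
def fin5adj (i j : Fin 5) : Prop :=
  ((i : ℕ) + 1) % 5 = (j : ℕ) ∨ ((j : ℕ) + 1) % 5 = (i : ℕ)

/-- The vertices of the arm graph `A_n`: the vertex `b₂⁻¹` (`start`), the vertex `b₀ⁿ`
(`finish`), and for each copy `T_x` (`x : Fin n`) the inside vertices `a_i^x`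
(`inner x i`), the outside vertices `b_i^x` (`outer x i`) and the center `c^x`
(`center x`). -/
inductive ArmVert (n : ℕ) : Type
  | start : ArmVert n
  | finish : ArmVert n
  | inner : Fin n → Fin 5 → ArmVert n
  | outer : Fin n → Fin 5 → ArmVert n
  | center : Fin n → ArmVert n
  deriving DecidableEq

/-- One direction of the edge relation of the arm graph `A_n`. -/
def armRel (n : ℕ) : ArmVert n → ArmVert n → Prop
  | .inner x i, .inner y j => x = y ∧ fin5adj i j
  | .outer x i, .outer y j => (x = y ∧ fin5adj i j) ∨ ((x : ℕ) + 1 = (y : ℕ) ∧ (i : ℕ) = 2 ∧ (j : ℕ) = 0)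
  | .inner x i, .outer y j => x = y ∧ (i = j ∨ fin5adj i j)
  | .inner x _, .center y => x = y
  | .start, .outer y j => (y : ℕ) = 0 ∧ (j : ℕ) = 0
  | .outer x i, .finish => (x : ℕ) + 1 = n ∧ (i : ℕ) = 2
  | .start, .finish => n = 0
  | _, _ => False

/-- The arm graph `A_n`. -/
def armGraph (n : ℕ) : SimpleGraph (ArmVert n) := SimpleGraph.fromRel (armRel n)

/-- The index of the copy `T_x` containing a vertex of `A_n` (if any). -/
def copyIdx {n : ℕ} : ArmVert n → Option (Fin n)
  | .inner x _ => some x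
  | .outer x _ => some x
  | .center x => some x
  | _ => none

/-- The vertex `b₀ˣ` of `A_n` (for `x = n` this is the final vertex `b₀ⁿ`). -/
def b0 (n x : ℕ) : ArmVert n :=
  if h : x < n then ArmVert.outer ⟨x, h⟩ 0 else ArmVert.finish

/-- The vertex `b₂^{x-1}` of `A_n` (for `x = 0` this is the vertex `b₂⁻¹`). -/
def b2prev (n x : ℕ) : ArmVert n :=
  if h : 1 ≤ x ∧ x - 1 < n then ArmVert.outer ⟨x - 1, h.2⟩ 2 else ArmVert.start

/-- The vertex lies in the copy `T_x`. -/
def InCopy {W : Type*} {n : ℕ} (x : ℕ) (u : W ⊕ ArmVert n) : Prop :=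
  ∃ (a : ArmVert n) (y : Fin n), u = Sum.inr a ∧ copyIdx a = some y ∧ (y : ℕ) = x

/-- One direction of the edge relation of the graph obtained from a graph `H` and the
arm `A_n` by adding an edge from the vertex `b₂⁻¹` of `A_n` to the vertex `v` of `H`. -/
def combRel {W : Type*} (H : SimpleGraph W) (v : W) (n : ℕ) :
    (W ⊕ ArmVert n) → (W ⊕ ArmVert n) → Prop
  | Sum.inl w, Sum.inl w' => H.Adj w w'
  | Sum.inr a, Sum.inr a' => (armGraph n).Adj a a'
  | Sum.inl w, Sum.inr a => w = v ∧ a = ArmVert.start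
  | _, _ => False

/-- The graph obtained from `H` and the arm `A_n` by adding an edge from the vertex
`b₂⁻¹` of `A_n` to the vertex `v` of `H`. -/
def combGraph {W : Type*} (H : SimpleGraph W) (v : W) (n : ℕ) :
    SimpleGraph (W ⊕ ArmVert n) :=
  SimpleGraph.fromRel (combRel H v n)

/-! ### The graphs `Z_{k,m}(H)` -/

/-- The vertices of `Z_{k,m}(H)` where `H` has vertex type `W` and `p = 4*(m-k)`:
the vertices of `H`, for each vertex of `H` a path on `p` vertices, and for each
vertex of `H` `m` copies of the arm graph `A_p`. -/
abbrev ZVert (W : Type*) (m p : ℕ) : Type _ := W ⊕ (W × Fin p) ⊕ (W × Fin m × ArmVert p)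

/-- One direction of the edge relation of `Z_{k,m}(H)`. -/
def zRel {W : Type*} (H : SimpleGraph W) (m p : ℕ) : ZVert W m p → ZVert W m p → Prop
  | Sum.inl w, Sum.inl w' => H.Adj w w'
  | Sum.inl w, Sum.inr (Sum.inl (w', j)) => w = w' ∧ (j : ℕ) = 0
  | Sum.inr (Sum.inl (w, j)), Sum.inr (Sum.inl (w', j')) => w = w' ∧ (j : ℕ) + 1 = (j' : ℕ)
  | Sum.inl w, Sum.inr (Sum.inr (w', _, a)) => w = w' ∧ a = ArmVert.start
  | Sum.inr (Sum.inr (w, i, a)), Sum.inr (Sum.inr (w', i', a')) =>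
      w = w' ∧ i = i' ∧ (armGraph p).Adj a a'
  | _, _ => False

/-- The graph `Z_{k,m}(H)`: to each vertex `v` of `H` we attach (by an edge from `v` to
the first path vertex, resp. to `b₂⁻¹`) one path on `4*(m-k)` vertices and `m` copies of
the arm graph `A_{4*(m-k)}`. -/
def ZGraph {W : Type*} (H : SimpleGraph W) (k m : ℕ) :
    SimpleGraph (ZVert W m (4 * (m - k))) :=
  SimpleGraph.fromRel (zRel H m (4 * (m - k)))

/-! ### Hypercubes and block intersection graphs -/

/-- The `n`-dimensional hypercube: vertices are `Fin n → Bool`, two vertices being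
adjacent exactly when they differ in exactly one coordinate. -/
def hypercube (n : ℕ) : SimpleGraph (Fin n → Bool) :=
  SimpleGraph.fromRel fun x y => ∃ i, x i ≠ y i ∧ ∀ j, j ≠ i → x j = y j

/-- `(P, B)` is a balanced incomplete block design with parameters `(v, k, 1)`:
`P` has `v` points, every block has `k` points, and every pair of distinct points lies
in exactly one block. -/
def IsBIBD (P : Type*) (B : Finset (Finset P)) (v k : ℕ) : Prop :=
  Nat.card P = v ∧ (∀ b ∈ B, b.card = k) ∧
    ∀ p q : P, p ≠ q → ∃! b : Finset P, b ∈ B ∧ p ∈ b ∧ q ∈ b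

/-- The block intersection graph of a collection `B` of blocks: vertices are the blocks,
two distinct blocks being adjacent exactly when they intersect. -/
def blockGraph {P : Type*} (B : Finset (Finset P)) : SimpleGraph {b // b ∈ B} :=
  SimpleGraph.fromRel fun b b' => ∃ p, p ∈ b.val ∧ p ∈ b'.val

/-! ### Zombie-good positions on a graph with an attached arm -/

/-- A position (with the zombies to move) in the game on the graph obtained by attaching
the arm `A_n` to `H` at `v` is `x`-zombie-good if: the survivor is in some `T_y` with
`y ≥ x` or at `b₀ⁿ`; for some `i ≥ 1` the zombies `z_1, …, z_i` are all at `b₀ˣ`; the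
remaining zombies are in `H ∪ {b₂⁻¹} ∪ T_0 ∪ ⋯ ∪ T_{x-1}`; consecutive zombie distances
to the survivor satisfy `0 ≤ d_{j+1} - d_j ≤ 4`; and `d_m - d_1 ≥ n - x`. -/
def ZombieGood {W : Type*} (H : SimpleGraph W) (v : W) (n m x : ℕ)
    (zpos : Fin m → (W ⊕ ArmVert n)) (spos : W ⊕ ArmVert n) : Prop :=
  (∃ a : ArmVert n, spos = Sum.inr a ∧
      ((∃ y : Fin n, copyIdx a = some y ∧ x ≤ (y : ℕ)) ∨ a = ArmVert.finish)) ∧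
  (∃ i : ℕ, 1 ≤ i ∧ i ≤ m ∧
      (∀ j : Fin m, (j : ℕ) < i → zpos j = Sum.inr (b0 n x)) ∧
      (∀ j : Fin m, i ≤ (j : ℕ) →
        (∃ w, zpos j = Sum.inl w) ∨ zpos j = Sum.inr ArmVert.start ∨
          (∃ (a : ArmVert n) (y : Fin n), zpos j = Sum.inr a ∧ copyIdx a = some y ∧ (y : ℕ) < x))) ∧
  (∀ j : Fin m, ∀ h : (j : ℕ) + 1 < m,
      (combGraph H v n).dist spos (zpos j) ≤ (combGraph H v n).dist spos (zpos ⟨(j : ℕ) + 1, h⟩) ∧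
      (combGraph H v n).dist spos (zpos ⟨(j : ℕ) + 1, h⟩) - (combGraph H v n).dist spos (zpos j) ≤ 4) ∧
  (∀ hm : 1 ≤ m,
      n - x ≤ (combGraph H v n).dist spos (zpos ⟨m - 1, by omega⟩) -
        (combGraph H v n).dist spos (zpos ⟨0, by omega⟩))

section Helpers

variable {P : Type*} {B : Finset (Finset P)} {v k : ℕ}

lemma blockGraph_adj (a b : {b // b ∈ B}) :
    (blockGraph B).Adj a b ↔ a ≠ b ∧ ∃ p, p ∈ a.val ∧ p ∈ b.val := by
  unfold blockGraph
  rw [SimpleGraph.fromRel_adj]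
  constructor
  · rintro ⟨h, ⟨p, hp⟩ | ⟨p, hp⟩⟩
    · exact ⟨h, p, hp⟩
    · exact ⟨h, p, hp.2, hp.1⟩
  · rintro ⟨h, hp⟩
    exact ⟨h, Or.inl hp⟩

lemma zombies_to_cops {V : Type*} {G : SimpleGraph V} {j : ℕ} (h : ZombiesWinWith G j) :
    CopsWinWith G j := by
  obtain ⟨z, hz⟩ := h
  choose mv hmv using hz
  refine ⟨z, fun hist => match hist with
    | [] => z
    | a :: l => mv a.2 (a :: l), ?_⟩
  intro c r h0 hf hr
  have hle : ∀ m, ZombieStepLegal G c r m → CopStepLegal G c m :=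
    fun m hm i => Or.inr (hm i).1
  have hf' : FollowsStrat (mv (r 0)) c r := by
    intro n
    rw [hf n]
    simp [histUpTo, List.range_succ_eq_map]
  obtain ⟨n, ⟨h1, h2⟩ | ⟨h1, h2⟩⟩ := hmv (r 0) c r h0 rfl hf' hr
  · exact ⟨n, Or.inl ⟨h1, fun m hm => hle m (h2 m hm)⟩⟩
  · exact ⟨n, Or.inr ⟨h1, fun m hm => hle m (h2 m hm)⟩⟩

/-- A one-step zombie strategy suffices. -/
lemma zombies_win_of_step {V : Type*} {G : SimpleGraph V} {j : ℕ} (z : Fin j → V)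
    (H : ∀ (c : Fin j → V) (r : V), ∃ s : Fin j → V, (∀ i, c i ≠ r) →
      (∀ i, G.Adj (c i) (s i) ∧ G.dist (s i) r < G.dist (c i) r) ∧
      (∀ i, G.Adj (c i) r → s i = r) ∧
      ((∃ i, s i = r) ∨ ∀ r', r' = r ∨ G.Adj r r' → ∃ i, s i = r' ∨ G.Adj (s i) r')) :
    ZombiesWinWith G j := by
  choose s hs using H
  refine ⟨z, fun spos => ⟨fun hist => match hist.getLast? with
    | none => z
    | some a => s a.1 a.2, ?_⟩⟩
  intro c r h0 hr0 hf hr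
  have hf' : ∀ n, c (n+1) = s (c n) (r n) := by
    intro n
    rw [hf n]
    simp [histUpTo, List.range_succ]
  have hleg : ∀ n, (∀ i, c n i ≠ r n) → ZombieStepLegal G c r n := by
    intro n hn i
    rw [hf' n]
    exact (hs _ _ hn).1 i
  by_cases h : ∃ i, c 0 i = r 0
  · exact ⟨0, Or.inl ⟨h, by simp⟩⟩
  push Not at h
  have l0 := hleg 0 h
  obtain ⟨i, hi⟩ | hc := (hs _ _ h).2.2
  · refine ⟨0, Or.inr ⟨⟨i, by rw [hf' 0]; exact hi⟩, ?_⟩⟩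
    intro m hm
    obtain rfl : m = 0 := by omega
    exact l0
  by_cases h1 : ∃ i, c 1 i = r 1
  · refine ⟨1, Or.inl ⟨h1, ?_⟩⟩
    intro m hm
    obtain rfl : m = 0 := by omega
    exact l0
  push Not at h1
  obtain ⟨i, hi⟩ := hc (r 1) (hr 0)
  rw [← hf' 0] at hi
  refine ⟨1, Or.inr ⟨⟨i, ?_⟩, ?_⟩⟩
  · rw [hf' 1]
    exact (hs _ _ h1).2.1 i (hi.resolve_left (h1 i))
  · intro m hm
    obtain rfl | rfl : m = 0 ∨ m = 1 := by omega
    · exact l0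
    · exact hleg 1 h1

/-- The play generated by a cop strategy and a positional robber strategy. -/
def playState {V : Type*} {j : ℕ} (mv : GameHist V j → Fin j → V) (f : (Fin j → V) → V → V)
    (c0 : Fin j → V) (r0 : V) : ℕ → GameHist V j × (Fin j → V) × V
  | 0 => ([], c0, r0)
  | n+1 =>
    let S := playState mv f c0 r0 n
    let h := S.1 ++ [(S.2.1, S.2.2)]
    (h, mv h, f (mv h) S.2.2)

lemma cops_lose_of_step {V : Type*} {G : SimpleGraph V} {j : ℕ}
    (H0 : ∀ c : Fin j → V, ∃ r, ∀ i, c i ≠ r ∧ ¬ G.Adj (c i) r)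
    (H : ∀ (c : Fin j → V) (r : V), (∀ i, c i ≠ r) →
      ∃ r', (r' = r ∨ G.Adj r r') ∧ ∀ i, c i ≠ r' ∧ ¬ G.Adj (c i) r') :
    ¬ CopsWinWith G j := by
  rintro ⟨c0, mv, hmv⟩
  obtain ⟨r0, hr0⟩ := H0 c0
  have H' : ∀ (c : Fin j → V) (r : V), ∃ r', (r' = r ∨ G.Adj r r') ∧
      ((∀ i, c i ≠ r) → ∀ i, c i ≠ r' ∧ ¬ G.Adj (c i) r') := by
    intro c r
    by_cases h : ∀ i, c i ≠ r
    · obtain ⟨r', h1, h2⟩ := H c r h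
      exact ⟨r', h1, fun _ => h2⟩
    · exact ⟨r, Or.inl rfl, fun h' => absurd h' h⟩
  choose f hf1 hf2 using H'
  set S := playState mv f c0 r0 with hS
  let c : ℕ → Fin j → V := fun n => (S n).2.1
  let r : ℕ → V := fun n => (S n).2.2
  have hh : ∀ n, histUpTo c r n = (S n).1 := by
    intro n
    induction n with
    | zero => rfl
    | succ n ih =>
      have : histUpTo c r (n+1) = histUpTo c r n ++ [(c n, r n)] := by
        simp [histUpTo, List.range_succ]
      rw [this, ih]
      rfl
  have hc : FollowsStrat mv c r := by
    intro n
    rw [hh]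
    rfl
  have hrs : ∀ n, r (n+1) = f (c (n+1)) (r n) := fun n => rfl
  have hrl : RobberLegal G r := by
    intro n
    rw [hrs]
    exact hf1 _ _
  have pre : ∀ n, (∀ i, c n i ≠ r n ∧ ¬ G.Adj (c n i) (r n)) → CopStepLegal G c n →
      ∀ i, c (n+1) i ≠ r n := by
    intro n hn hl i he
    rcases hl i with h | h
    · exact (hn i).1 (h ▸ he)
    · exact (hn i).2 (he ▸ h)
  have safe : ∀ n, (∀ m < n, CopStepLegal G c m) →
      ∀ i, c n i ≠ r n ∧ ¬ G.Adj (c n i) (r n) := by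
    intro n
    induction n with
    | zero => intro _; exact hr0
    | succ n ih =>
      intro hm
      rw [hrs]
      exact hf2 _ _ (pre n (ih fun m h => hm m (by omega)) (hm n (by omega)))
  obtain ⟨n, ⟨⟨i, h1⟩, h2⟩ | ⟨⟨i, h1⟩, h2⟩⟩ := hmv c r rfl hc hrl
  · exact (safe n h2 i).1 h1
  · exact pre n (safe n fun m hm => h2 m hm.le) (h2 n le_rfl) i h1

lemma exists_avoiding_block [Fintype P] (hB : IsBIBD P B v k) (hv : k * (k - 1) ^ 2 + 1 < v)
    {j : ℕ} (hj : j < k) (c : Fin j → {b // b ∈ B}) (x : P) (hx : ∀ i, x ∉ (c i).val) :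
    ∃ r : {b // b ∈ B}, x ∈ r.val ∧ ∀ i, c i ≠ r ∧ ¬ (blockGraph B).Adj (c i) r := by
  classical
  obtain ⟨hcard, hk, hpair⟩ := hB
  rw [Nat.card_eq_fintype_card] at hcard
  by_contra hcon
  push Not at hcon
  have hJ : ∀ q : P, ∃ b : Finset P, b.card = k ∧ x ∈ b ∧
      (q ≠ x → q ∈ b ∧ ∀ b' ∈ B, x ∈ b' → q ∈ b' → b' = b) := by
    intro q
    by_cases hq : q = x
    · subst hq
      obtain ⟨y, hy⟩ := Fintype.exists_ne_of_one_lt_card (by omega) q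
      obtain ⟨b, ⟨hb, h1, h2⟩, -⟩ := hpair q y hy.symm
      exact ⟨b, hk b hb, h1, fun h => absurd rfl h⟩
    · obtain ⟨b, ⟨hb, h1, h2⟩, hu⟩ := hpair x q (Ne.symm hq)
      exact ⟨b, hk b hb, h1, fun _ => ⟨h2, fun b' h h' h'' => hu b' ⟨h, h', h''⟩⟩⟩
  choose J hJ1 hJ2 hJ3 using hJ
  have hsub : (Finset.univ.erase x : Finset P) ⊆
      Finset.univ.biUnion fun i : Fin j => (c i).val.biUnion fun q => (J q).erase x := by
    intro y hy
    have hyx : y ≠ x := Finset.ne_of_mem_erase hy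
    obtain ⟨b, ⟨hb, h1, h2⟩, -⟩ := hpair x y hyx.symm
    obtain ⟨i, hi⟩ := hcon ⟨b, hb⟩ h1
    have hne : c i ≠ ⟨b, hb⟩ := fun h => hx i (by rw [h]; exact h1)
    obtain ⟨-, q, hq1, hq2⟩ := (blockGraph_adj _ _).1 (hi hne)
    have hqx : q ≠ x := fun h => hx i (h ▸ hq1)
    have hbJ := (hJ3 q hqx).2 b hb h1 hq2
    simp only [Finset.mem_biUnion, Finset.mem_univ, true_and, Finset.mem_erase]
    exact ⟨i, q, hq1, hyx, hbJ ▸ h2⟩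
  have hle := Finset.card_le_card hsub
  have h1 : ∀ i : Fin j, ((c i).val.biUnion fun q => (J q).erase x).card ≤ k * (k - 1) := by
    intro i
    have := Finset.card_biUnion_le_card_mul (c i).val (fun q => (J q).erase x) (k-1)
      (fun q _ => by rw [Finset.card_erase_of_mem (hJ2 q), hJ1])
    rwa [hk _ (c i).2] at this
  have h2 := Finset.card_biUnion_le_card_mul Finset.univ
    (fun i : Fin j => (c i).val.biUnion fun q => (J q).erase x) _ (fun i _ => h1 i)
  rw [Finset.card_univ, Fintype.card_fin] at h2
  rw [Finset.card_erase_of_mem (Finset.mem_univ x), Finset.card_univ, hcard] at hle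
  have h3 : j * (k * (k-1)) ≤ (k-1) * (k * (k-1)) := Nat.mul_le_mul_right _ (by omega)
  have h4 : (k-1) * (k * (k-1)) = k * (k-1)^2 := by ring
  omega

lemma two_le_k [Fintype P] (hB : IsBIBD P B v k) (hv : k * (k - 1) ^ 2 + 1 < v) :
    2 ≤ k := by
  obtain ⟨hcard, hk, hpair⟩ := hB
  rw [Nat.card_eq_fintype_card] at hcard
  obtain ⟨x, y, hxy⟩ := Fintype.exists_pair_of_one_lt_card (α := P) (by omega)
  obtain ⟨b, ⟨hb, h1, h2⟩, -⟩ := hpair x y hxy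
  rw [← hk b hb]
  exact Finset.one_lt_card.2 ⟨x, h1, y, h2, hxy⟩

lemma cops_lose [Fintype P] (hB : IsBIBD P B v k) (hv : k * (k - 1) ^ 2 + 1 < v)
    {j : ℕ} (hj : j < k) : ¬ CopsWinWith (blockGraph B) j := by
  classical
  have h2k := two_le_k hB hv
  have hB' := hB
  obtain ⟨hcard, hk, hpair⟩ := hB'
  rw [Nat.card_eq_fintype_card] at hcard
  apply cops_lose_of_step
  · intro c
    have hx : ∃ x : P, ∀ i, x ∉ (c i).val := by
      by_contra hcon
      push Not at hcon
      have hsub : (Finset.univ : Finset P) ⊆ Finset.univ.biUnion fun i : Fin j => (c i).val := by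
        intro y _
        simpa using hcon y
      have hle := Finset.card_le_card hsub
      have h2 := Finset.card_biUnion_le_card_mul Finset.univ
        (fun i : Fin j => (c i).val) k (fun i _ => (hk _ (c i).2).le)
      rw [Finset.card_univ, hcard] at hle
      rw [Finset.card_univ, Fintype.card_fin] at h2
      have h3 : j * k ≤ (k-1) * k := Nat.mul_le_mul_right _ (by omega)
      have h4 : (k-1) * k * 1 ≤ (k-1) * k * (k-1) := Nat.mul_le_mul_left _ (by omega)
      have h5 : (k-1) * k * (k-1) = k * (k-1)^2 := by ring
      omega
    obtain ⟨x, hx⟩ := hx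
    obtain ⟨r, -, hr⟩ := exists_avoiding_block hB hv hj c x hx
    exact ⟨r, hr⟩
  · intro c r hcr
    have hx : ∃ x ∈ r.val, ∀ i, x ∉ (c i).val := by
      by_contra hcon
      push Not at hcon
      have hsub : r.val ⊆ Finset.univ.biUnion fun i : Fin j => (c i).val ∩ r.val := by
        intro y hy
        obtain ⟨i, hi⟩ := hcon y hy
        simp only [Finset.mem_biUnion, Finset.mem_univ, true_and, Finset.mem_inter]
        exact ⟨i, hi, hy⟩
      have hle := Finset.card_le_card hsub
      have h2 := Finset.card_biUnion_le_card_mul Finset.univ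
        (fun i : Fin j => (c i).val ∩ r.val) 1 (fun i _ => by
          rw [Finset.card_le_one]
          intro a ha b hb
          rw [Finset.mem_inter] at ha hb
          by_contra hab
          exact hcr i (Subtype.ext ((hpair a b hab).unique ⟨(c i).2, ha.1, hb.1⟩
            ⟨r.2, ha.2, hb.2⟩)))
      rw [hk _ r.2] at hle
      rw [Finset.card_univ, Fintype.card_fin] at h2
      omega
    obtain ⟨x, hxr, hx⟩ := hx
    obtain ⟨r', hr', hs⟩ := exists_avoiding_block hB hv hj c x hx
    refine ⟨r', ?_, hs⟩
    by_cases h : r' = r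
    · exact Or.inl h
    · exact Or.inr ((blockGraph_adj _ _).2 ⟨Ne.symm h, x, hxr, hr'⟩)

lemma zombies_win [Fintype P] (hB : IsBIBD P B v k) (hv : k * (k - 1) ^ 2 + 1 < v) :
    ZombiesWinWith (blockGraph B) k := by
  classical
  have h2k := two_le_k hB hv
  obtain ⟨hcard, hk, hpair⟩ := hB
  rw [Nat.card_eq_fintype_card] at hcard
  obtain ⟨x, y, hxy⟩ := Fintype.exists_pair_of_one_lt_card (α := P) (by omega)
  obtain ⟨b, ⟨hb, -, -⟩, -⟩ := hpair x y hxy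
  refine zombies_win_of_step (fun _ => ⟨b, hb⟩) ?_
  intro c r
  let e : Fin k ≃ r.val := (r.val.equivFinOfCardEq (hk _ r.2)).symm
  have key : ∀ i : Fin k, ∃ s : {b // b ∈ B}, c i ≠ r →
      (((blockGraph B).Adj (c i) s ∧ (blockGraph B).dist s r < (blockGraph B).dist (c i) r) ∧
      ((blockGraph B).Adj (c i) r → s = r) ∧
      (¬ (blockGraph B).Adj (c i) r → (e i).val ∈ s.val ∧ (blockGraph B).Adj s r)) := by
    intro i
    by_cases ha : (blockGraph B).Adj (c i) r
    · refine ⟨r, fun _ => ⟨⟨ha, ?_⟩, fun _ => rfl, fun h => absurd ha h⟩⟩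
      rw [SimpleGraph.dist_self, SimpleGraph.dist_eq_one_iff_adj.2 ha]
      exact one_pos
    · by_cases hne : c i = r
      · exact ⟨r, fun h => absurd hne h⟩
      have hdis : ∀ p, p ∈ (c i).val → p ∉ r.val := fun p h1 h2 =>
        ha ((blockGraph_adj _ _).2 ⟨hne, p, h1, h2⟩)
      obtain ⟨q, hq⟩ : (c i).val.Nonempty := by
        rw [← Finset.card_pos, hk _ (c i).2]; omega
      have hp := (e i).2
      have hqp : q ≠ (e i).val := fun h => hdis q hq (h ▸ hp)
      obtain ⟨s, ⟨hs, h1, h2⟩, -⟩ := hpair q _ hqp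
      have a1 : (blockGraph B).Adj (c i) ⟨s, hs⟩ := by
        refine (blockGraph_adj _ _).2 ⟨fun h => hdis _ ?_ hp, q, hq, h1⟩
        rw [h]; exact h2
      have a2 : (blockGraph B).Adj ⟨s, hs⟩ r := by
        refine (blockGraph_adj _ _).2 ⟨fun h => hdis _ hq ?_, _, h2, hp⟩
        rw [← h]; exact h1
      refine ⟨⟨s, hs⟩, fun _ => ⟨⟨a1, ?_⟩, fun h => absurd h ha, fun _ => ⟨h2, a2⟩⟩⟩
      rw [SimpleGraph.dist_eq_one_iff_adj.2 a2]
      have hr : (blockGraph B).Reachable (c i) r := a1.reachable.trans a2.reachable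
      have d0 := hr.pos_dist_of_ne hne
      have d1 : (blockGraph B).dist (c i) r ≠ 1 := fun h =>
        ha (SimpleGraph.dist_eq_one_iff_adj.1 h)
      omega
  choose s hs using key
  refine ⟨s, fun hcr => ⟨fun i => (hs i (hcr i)).1, fun i => (hs i (hcr i)).2.1, ?_⟩⟩
  by_cases hex : ∃ i, (blockGraph B).Adj (c i) r
  · obtain ⟨i, hi⟩ := hex
    exact Or.inl ⟨i, (hs i (hcr i)).2.1 hi⟩
  push Not at hex
  right
  rintro r' (rfl | hr')
  · exact ⟨⟨0, by omega⟩, Or.inr ((hs _ (hcr _)).2.2 (hex _)).2⟩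
  · obtain ⟨-, p, hp, hp'⟩ := (blockGraph_adj _ _).1 hr'
    obtain ⟨i, hi⟩ := e.surjective ⟨p, hp⟩
    have hps := ((hs i (hcr i)).2.2 (hex i)).1
    rw [hi] at hps
    refine ⟨i, ?_⟩
    by_cases h : s i = r'
    · exact Or.inl h
    · exact Or.inr ((blockGraph_adj _ _).2 ⟨h, p, hps, hp'⟩)

end Helpers

/-- If `G` is the block intersection graph of a balanced incomplete block design with
parameters `(v, k, 1)` and `v > k(k-1)² + 1`, then `c(G) = z(G) = k`. -/
theorem cop_and_zombie_number_blockGraph {P : Type*} [Fintype P] (B : Finset (Finset P))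
    (v k : ℕ) (hB : IsBIBD P B v k) (hv : k * (k - 1) ^ 2 + 1 < v) :
    copNumber (blockGraph B) = k ∧ zombieNumber (blockGraph B) = k := by
  have hz := zombies_win hB hv
  have hl : ∀ j, CopsWinWith (blockGraph B) j → k ≤ j := fun j hj => by
    by_contra h
    exact cops_lose hB hv (by omega) hj
  constructor
  · exact le_antisymm (Nat.sInf_le (zombies_to_cops hz))
      (hl _ (Nat.sInf_mem (s := {k | CopsWinWith (blockGraph B) k}) ⟨k, zombies_to_cops hz⟩))
  · exact le_antisymm (Nat.sInf_le hz)
      (hl _ (zombies_to_cops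
        (Nat.sInf_mem (s := {k | ZombiesWinWith (blockGraph B) k}) ⟨k, hz⟩)))
end

section
/- Let m ≥ k ≥ 1 be integers, and let H be a single vertex if k = 1, or the block intersection graph of a balanced incomplete block design with parameters (v, k, 1) with v > k(k−1)² + 1 if k ≥ 2. Then the graph Z_{k,m}(H) has cop number k and zombie number m: c(Z_{k,m}(H)) = k and z(Z_{k,m}(H)) = m. -/
open SimpleGraph

/-! ### Generic game lemmas -/

/-- A legal zombie move of one zombie. -/
def ZLeg {V : Type*} (G : SimpleGraph V) (z s z' : V) : Prop :=
  G.Adj z z' ∧ G.dist z' s < G.dist z s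

/-- A legal cop move of one cop. -/
def CLeg {V : Type*} (G : SimpleGraph V) (z _s y : V) : Prop :=
  y = z ∨ G.Adj z y

/-- Positions (pursuers to move) that are winning for the pursuers. -/
inductive PWin {V : Type*} (G : SimpleGraph V) (L : V → V → V → Prop) {J : ℕ} :
    (Fin J → V) → V → Prop
  | cap {z : Fin J → V} {s : V} (i : Fin J) : z i = s → PWin G L z s
  | capm {z : Fin J → V} {s : V} (z' : Fin J → V) (i : Fin J) :
      (∀ i, L (z i) s (z' i)) → z' i = s → PWin G L z s
  | step {z : Fin J → V} {s : V} (z' : Fin J → V) :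
      (∀ i, L (z i) s (z' i)) → (∀ s', (s' = s ∨ G.Adj s s') → PWin G L z' s') → PWin G L z s

theorem histUpTo_succ {V : Type*} {J : ℕ} (c : ℕ → Fin J → V) (r : ℕ → V) (n : ℕ) :
    histUpTo c r (n+1) = (c 0, r 0) :: histUpTo (fun i => c (i+1)) (fun i => r (i+1)) n := by
  simp [histUpTo, List.range_succ_eq_map, Function.comp_def]

theorem histUpTo_succ' {V : Type*} {J : ℕ} (c : ℕ → Fin J → V) (r : ℕ → V) (n : ℕ) :
    histUpTo c r (n+1) = histUpTo c r n ++ [(c n, r n)] := by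
  simp [histUpTo, List.range_succ]

/-- A strategy catching the evader from a given position, for the move rule `L`. -/
def CatchFrom {V : Type*} (G : SimpleGraph V) (L : V → V → V → Prop) {J : ℕ}
    (z : Fin J → V) (s : V) (mv : GameHist V J → Fin J → V) : Prop :=
  ∀ (c : ℕ → Fin J → V) (r : ℕ → V), c 0 = z → r 0 = s → FollowsStrat mv c r →
    RobberLegal G r →
    ∃ n, ((∃ i, c n i = r n) ∧ ∀ m < n, ∀ i, L (c m i) (r m) (c (m+1) i)) ∨
      ((∃ i, c (n+1) i = r n) ∧ ∀ m ≤ n, ∀ i, L (c m i) (r m) (c (m+1) i))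

theorem PWin.strat {V : Type*} {G : SimpleGraph V} {L : V → V → V → Prop} {J : ℕ}
    {z : Fin J → V} {s : V} (h : PWin G L z s) : ∃ mv, CatchFrom G L z s mv := by
  classical
  induction h with
  | @cap z s i hi =>
    refine ⟨fun _ => z, fun c r hc hr _ _ => ⟨0, Or.inl ⟨⟨i, ?_⟩, by simp⟩⟩⟩
    rw [hc, hr, hi]
  | @capm z s z' i hl hi =>
    refine ⟨fun _ => z', fun c r hc hr hf _ => ⟨0, Or.inr ⟨⟨i, ?_⟩, ?_⟩⟩⟩
    · rw [hf 0, hr]; exact hi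
    · intro m hm j
      obtain rfl : m = 0 := by omega
      rw [hf 0, hr, hc]; exact hl j
  | @step z s z' hl hw ih =>
    choose! mvs hmvs using ih
    refine ⟨fun h => match h with
      | _ :: (x :: t) => mvs x.2 (x :: t)
      | _ => z', fun c r hc hr hf hrl => ?_⟩
    have h1 : c 1 = z' := by
      have := hf 0
      simpa [histUpTo] using this
    have hr1 : r 1 = s ∨ G.Adj s (r 1) := by have := hrl 0; rwa [hr] at this
    have key := hmvs (r 1) hr1 (fun i => c (i+1)) (fun i => r (i+1)) h1 rfl ?_ (fun n => hrl (n+1))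
    · obtain ⟨n, hn⟩ := key
      refine ⟨n+1, ?_⟩
      have base : ∀ i, L (c 0 i) (r 0) (c 1 i) := by rw [hc, hr, h1]; exact hl
      rcases hn with ⟨hn, hm⟩ | ⟨hn, hm⟩
      · refine Or.inl ⟨hn, fun m hmn => ?_⟩
        cases m with
        | zero => exact base
        | succ m => exact hm m (by omega)
      · refine Or.inr ⟨hn, fun m hmn => ?_⟩
        cases m with
        | zero => exact base
        | succ m => exact hm m (by omega)
    · intro n
      have := hf (n+1)
      rw [histUpTo_succ, histUpTo_succ] at this
      rw [histUpTo_succ]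
      exact this

/-- If the evader has an invariant, no strategy catches it. -/
theorem evade {V : Type*} {G : SimpleGraph V} {L : V → V → V → Prop} {J : ℕ}
    (Inv : (Fin J → V) → V → Prop)
    (h : ∀ z s, Inv z s → (∀ i, z i ≠ s) ∧ ∀ z', (∀ i, L (z i) s (z' i)) →
      (∀ i, z' i ≠ s) ∧ ∃ s', (s' = s ∨ G.Adj s s') ∧ Inv z' s')
    {z : Fin J → V} {s : V} (h0 : Inv z s) (mv : GameHist V J → Fin J → V) :
    ¬ CatchFrom G L z s mv := by
  classical
  intro hcatch
  have hresp : ∃ f : (Fin J → V) → V → (Fin J → V) → V,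
      ∀ z s z', (f z s z' = s ∨ G.Adj s (f z s z')) ∧
        (Inv z s → (∀ i, L (z i) s (z' i)) → Inv z' (f z s z')) := by
    have : ∀ z s z', ∃ s', (s' = s ∨ G.Adj s s') ∧
        (Inv z s → (∀ i, L (z i) s (z' i)) → Inv z' s') := by
      intro z s z'
      by_cases hh : Inv z s ∧ ∀ i, L (z i) s (z' i)
      · obtain ⟨s', h1, h2⟩ := ((h z s hh.1).2 z' hh.2).2
        exact ⟨s', h1, fun _ _ => h2⟩
      · exact ⟨s, Or.inl rfl, fun a b => absurd ⟨a, b⟩ hh⟩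
    choose f hf using this
    exact ⟨f, hf⟩
  obtain ⟨f, hf⟩ := hresp
  let nx : GameHist V J × (Fin J → V) × V → GameHist V J × (Fin J → V) × V := fun q =>
    (q.1 ++ [q.2], mv (q.1 ++ [q.2]), f q.2.1 q.2.2 (mv (q.1 ++ [q.2])))
  let st : ℕ → GameHist V J × (Fin J → V) × V := fun n => nx^[n] ([], z, s)
  have st_succ : ∀ n, st (n+1) = nx (st n) := fun n => Function.iterate_succ_apply' nx n _
  let c : ℕ → Fin J → V := fun n => (st n).2.1
  let r : ℕ → V := fun n => (st n).2.2
  have hh : ∀ n, (st n).1 = histUpTo c r n := by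
    intro n
    induction n with
    | zero => rfl
    | succ n ih => rw [histUpTo_succ', ← ih, st_succ]
  have hfol : FollowsStrat mv c r := by
    intro n
    rw [histUpTo_succ', ← hh]
    change (st (n+1)).2.1 = _
    rw [st_succ]
  have hr1 : ∀ n, r (n+1) = f (c n) (r n) (c (n+1)) := by
    intro n
    change (st (n+1)).2.2 = f (st n).2.1 (st n).2.2 (st (n+1)).2.1
    rw [st_succ]
  have hleg : RobberLegal G r := by
    intro n; rw [hr1]; exact (hf _ _ _).1
  have hinv : ∀ n, (∀ m < n, ∀ i, L (c m i) (r m) (c (m+1) i)) → Inv (c n) (r n) := by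
    intro n
    induction n with
    | zero => intro _; exact h0
    | succ n ih =>
      intro hm
      rw [hr1]
      exact (hf _ _ _).2 (ih fun m hmn => hm m (by omega)) (hm n (by omega))
  obtain ⟨n, ⟨⟨i, hi⟩, hm⟩ | ⟨⟨i, hi⟩, hm⟩⟩ := hcatch c r rfl rfl hfol hleg
  · exact (h _ _ (hinv n hm)).1 i hi
  · exact ((h _ _ (hinv n fun m hmn => hm m hmn.le)).2 _ (hm n le_rfl)).1 i hi

theorem copsWin_of_PWin {V : Type*} {G : SimpleGraph V} {J : ℕ} (z : Fin J → V)
    (h : ∀ s, PWin G (CLeg G) z s) : CopsWinWith G J := by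
  choose mvs hmvs using fun s => (h s).strat
  refine ⟨z, fun h => match h with
      | x :: t => mvs x.2 (x :: t)
      | [] => z, fun c r hc hf hr => ?_⟩
  refine hmvs (r 0) c r hc rfl ?_ hr
  intro n
  have := hf n
  rw [histUpTo_succ] at this ⊢
  exact this

theorem zombiesWin_of_PWin {V : Type*} {G : SimpleGraph V} {J : ℕ} (z : Fin J → V)
    (h : ∀ s, PWin G (ZLeg G) z s) : ZombiesWinWith G J :=
  ⟨z, fun s => (h s).strat⟩

theorem not_copsWin_of_inv {V : Type*} {G : SimpleGraph V} {J : ℕ}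
    (Inv : (Fin J → V) → V → Prop)
    (h : ∀ z s, Inv z s → (∀ i, z i ≠ s) ∧ ∀ z', (∀ i, CLeg G (z i) s (z' i)) →
      (∀ i, z' i ≠ s) ∧ ∃ s', (s' = s ∨ G.Adj s s') ∧ Inv z' s')
    (h0 : ∀ z, ∃ s, Inv z s) : ¬ CopsWinWith G J := by
  rintro ⟨z, mv, hmv⟩
  obtain ⟨s, hs⟩ := h0 z
  exact evade (L := CLeg G) Inv h hs mv (fun c r hc _ hf hr => hmv c r hc hf hr)

theorem not_zombiesWin_of_inv {V : Type*} {G : SimpleGraph V} {J : ℕ}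
    (Inv : (Fin J → V) → V → Prop)
    (h : ∀ z s, Inv z s → (∀ i, z i ≠ s) ∧ ∀ z', (∀ i, ZLeg G (z i) s (z' i)) →
      (∀ i, z' i ≠ s) ∧ ∃ s', (s' = s ∨ G.Adj s s') ∧ Inv z' s')
    (h0 : ∀ z, ∃ s, Inv z s) : ¬ ZombiesWinWith G J := by
  rintro ⟨z, hz⟩
  obtain ⟨s, hs⟩ := h0 z
  obtain ⟨mv, hmv⟩ := hz s
  exact evade (L := ZLeg G) Inv h hs mv hmv

/-! ### Distances and cut vertices -/

theorem exists_closer {V : Type*} {G : SimpleGraph V} (hG : G.Connected) {z s : V} (h : z ≠ s) :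
    ∃ u, ZLeg G z s u := by
  obtain ⟨w, hw⟩ := hG.exists_walk_length_eq_dist z s
  cases w with
  | nil => exact absurd rfl h
  | @cons _ u _ hadj p =>
    refine ⟨u, hadj, ?_⟩
    have := SimpleGraph.dist_le p
    rw [SimpleGraph.Walk.length_cons] at hw
    omega

theorem dist_lower {V : Type*} {G : SimpleGraph V} (hG : G.Connected) (f : V → ℕ) (s : V)
    (hs : f s = 0) (hf : ∀ u v, G.Adj u v → f u ≤ f v + 1) (u : V) : f u ≤ G.dist u s := by
  obtain ⟨w, hw⟩ := hG.exists_walk_length_eq_dist u s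
  rw [← hw]
  clear hw
  induction w with
  | nil => simp [hs]
  | cons hadj p ih =>
    have := hf _ _ hadj
    have := ih hs
    rw [SimpleGraph.Walk.length_cons]; omega

theorem adj_dist_le {V : Type*} {G : SimpleGraph V} (hG : G.Connected) {u v : V} (h : G.Adj u v)
    (s : V) : G.dist u s ≤ G.dist v s + 1 := by
  have := hG.dist_triangle (u := u) (v := v) (w := s)
  rw [SimpleGraph.dist_eq_one_iff_adj.2 h] at this
  omega

theorem one_lt_dist {V : Type*} {G : SimpleGraph V} (hG : G.Connected) {u v : V} (h1 : u ≠ v)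
    (h2 : ¬ G.Adj u v) : 1 < G.dist u v := by
  have := hG.pos_dist_of_ne h1
  have h3 : G.dist u v ≠ 1 := fun h => h2 (SimpleGraph.dist_eq_one_iff_adj.1 h)
  omega

theorem dist_le_one {V : Type*} {G : SimpleGraph V} (hG : G.Connected) {u v : V}
    (h : G.dist u v ≤ 1) : u = v ∨ G.Adj u v := by
  by_contra hh
  push Not at hh
  have := one_lt_dist hG hh.1 hh.2
  omega

theorem dist_le_two {V : Type*} {G : SimpleGraph V} (hG : G.Connected) {u v w : V}
    (h1 : G.Adj u v) (h2 : G.Adj v w) : G.dist u w ≤ 2 := by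
  have := adj_dist_le hG h1 w
  rw [SimpleGraph.dist_eq_one_iff_adj.2 h2] at this
  omega

theorem zleg_of_adj {V : Type*} {G : SimpleGraph V} (hG : G.Connected) {z s u : V}
    (h1 : G.Adj z u) (h2 : u = s ∨ G.Adj u s) (h3 : z ≠ s) (h4 : ¬ G.Adj z s) : ZLeg G z s u := by
  refine ⟨h1, ?_⟩
  have := one_lt_dist hG h3 h4
  rcases h2 with rfl | h2
  · simp; omega
  · rw [SimpleGraph.dist_eq_one_iff_adj.2 h2]; omega

/-- `c` is a vertex of `S` through which every path leaving `S` passes. -/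
structure IsCut {V : Type*} (G : SimpleGraph V) (S : V → Prop) (c : V) : Prop where
  mem : S c
  cut : ∀ u v, S u → ¬ S v → G.Adj u v → u = c

theorem IsCut.dist {V : Type*} {G : SimpleGraph V} (hG : G.Connected) {S : V → Prop} {c : V}
    (hc : IsCut G S c) {u s : V} (hu : S u) (hs : ¬ S s) :
    G.dist u s = G.dist u c + G.dist c s := by
  classical
  apply le_antisymm hG.dist_triangle
  have := dist_lower hG (fun v => if S v then G.dist v c + G.dist c s else G.dist v s) s
    (by simp [hs]) ?_ u
  · simpa [hu] using this
  · intro a b hab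
    have h1 := adj_dist_le hG hab c
    have h2 := adj_dist_le hG hab s
    by_cases ha : S a <;> by_cases hb : S b <;> simp only [ha, hb, if_true, if_false]
    · omega
    · obtain rfl := hc.cut a b ha hb hab
      simpa using h2
    · obtain rfl := hc.cut b a hb ha hab.symm
      simpa using h2
    · omega

theorem IsCut.move {V : Type*} {G : SimpleGraph V} (hG : G.Connected) {S : V → Prop} {c : V}
    (hc : IsCut G S c) {u u' s : V} (hu : S u) (hs : ¬ S s) (hm : ZLeg G u s u') :
    (u ≠ c → S u' ∧ G.dist u' c + 1 = G.dist u c) ∧ (u = c → ¬ S u') := by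
  have h1 := hc.dist hG hu hs
  constructor
  · intro huc
    have hu' : S u' := by
      by_contra h; exact huc (hc.cut _ _ hu h hm.1)
    have h2 := hc.dist hG hu' hs
    have h3 := hm.2
    have h4 := adj_dist_le hG hm.1 c
    exact ⟨hu', by omega⟩
  · rintro rfl hu'
    have h2 := hc.dist hG hu' hs
    have h3 := hm.2
    omega

/-! ### Tools for winning positions -/

theorem PWin.of_moves {V : Type*} {G : SimpleGraph V} {L : V → V → V → Prop} {J : ℕ}
    {z : Fin J → V} {s : V} (P : Fin J → V → Prop)
    (h : ∀ i, ∃ u, L (z i) s u ∧ P i u)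
    (hw : ∀ z' : Fin J → V, (∀ i, L (z i) s (z' i)) → (∀ i, P i (z' i)) →
      ∀ s', (s' = s ∨ G.Adj s s') → PWin G L z' s') : PWin G L z s := by
  choose z' h1 h2 using h
  exact .step z' h1 (hw z' h1 h2)

theorem PWin.cop_of_zombie {V : Type*} {G : SimpleGraph V} {J : ℕ}
    {z : Fin J → V} {s : V} (h : PWin G (ZLeg G) z s) : PWin G (CLeg G) z s := by
  induction h with
  | cap i hi => exact .cap i hi
  | capm z' i hl hi => exact .capm z' i (fun j => Or.inr (hl j).1) hi
  | step z' hl _ ih => exact .step z' (fun j => Or.inr (hl j).1) ih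

theorem PWin.zadj {V : Type*} {G : SimpleGraph V} (hG : G.Connected) {J : ℕ}
    {z : Fin J → V} {s : V} (i : Fin J) (h : z i = s ∨ G.Adj (z i) s) :
    PWin G (ZLeg G) z s := by
  classical
  by_cases hc : ∃ j, z j = s
  · obtain ⟨j, hj⟩ := hc; exact .cap j hj
  push Not at hc
  have hi := h.resolve_left (hc i)
  have : ∀ j, ∃ u, ZLeg G (z j) s u ∧ (j = i → u = s) := by
    intro j
    by_cases hj : j = i
    · subst hj
      refine ⟨s, ⟨hi, ?_⟩, fun _ => rfl⟩
      simp [SimpleGraph.dist_eq_one_iff_adj.2 hi]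
    · obtain ⟨u, hu⟩ := exists_closer hG (hc j)
      exact ⟨u, hu, fun h => absurd h hj⟩
  choose z' h1 h2 using this
  exact .capm z' i h1 (h2 i rfl)

theorem PWin.cadj {V : Type*} {G : SimpleGraph V} {J : ℕ}
    {z : Fin J → V} {s : V} (i : Fin J) (h : z i = s ∨ G.Adj (z i) s) :
    PWin G (CLeg G) z s := by
  classical
  refine .capm (Function.update z i s) i (fun j => ?_) (by simp)
  by_cases hj : j = i
  · subst hj
    rcases h with h | h
    · left; simp [h]
    · right; simpa using h
  · left; simp [hj]

/-- A single cop `i` moves, all others stay. -/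
theorem PWin.cmove {V : Type*} {G : SimpleGraph V} {J : ℕ}
    {z : Fin J → V} {s : V} (i : Fin J) (u : V) (h : G.Adj (z i) u)
    (hw : ∀ z' : Fin J → V, z' i = u → ∀ s', (s' = s ∨ G.Adj s s') → PWin G (CLeg G) z' s') :
    PWin G (CLeg G) z s := by
  classical
  refine .step (Function.update z i u) (fun j => ?_) (hw _ (by simp))
  by_cases hj : j = i
  · subst hj; right; simpa using h
  · left; simp [hj]

/-- Zombies move; those with a wish get it granted. -/
theorem PWin.zmove {V : Type*} {G : SimpleGraph V} (hG : G.Connected) {J : ℕ}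
    {z : Fin J → V} {s : V} (P : Fin J → V → Prop)
    (h : ∀ i, z i ≠ s → (∃ u, ZLeg G (z i) s u ∧ P i u) ∨ ∀ u, P i u)
    (hw : ∀ z' : Fin J → V, (∀ i, ZLeg G (z i) s (z' i)) → (∀ i, P i (z' i)) →
      ∀ s', (s' = s ∨ G.Adj s s') → PWin G (ZLeg G) z' s') : PWin G (ZLeg G) z s := by
  by_cases hc : ∃ j, z j = s
  · obtain ⟨j, hj⟩ := hc; exact .cap j hj
  push Not at hc
  refine .of_moves P (fun i => ?_) hw
  rcases h i (hc i) with h | h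
  · exact h
  · obtain ⟨u, hu⟩ := exists_closer hG (hc i)
    exact ⟨u, hu, h u⟩

/-! ### Properties of the base graph -/

/-- The properties of the base graph `H` that are used. -/
structure HProps {W : Type*} (H : SimpleGraph W) (k : ℕ) : Prop where
  ne : Nonempty W
  diam : ∀ u w, u = w ∨ H.Adj u w ∨ ∃ x, H.Adj u x ∧ H.Adj x w
  cover : ∀ v w, v ≠ w → ¬ H.Adj v w → ∃ f : Fin k → W, (∀ i, H.Adj v (f i) ∧ H.Adj (f i) w) ∧
    ∀ w', (w' = w ∨ H.Adj w w') → ∃ i, f i = w' ∨ H.Adj (f i) w'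
  esc : ∀ (S : Finset W) (b : W), S.card < k → ∃ b', (b' = b ∨ H.Adj b b') ∧ (b ∈ S → b' ≠ b) ∧
    ∀ u ∈ S, u ≠ b → u ≠ b' ∧ ¬ H.Adj u b'
  esc0 : ∀ (S : Finset W), S.card < k → ∃ b, ∀ u ∈ S, u ≠ b ∧ ¬ H.Adj u b

theorem HProps.single {W : Type*} (H : SimpleGraph W) (h : Nat.card W = 1) : HProps H 1 := by
  obtain ⟨h1, h2⟩ := Nat.card_eq_one_iff_unique.1 h
  refine ⟨h2, fun u w => Or.inl (Subsingleton.elim _ _),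
    fun v w h => absurd (Subsingleton.elim v w) h, ?_, ?_⟩
  · intro S b hS
    have : S = ∅ := by rw [← Finset.card_eq_zero]; omega
    subst this
    exact ⟨b, by simp⟩
  · intro S hS
    have : S = ∅ := by rw [← Finset.card_eq_zero]; omega
    subst this
    exact ⟨Classical.arbitrary W, by simp⟩

theorem HProps.design {W P : Type*} [Fintype P] [DecidableEq P] (H : SimpleGraph W) (k : ℕ)
    (hk : 2 ≤ k) (blk : W → Finset P)
    (hadj : ∀ u w, H.Adj u w ↔ u ≠ w ∧ ∃ p, p ∈ blk u ∧ p ∈ blk w)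
    (hcard : ∀ u, (blk u).card = k)
    (hline : ∀ p q : P, p ≠ q → ∃ u, p ∈ blk u ∧ q ∈ blk u)
    (huniq : ∀ (p q : P) (u w : W), p ≠ q → p ∈ blk u → q ∈ blk u → p ∈ blk w → q ∈ blk w → u = w)
    (hv : k * (k - 1) ^ 2 + 1 < Fintype.card P) : HProps H k := by
  classical
  have hP : 1 < Fintype.card P := by omega
  obtain ⟨p0, q0, hpq0⟩ := Fintype.one_lt_card_iff.1 hP
  have hW : Nonempty W := ⟨(hline p0 q0 hpq0).choose⟩
  choose! L hL1 hL2 using hline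
  have hcover : ∀ v w, v ≠ w → ¬ H.Adj v w → ∃ f : Fin k → W,
      (∀ i, H.Adj v (f i) ∧ H.Adj (f i) w) ∧
      ∀ w', (w' = w ∨ H.Adj w w') → ∃ i, f i = w' ∨ H.Adj (f i) w' := by
    intro v w hvw hna
    rw [hadj] at hna
    push Not at hna
    have hdis := hna hvw
    obtain ⟨q, hq⟩ : (blk v).Nonempty := by rw [← Finset.card_pos, hcard]; omega
    let e := (blk w).equivFinOfCardEq (hcard w)
    have hne : ∀ i, q ≠ (e.symm i).1 := by
      intro i h
      exact hdis q hq (h ▸ (e.symm i).2)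
    refine ⟨fun i => L q (e.symm i).1, fun i => ⟨?_, ?_⟩, ?_⟩
    · rw [hadj]
      refine ⟨?_, q, hq, hL1 _ _ (hne i)⟩
      intro h
      have := hL2 _ _ (hne i)
      have h' : v = L q (e.symm i).1 := h
      rw [← h'] at this
      exact hdis _ this (e.symm i).2
    · rw [hadj]
      refine ⟨?_, _, hL2 _ _ (hne i), (e.symm i).2⟩
      intro h
      have := hL1 _ _ (hne i)
      have h' : L q (e.symm i).1 = w := h
      rw [h'] at this
      exact hdis _ hq this
    · intro w' hw'
      have : ∃ p, p ∈ blk w ∧ p ∈ blk w' := by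
        rcases hw' with rfl | h
        · obtain ⟨p, hp⟩ : (blk w').Nonempty := by rw [← Finset.card_pos, hcard]; omega
          exact ⟨p, hp, hp⟩
        · exact ((hadj _ _).1 h).2
      obtain ⟨p, hp, hp'⟩ := this
      refine ⟨e ⟨p, hp⟩, ?_⟩
      have hqp : q ≠ p := by have := hne (e ⟨p, hp⟩); simpa using this
      simp only [Equiv.symm_apply_apply]
      by_cases h : L q p = w'
      · exact Or.inl h
      · right
        rw [hadj]
        exact ⟨h, p, hL2 _ _ hqp, hp'⟩
  have hesc : ∀ (S : Finset W) (b : W), S.card < k → ∃ b', (b' = b ∨ H.Adj b b') ∧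
      (b ∈ S → b' ≠ b) ∧ ∀ u ∈ S, u ≠ b → u ≠ b' ∧ ¬ H.Adj u b' := by
    intro S b hS
    -- a point of `b` on no other block of `S`
    obtain ⟨p, hpb, hpS⟩ : ∃ p ∈ blk b, ∀ u ∈ S, u ≠ b → p ∉ blk u := by
      by_contra hcon
      push Not at hcon
      have hsub : blk b ⊆ (S.erase b).biUnion fun u => blk u ∩ blk b := by
        intro p hp
        obtain ⟨u, hu, hub, hpu⟩ := hcon p hp
        simp only [Finset.mem_biUnion, Finset.mem_erase, Finset.mem_inter]
        exact ⟨u, ⟨hub, hu⟩, hpu, hp⟩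
      have h1 := Finset.card_le_card hsub
      have h2 : ((S.erase b).biUnion fun u => blk u ∩ blk b).card ≤ (S.erase b).card * 1 := by
        apply Finset.card_biUnion_le_card_mul
        intro u hu
        rw [Finset.card_le_one]
        intro x hx y hy
        by_contra hxy
        simp only [Finset.mem_inter] at hx hy
        exact (Finset.ne_of_mem_erase hu) (huniq x y u b hxy hx.1 hy.1 hx.2 hy.2)
      have h3 := Finset.card_erase_le (s := S) (a := b)
      rw [hcard] at h1
      omega
    let bad : W → Finset P := fun u =>
      if u = b then (blk b).erase p else (blk u).biUnion fun q => (blk (L p q)).erase p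
    have hbad : ∀ u ∈ S, (bad u).card ≤ k * (k - 1) := by
      intro u hu
      by_cases hub : u = b
      · simp only [bad, hub, if_true]
        rw [Finset.card_erase_of_mem hpb, hcard]
        exact Nat.le_mul_of_pos_left _ (by omega)
      · simp only [bad, hub, if_false]
        rw [← hcard u]
        apply Finset.card_biUnion_le_card_mul
        intro q hq
        have hpq : p ≠ q := by rintro rfl; exact hpS u hu hub hq
        rw [Finset.card_erase_of_mem (hL1 _ _ hpq), hcard, hcard]
    have htot : (insert p (S.biUnion bad)).card < Fintype.card P := by
      have h1 := Finset.card_insert_le p (S.biUnion bad)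
      have h2 := Finset.card_biUnion_le_card_mul S bad _ hbad
      have h3 : S.card * (k * (k-1)) ≤ (k-1) * (k * (k-1)) :=
        Nat.mul_le_mul_right _ (by omega)
      have h4 : (k-1) * (k * (k-1)) = k * (k-1)^2 := by ring
      omega
    obtain ⟨q, hq⟩ : ∃ q, q ∉ insert p (S.biUnion bad) := by
      by_contra hcon
      push Not at hcon
      have := Finset.eq_univ_iff_forall.2 hcon
      rw [this, Finset.card_univ] at htot
      omega
    simp only [Finset.mem_insert, Finset.mem_biUnion, not_or, not_exists, not_and] at hq
    obtain ⟨hqp, hq⟩ := hq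
    have hpq : p ≠ q := fun h => hqp h.symm
    refine ⟨L p q, ?_, ?_, ?_⟩
    · by_cases h : L p q = b
      · exact Or.inl h
      · right; rw [hadj]; exact ⟨fun h' => h h'.symm, p, hpb, hL1 _ _ hpq⟩
    · intro hbS h
      have := hq b hbS
      simp only [bad, if_true, Finset.mem_erase, not_and] at this
      exact this hqp (h ▸ hL2 _ _ hpq)
    · intro u hu hub
      have hpu := hpS u hu hub
      refine ⟨fun h => hpu (h ▸ hL1 _ _ hpq), ?_⟩
      rw [hadj]
      rintro ⟨-, r, hr1, hr2⟩
      have hpr : p ≠ r := by rintro rfl; exact hpu hr1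
      have hEq : L p r = L p q :=
        huniq p r _ _ hpr (hL1 _ _ hpr) (hL2 _ _ hpr) (hL1 _ _ hpq) hr2
      apply hq u hu
      simp only [bad, hub, if_false, Finset.mem_biUnion, Finset.mem_erase]
      exact ⟨r, hr1, hqp, hEq ▸ hL2 _ _ hpq⟩
  refine ⟨hW, ?_, hcover, hesc, ?_⟩
  · intro u w
    by_cases h1 : u = w
    · exact Or.inl h1
    by_cases h2 : H.Adj u w
    · exact Or.inr (Or.inl h2)
    obtain ⟨f, hf, -⟩ := hcover u w h1 h2
    exact Or.inr (Or.inr ⟨f ⟨0, by omega⟩, hf _⟩)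
  · intro S hS
    obtain ⟨p, hp⟩ : ∃ p, p ∉ S.biUnion blk := by
      by_contra hcon
      push Not at hcon
      have h0 := Finset.eq_univ_iff_forall.2 hcon
      have h1 := Finset.card_biUnion_le_card_mul S blk k (fun u _ => (hcard u).le)
      rw [h0, Finset.card_univ] at h1
      have h2 : S.card * k ≤ (k-1) * k := Nat.mul_le_mul_right _ (by omega)
      have h3 : (k-1) * k ≤ k * (k-1)^2 := by
        rw [mul_comm, pow_two]
        exact Nat.mul_le_mul_left _ (Nat.le_mul_of_pos_left _ (by omega))
      omega
    simp only [Finset.mem_biUnion, not_exists, not_and] at hp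
    obtain ⟨q, hqp⟩ := Fintype.exists_ne_of_one_lt_card hP p
    have hbS : L p q ∉ S := fun h => hp _ h (hL1 _ _ hqp.symm)
    obtain ⟨b', -, -, hb'⟩ := hesc S (L p q) hS
    exact ⟨b', fun u hu => hb' u hu (fun h => hbS (h ▸ hu))⟩

theorem HProps.of_hyp {W : Type*} (H : SimpleGraph W) (k : ℕ)
    (hH : (k = 1 ∧ Nat.card W = 1 ∧ H = ⊥) ∨
      (2 ≤ k ∧ ∃ (P : Type) (B : Finset (Finset P)) (v : ℕ), Finite P ∧
        IsBIBD P B v k ∧ k * (k - 1) ^ 2 + 1 < v ∧ Nonempty (H ≃g blockGraph B))) :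
    HProps H k := by
  classical
  rcases hH with ⟨rfl, h, -⟩ | ⟨hk, P, B, v, hfin, ⟨hv, hc, hl⟩, hlt, ⟨e⟩⟩
  · exact HProps.single H h
  · have := Fintype.ofFinite P
    refine HProps.design H k hk (fun w => (e w).1) ?_ (fun u => hc _ (e u).2) ?_ ?_ ?_
    · intro u w
      rw [← e.map_adj_iff]
      change (SimpleGraph.fromRel _).Adj _ _ ↔ _
      rw [SimpleGraph.fromRel_adj]
      constructor
      · rintro ⟨h1, ⟨p, h2, h3⟩ | ⟨p, h2, h3⟩⟩
        · exact ⟨fun h => h1 (h ▸ rfl), p, h2, h3⟩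
        · exact ⟨fun h => h1 (h ▸ rfl), p, h3, h2⟩
      · rintro ⟨h1, p, h2, h3⟩
        exact ⟨fun h => h1 (e.injective h), Or.inl ⟨p, h2, h3⟩⟩
    · intro p q hpq
      obtain ⟨b, ⟨hb, h1, h2⟩, -⟩ := hl p q hpq
      refine ⟨e.symm ⟨b, hb⟩, ?_⟩
      simp only [RelIso.apply_symm_apply]
      exact ⟨h1, h2⟩
    · intro p q u w hpq h1 h2 h3 h4
      have := (hl p q hpq).unique ⟨(e u).2, h1, h2⟩ ⟨(e w).2, h3, h4⟩
      exact e.injective (Subtype.ext this)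
    · rw [← Nat.card_eq_fintype_card, hv]; exact hlt

/-! ### The structure of the graph -/

instance : DecidableRel fin5adj := fun i j => by unfold fin5adj; infer_instance

/-- Equal or cyclically consecutive. -/
def near (i j : Fin 5) : Prop := i = j ∨ fin5adj i j

instance : DecidableRel near := fun i j => by unfold near; infer_instance

theorem fin5adj_symm : ∀ i j, fin5adj i j → fin5adj j i := by decide

theorem near_symm : ∀ i j, near i j → near j i := by decide

theorem fin5adj_irrefl : ∀ i, ¬ fin5adj i i := by decide

theorem b0_lt {n x : ℕ} (h : x < n) : b0 n x = ArmVert.outer ⟨x, h⟩ 0 := by simp [b0, h]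

theorem b0_top (n : ℕ) : b0 n n = ArmVert.finish := by simp [b0]

theorem b2prev_zero (n : ℕ) : b2prev n 0 = ArmVert.start := by simp [b2prev]

theorem b2prev_succ {n x : ℕ} (h : x < n) : b2prev n (x+1) = ArmVert.outer ⟨x, h⟩ 2 := by
  simp [b2prev, h]

theorem arm_in_in {n : ℕ} {x : Fin n} {i j : Fin 5} (h : fin5adj i j) :
    (armGraph n).Adj (.inner x i) (.inner x j) := by
  refine ⟨fun he => ?_, Or.inl ⟨rfl, h⟩⟩
  cases he; exact fin5adj_irrefl _ h

theorem arm_in_out {n : ℕ} {x : Fin n} {i j : Fin 5} (h : near i j) :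
    (armGraph n).Adj (.inner x i) (.outer x j) :=
  ⟨fun he => (nomatch he), Or.inl ⟨rfl, h⟩⟩

theorem arm_out_out {n : ℕ} {x : Fin n} {i j : Fin 5} (h : fin5adj i j) :
    (armGraph n).Adj (.outer x i) (.outer x j) := by
  refine ⟨fun he => ?_, Or.inl (Or.inl ⟨rfl, h⟩)⟩
  cases he; exact fin5adj_irrefl _ h

theorem arm_in_center {n : ℕ} {x : Fin n} {i : Fin 5} :
    (armGraph n).Adj (.inner x i) (.center x) :=
  ⟨fun he => (nomatch he), Or.inl rfl⟩

theorem arm_pq {n x : ℕ} (h : x ≤ n) : (armGraph n).Adj (b2prev n x) (b0 n x) := by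
  rcases x with _ | x
  · rw [b2prev_zero]
    rcases Nat.eq_zero_or_pos n with rfl | hn
    · rw [b0_top]; exact ⟨fun he => (nomatch he), Or.inl rfl⟩
    · rw [b0_lt hn]; exact ⟨fun he => (nomatch he), Or.inl ⟨rfl, rfl⟩⟩
  · rw [b2prev_succ (by omega)]
    rcases Nat.lt_or_ge (x+1) n with hn | hn
    · rw [b0_lt hn]
      refine ⟨fun he => ?_, Or.inl (Or.inr ⟨rfl, rfl, rfl⟩)⟩
      injection he with h1 h2
      exact absurd h2 (by decide)
    · obtain rfl : n = x+1 := by omega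
      rw [b0_top]; exact ⟨fun he => (nomatch he), Or.inl ⟨rfl, rfl⟩⟩

theorem arm_nbr_inner {n : ℕ} {x : Fin n} {i : Fin 5} {t : ArmVert n}
    (h : (armGraph n).Adj (.inner x i) t) :
    (∃ j, near i j ∧ t = .inner x j) ∨ (∃ j, near i j ∧ t = .outer x j) ∨ t = .center x := by
  obtain ⟨hne, h⟩ := h
  cases t with
  | start => rcases h with h | h <;> exact h.elim
  | finish => rcases h with h | h <;> exact h.elim
  | inner y j =>
    rcases h with ⟨rfl, h⟩ | ⟨rfl, h⟩
    · exact Or.inl ⟨j, Or.inr h, rfl⟩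
    · exact Or.inl ⟨j, Or.inr (fin5adj_symm _ _ h), rfl⟩
  | outer y j =>
    rcases h with ⟨rfl, h⟩ | h
    · exact Or.inr (Or.inl ⟨j, h, rfl⟩)
    · exact h.elim
  | center y =>
    rcases h with h | h
    · have h : x = y := h
      subst h; exact Or.inr (Or.inr rfl)
    · exact h.elim

theorem arm_nbr_outer {n : ℕ} {x : Fin n} {i : Fin 5} {t : ArmVert n}
    (h : (armGraph n).Adj (.outer x i) t) :
    (∃ j, near i j ∧ t = .inner x j) ∨ (∃ j, fin5adj i j ∧ t = .outer x j) ∨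
      (i = 0 ∧ t = b2prev n x) ∨ (i = 2 ∧ t = b0 n (x+1)) := by
  obtain ⟨hne, h⟩ := h
  cases t with
  | start =>
    rcases h with h | ⟨h, h'⟩
    · exact h.elim
    · right; right; left
      refine ⟨Fin.ext h', ?_⟩
      rw [h, b2prev_zero]
  | finish =>
    rcases h with ⟨h, h'⟩ | h
    · right; right; right
      refine ⟨Fin.ext h', ?_⟩
      rw [h, b0_top]
    · exact h.elim
  | inner y j =>
    rcases h with h | ⟨rfl, h⟩
    · exact h.elim
    · exact Or.inl ⟨j, near_symm _ _ h, rfl⟩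
  | outer y j =>
    rcases h with (⟨rfl, h⟩ | ⟨h1, h2, h3⟩) | (⟨rfl, h⟩ | ⟨h1, h2, h3⟩)
    · exact Or.inr (Or.inl ⟨j, h, rfl⟩)
    · right; right; right
      refine ⟨Fin.ext h2, ?_⟩
      rw [h1, b0_lt y.2]
      congr 1
      exact Fin.ext h3
    · exact Or.inr (Or.inl ⟨j, fin5adj_symm _ _ h, rfl⟩)
    · right; right; left
      refine ⟨Fin.ext h3, ?_⟩
      rw [← h1, b2prev_succ y.2]
      congr 1
      exact Fin.ext h2
  | center y => rcases h with h | h <;> exact h.elim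

theorem arm_nbr_center {n : ℕ} {x : Fin n} {t : ArmVert n}
    (h : (armGraph n).Adj (.center x) t) : ∃ j, t = .inner x j := by
  obtain ⟨hne, h⟩ := h
  cases t with
  | inner y j =>
    rcases h with h | h
    · exact h.elim
    · have h : y = x := h
      subst h; exact ⟨j, rfl⟩
  | _ => rcases h with h | h <;> exact h.elim

theorem arm_nbr_start {n : ℕ} {t : ArmVert n}
    (h : (armGraph n).Adj .start t) : t = b0 n 0 := by
  obtain ⟨hne, h⟩ := h
  cases t with
  | outer y j =>
    rcases h with ⟨h1, h2⟩ | h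
    · rw [b0_lt (x := 0) (by omega)]
      congr 1
      · exact Fin.ext h1
      · exact Fin.ext h2
    · exact h.elim
  | finish =>
    rcases h with h | h
    · have h : n = 0 := h
      subst h; rw [b0_top]
    · exact h.elim
  | _ => rcases h with h | h <;> exact h.elim

theorem arm_nbr_finish {n : ℕ} {t : ArmVert n}
    (h : (armGraph n).Adj .finish t) : t = b2prev n n := by
  obtain ⟨hne, h⟩ := h
  cases t with
  | outer y j =>
    rcases h with h | ⟨h1, h2⟩
    · exact h.elim
    · obtain ⟨y, hy⟩ := y
      simp only at h1
      subst h1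
      rw [b2prev_succ hy]
      congr 1
      exact Fin.ext h2
  | start =>
    rcases h with h | h
    · exact h.elim
    · have h : n = 0 := h
      subst h; rw [b2prev_zero]
  | _ => rcases h with h | h <;> exact h.elim

/-- Vertices of the arm beyond the edge `b₂^{x-1} b₀^x`. -/
def Bey {n : ℕ} (x : ℕ) : ArmVert n → Prop
  | .start => False
  | .finish => True
  | .inner y _ => x ≤ y
  | .outer y _ => x ≤ y
  | .center y => x ≤ y

theorem bey_b0 {n x : ℕ} (h : x ≤ n) : Bey x (b0 n x) := by
  rcases h.lt_or_eq with h | rfl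
  · rw [b0_lt h]; exact le_rfl
  · rw [b0_top]; trivial

theorem not_bey_b2prev {n x : ℕ} (h : x ≤ n) : ¬ Bey x (b2prev n x) := by
  rcases x with _ | x
  · rw [b2prev_zero]; exact fun h => h
  · rw [b2prev_succ (by omega)]; exact fun h => absurd h (by simp [Bey])

theorem bey_zero {n : ℕ} {t : ArmVert n} (h : t ≠ .start) : Bey 0 t := by
  cases t <;> simp_all [Bey]

theorem bey_top {n : ℕ} {t : ArmVert n} (h : Bey n t) : t = b0 n n := by
  rw [b0_top]
  cases t with
  | start => exact h.elim
  | finish => rfl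
  | inner y j => exact absurd y.2 (by simp only [Bey] at h; omega)
  | outer y j => exact absurd y.2 (by simp only [Bey] at h; omega)
  | center y => exact absurd y.2 (by simp only [Bey] at h; omega)

theorem bey_mono {n x y : ℕ} (hxy : x ≤ y) {t : ArmVert n} (h : Bey y t) : Bey x t := by
  cases t <;> simp only [Bey] at * <;> omega

/-- The decomposition of the vertices beyond `x`. -/
theorem bey_cases {n x : ℕ} (hx : x < n) {t : ArmVert n} (h : Bey x t) :
    (∃ i, t = .inner ⟨x, hx⟩ i ∨ t = .outer ⟨x, hx⟩ i) ∨ t = .center ⟨x, hx⟩ ∨ Bey (x+1) t := by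
  cases t with
  | start => exact h.elim
  | finish => exact Or.inr (Or.inr trivial)
  | inner y j =>
    simp only [Bey] at h
    by_cases he : (y : ℕ) = x
    · left; exact ⟨j, Or.inl (by congr 1; exact Fin.ext he)⟩
    · right; right; simp only [Bey]; omega
  | outer y j =>
    simp only [Bey] at h
    by_cases he : (y : ℕ) = x
    · left; exact ⟨j, Or.inr (by congr 1; exact Fin.ext he)⟩
    · right; right; simp only [Bey]; omega
  | center y =>
    simp only [Bey] at h
    by_cases he : (y : ℕ) = x
    · right; left; congr 1; exact Fin.ext he
    · right; right; simp only [Bey]; omega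

theorem arm_cut {n x : ℕ} (hx : x ≤ n) {t t' : ArmVert n} (h : ¬ Bey x t) (h' : Bey x t')
    (ha : (armGraph n).Adj t t') : t = b2prev n x ∧ t' = b0 n x := by
  cases t with
  | start =>
    obtain rfl := arm_nbr_start ha
    rcases Nat.eq_zero_or_pos x with rfl | hpos
    · rw [b2prev_zero]; exact ⟨rfl, rfl⟩
    · rw [b0_lt (by omega)] at h'
      simp only [Bey] at h'; omega
  | finish => exact absurd trivial h
  | inner y j =>
    rcases arm_nbr_inner ha with ⟨j, -, rfl⟩ | ⟨j, -, rfl⟩ | rfl <;> exact absurd h' h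
  | center y =>
    obtain ⟨j, rfl⟩ := arm_nbr_center ha; exact absurd h' h
  | outer y j =>
    rcases arm_nbr_outer ha with ⟨j, -, rfl⟩ | ⟨j, -, rfl⟩ | ⟨rfl, rfl⟩ | ⟨rfl, rfl⟩
    · exact absurd h' h
    · exact absurd h' h
    · obtain ⟨y, hy⟩ := y
      rcases y with _ | y
      · rw [b2prev_zero] at h'; exact h'.elim
      · simp only at h'
        rw [b2prev_succ (by omega)] at h'
        simp only [Bey] at h h'; omega
    · simp only [Bey] at h
      obtain ⟨y, hy⟩ := y
      simp only at h h'
      have : y + 1 = x := by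
        rcases Nat.lt_or_ge (y+1) n with hn | hn
        · rw [b0_lt hn] at h'; simp only [Bey] at h'; omega
        · omega
      subst this
      rw [b2prev_succ hy]
      exact ⟨rfl, rfl⟩

theorem arm_reach (n : ℕ) (t : ArmVert n) : (armGraph n).Reachable .start t := by
  have hb0 : ∀ x, x ≤ n → (armGraph n).Reachable .start (b0 n x) := by
    intro x
    induction x with
    | zero =>
      intro h
      have := arm_pq h
      rw [b2prev_zero] at this
      exact this.reachable
    | succ x ih =>
      intro h
      have h1 := ih (by omega)
      have h2 := arm_pq h
      rw [b2prev_succ (by omega)] at h2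
      rw [b0_lt (by omega)] at h1
      refine (h1.trans (SimpleGraph.Adj.reachable ?_)).trans
        ((arm_out_out (i := 1) (j := 2) (by decide)).reachable.trans h2.reachable)
      exact arm_out_out (by decide)
  have hin : ∀ (x : Fin n) i, (armGraph n).Reachable .start (.inner x i) := by
    intro x i
    have h1 := hb0 x x.2.le
    rw [b0_lt x.2] at h1
    have h2 : (armGraph n).Adj (.outer x 0) (.inner x 0) := (arm_in_out (by decide)).symm
    exact ((h1.trans h2.reachable).trans arm_in_center.reachable).trans arm_in_center.symm.reachable
  cases t with
  | start => exact .refl _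
  | finish => have := hb0 n le_rfl; rwa [b0_top] at this
  | inner x i => exact hin x i
  | outer x i => exact (hin x i).trans (arm_in_out (Or.inl rfl)).reachable
  | center x => exact (hin x 0).trans arm_in_center.reachable

/-! ### The whole graph -/

/-- The graph `Z_{k,m}(H)` with independent arm length. -/
def ZG {W : Type*} (H : SimpleGraph W) (m n : ℕ) : SimpleGraph (ZVert W m n) :=
  SimpleGraph.fromRel (zRel H m n)

/-- Vertices of the base graph. -/
abbrev hv {W : Type*} {m n : ℕ} (w : W) : ZVert W m n := Sum.inl w
/-- Vertices of the paths. -/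
abbrev pv {W : Type*} {m n : ℕ} (w : W) (j : Fin n) : ZVert W m n := Sum.inr (Sum.inl (w, j))
/-- Vertices of the arms. -/
abbrev av {W : Type*} {m n : ℕ} (w : W) (a : Fin m) (t : ArmVert n) : ZVert W m n :=
  Sum.inr (Sum.inr (w, a, t))

section
variable {W : Type*} {H : SimpleGraph W} {m n : ℕ}

theorem zg_hh {u w : W} : (ZG H m n).Adj (hv u) (hv w) ↔ H.Adj u w := by
  constructor
  · rintro ⟨-, h | h⟩
    · exact h
    · exact SimpleGraph.Adj.symm h
  · intro h
    exact ⟨fun he => h.ne (Sum.inl_injective he), Or.inl h⟩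

theorem zg_hp {u w : W} {j : Fin n} : (ZG H m n).Adj (hv u) (pv w j) ↔ u = w ∧ (j : ℕ) = 0 := by
  constructor
  · rintro ⟨-, h | h⟩
    · exact h
    · exact h.elim
  · intro h
    exact ⟨fun he => (nomatch he), Or.inl h⟩

theorem zg_ha {u w : W} {a : Fin m} {t : ArmVert n} :
    (ZG H m n).Adj (hv u) (av w a t) ↔ u = w ∧ t = .start := by
  constructor
  · rintro ⟨-, h | h⟩
    · exact h
    · exact h.elim
  · intro h
    exact ⟨fun he => (nomatch he), Or.inl h⟩

theorem zg_pp {u w : W} {i j : Fin n} : (ZG H m n).Adj (pv u i) (pv w j) ↔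
    u = w ∧ ((i : ℕ) + 1 = j ∨ (j : ℕ) + 1 = i) := by
  constructor
  · rintro ⟨-, ⟨h1, h2⟩ | ⟨h1, h2⟩⟩
    · exact ⟨h1, Or.inl h2⟩
    · exact ⟨h1.symm, Or.inr h2⟩
  · rintro ⟨rfl, h⟩
    refine ⟨fun he => ?_, ?_⟩
    · have : i = j := by simpa using he
      subst this; omega
    · rcases h with h | h
      · exact Or.inl ⟨rfl, h⟩
      · exact Or.inr ⟨rfl, h⟩

theorem zg_pa {u w : W} {i : Fin n} {a : Fin m} {t : ArmVert n} :
    ¬ (ZG H m n).Adj (pv u i) (av w a t) := by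
  rintro ⟨-, h | h⟩ <;> exact h.elim

theorem zg_aa {u w : W} {a b : Fin m} {s t : ArmVert n} :
    (ZG H m n).Adj (av u a s) (av w b t) ↔ u = w ∧ a = b ∧ (armGraph n).Adj s t := by
  constructor
  · rintro ⟨-, ⟨h1, h2, h3⟩ | ⟨h1, h2, h3⟩⟩
    · exact ⟨h1, h2, h3⟩
    · exact ⟨h1.symm, h2.symm, h3.symm⟩
  · rintro ⟨rfl, rfl, h⟩
    refine ⟨fun he => ?_, Or.inl ⟨rfl, rfl, h⟩⟩
    have : s = t := by simpa using he
    exact h.ne this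

theorem zg_a {w : W} {a : Fin m} {s t : ArmVert n} (h : (armGraph n).Adj s t) :
    (ZG H m n).Adj (av w a s) (av w a t) := zg_aa.2 ⟨rfl, rfl, h⟩

theorem zg_a_nbr {w : W} {a : Fin m} {t : ArmVert n} {u : ZVert W m n}
    (h : (ZG H m n).Adj (av w a t) u) :
    (∃ t', u = av w a t' ∧ (armGraph n).Adj t t') ∨ (u = hv w ∧ t = .start) := by
  rcases u with u | ⟨u, j⟩ | ⟨u, b, t'⟩
  · obtain ⟨rfl, rfl⟩ := zg_ha.1 h.symm
    exact Or.inr ⟨rfl, rfl⟩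
  · exact absurd h.symm zg_pa
  · obtain ⟨rfl, rfl, h2⟩ := zg_aa.1 h
    exact Or.inl ⟨t', rfl, h2⟩

theorem zg_connected (hne : Nonempty W)
    (hd : ∀ u w, u = w ∨ H.Adj u w ∨ ∃ x, H.Adj u x ∧ H.Adj x w) : (ZG H m n).Connected := by
  have hpath : ∀ (w : W) (c : ℕ) (hc : c < n),
      (ZG H m n).Reachable (hv w) (pv w ⟨c, hc⟩) := by
    intro w c
    induction c with
    | zero => intro hc; exact (zg_hp.2 ⟨rfl, rfl⟩ : (ZG H m n).Adj _ _).reachable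
    | succ c ih =>
      intro hc
      exact (ih (by omega)).trans
        (zg_pp.2 ⟨rfl, Or.inl rfl⟩ : (ZG H m n).Adj _ _).reachable
  have hb : ∀ u : ZVert W m n, ∃ w : W, (ZG H m n).Reachable (hv w) u := by
    intro u
    rcases u with u | ⟨u, j⟩ | ⟨u, b, t'⟩
    · exact ⟨u, .refl _⟩
    · exact ⟨u, hpath u j.1 j.2⟩
    · refine ⟨u, (zg_ha.2 ⟨rfl, rfl⟩ : (ZG H m n).Adj (hv u) (av u b .start)).reachable.trans ?_⟩
      let f : armGraph n →g ZG H m n := ⟨fun t => av u b t, fun h => zg_a h⟩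
      exact (arm_reach n t').map f
  have hh : ∀ u w : W, (ZG H m n).Reachable (hv u) (hv w) := by
    intro u w
    rcases hd u w with rfl | h | ⟨x, h1, h2⟩
    · exact .refl _
    · exact (zg_hh.2 h).reachable
    · exact (zg_hh.2 h1).reachable.trans (zg_hh.2 h2).reachable
  obtain ⟨w0⟩ := hne
  have : Nonempty (ZVert W m n) := ⟨hv w0⟩
  refine ⟨fun u v => ?_⟩
  obtain ⟨a, ha⟩ := hb u
  obtain ⟨b, hb⟩ := hb v
  exact (ha.symm.trans (hh a b)).trans hb

end

/-! ### Cuts and tracking -/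

section
variable {W : Type*} {H : SimpleGraph W} {m n : ℕ}

theorem zleg_dist {V : Type*} {G : SimpleGraph V} (hG : G.Connected) {z s z' : V}
    (h : ZLeg G z s z') : G.dist z' s + 1 = G.dist z s := by
  have h1 := adj_dist_le hG h.1 s
  have h2 := h.2
  omega

/-- Not beyond `x` on the arm `(w, a)`. -/
def Beh (w : W) (a : Fin m) (x : ℕ) (u : ZVert W m n) : Prop :=
  ¬ ∃ t, u = av w a t ∧ Bey x t

/-- Not on the arm `(w, a)`. -/
def OffArm (w : W) (a : Fin m) (u : ZVert W m n) : Prop := ∀ t, u ≠ av w a t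

theorem OffArm.beh {w : W} {a : Fin m} {x : ℕ} {u : ZVert W m n} (h : OffArm w a u) :
    Beh w a x u := by
  rintro ⟨t, rfl, -⟩; exact h t rfl

theorem beh_av {w : W} {a : Fin m} {x : ℕ} {t : ArmVert n} :
    Beh (n := n) w a x (av w a t) ↔ ¬ Bey x t := by
  constructor
  · intro h hb; exact h ⟨t, rfl, hb⟩
  · rintro h ⟨t', he, hb⟩
    have : t = t' := by simpa using he
    subst this; exact h hb

theorem beh_mono {w : W} {a : Fin m} {x y : ℕ} (hxy : x ≤ y) {u : ZVert W m n}
    (h : Beh w a x u) : Beh w a y u := by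
  rintro ⟨t, rfl, hb⟩; exact h ⟨t, rfl, bey_mono hxy hb⟩

theorem beh_edge {w : W} {a : Fin m} {x : ℕ} (hx : x ≤ n) {u v : ZVert W m n}
    (hu : Beh w a x u) (hv' : ¬ Beh w a x v) (h : (ZG H m n).Adj u v) :
    u = av w a (b2prev n x) ∧ v = av w a (b0 n x) := by
  unfold Beh at hv'
  push Not at hv'
  obtain ⟨t, rfl, ht⟩ := hv'
  rcases zg_a_nbr h.symm with ⟨t', rfl, h'⟩ | ⟨-, rfl⟩
  · rw [beh_av] at hu
    obtain ⟨rfl, rfl⟩ := arm_cut hx hu ht h'.symm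
    exact ⟨rfl, rfl⟩
  · exact ht.elim

theorem cut_beh {w : W} {a : Fin m} {x : ℕ} (hx : x ≤ n) :
    IsCut (ZG H m n) (Beh w a x) (av w a (b2prev n x)) :=
  ⟨beh_av.2 (not_bey_b2prev hx), fun _ _ hu hv' h => (beh_edge hx hu hv' h).1⟩

theorem cut_bey {w : W} {a : Fin m} {x : ℕ} (hx : x ≤ n) :
    IsCut (ZG H m n) (fun u => ¬ Beh w a x u) (av w a (b0 n x)) :=
  ⟨fun h => beh_av.1 h (bey_b0 hx), fun _ _ hu hv' h =>
    (beh_edge hx (not_not.1 hv') hu h.symm).2⟩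

theorem cut_off {w : W} {a : Fin m} : IsCut (ZG H m n) (OffArm w a) (hv w) := by
  refine ⟨fun t h => (nomatch h), fun u v hu hv' h => ?_⟩
  unfold OffArm at hv'
  push Not at hv'
  obtain ⟨t, rfl⟩ := hv'
  rcases zg_a_nbr h.symm with ⟨t', rfl, h'⟩ | ⟨rfl, -⟩
  · exact absurd rfl (hu t')
  · rfl

theorem off_dist (hG : (ZG H m n).Connected) {w : W} {a : Fin m} {u : ZVert W m n}
    (hu : OffArm w a u) :
    (ZG H m n).dist u (av w a (b2prev n 0)) = (ZG H m n).dist u (hv w) + 1 := by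
  rw [cut_off.dist hG hu (fun h => h _ rfl), b2prev_zero]
  rw [SimpleGraph.dist_eq_one_iff_adj.2 (zg_ha.2 ⟨rfl, rfl⟩)]

/-- `z` is at distance `e` behind `b₀ˣ` on the arm `(w, a)`. -/
def Trk (H : SimpleGraph W) (w : W) (a : Fin m) (x e : ℕ) (z : ZVert W m n) : Prop :=
  (e = 0 ∧ z = av w a (b0 n x)) ∨
    (Beh w a x z ∧ (ZG H m n).dist z (av w a (b2prev n x)) + 1 = e)

theorem trk_zero {w : W} {a : Fin m} {x : ℕ} {z : ZVert W m n} (h : Trk H w a x 0 z) :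
    z = av w a (b0 n x) := by
  rcases h with ⟨-, h⟩ | ⟨-, h⟩
  · exact h
  · omega

theorem trk_one (hG : (ZG H m n).Connected) {w : W} {a : Fin m} {x : ℕ} {z : ZVert W m n}
    (h : Trk H w a x 1 z) : z = av w a (b2prev n x) := by
  rcases h with ⟨h, -⟩ | ⟨-, h⟩
  · omega
  · exact hG.dist_eq_zero_iff.1 (by omega)

theorem trk_beh {w : W} {a : Fin m} {x e : ℕ} {z : ZVert W m n} (h : Trk H w a x (e+1) z) :
    Beh w a x z := by
  rcases h with ⟨h, -⟩ | ⟨h, -⟩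
  · omega
  · exact h

theorem trk_off (hG : (ZG H m n).Connected) {w : W} {a : Fin m} {u : ZVert W m n}
    (hu : OffArm w a u) : Trk H w a 0 ((ZG H m n).dist u (hv w) + 2) u :=
  Or.inr ⟨hu.beh, by rw [off_dist hG hu]⟩

theorem trk_move (hG : (ZG H m n).Connected) {w : W} {a : Fin m} {x e : ℕ} (hx : x ≤ n)
    {z z' s : ZVert W m n} (h : Trk H w a x (e+1) z) (hs : ¬ Beh w a x s)
    (hm : ZLeg (ZG H m n) z s z') : Trk H w a x e z' := by
  rcases h with ⟨h, -⟩ | ⟨h1, h2⟩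
  · omega
  · obtain ⟨h3, h4⟩ := (cut_beh (H := H) hx).move hG h1 hs hm
    by_cases hz : z = av w a (b2prev n x)
    · have h5 := h4 hz
      left
      have h6 : (ZG H m n).dist z (av w a (b2prev n x)) = 0 := by rw [hz]; simp
      exact ⟨by omega, (beh_edge hx h1 h5 hm.1).2⟩
    · right
      obtain ⟨h5, h6⟩ := h3 hz
      exact ⟨h5, by omega⟩

theorem trk_safe (hG : (ZG H m n).Connected) {w : W} {a : Fin m} {x e : ℕ} (hx : x ≤ n)
    {z s : ZVert W m n} (h : Trk H w a x e z) (hs : ¬ Beh w a x s)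
    (he : 2 ≤ e + (ZG H m n).dist (av w a (b0 n x)) s) :
    z ≠ s ∧ ¬ (ZG H m n).Adj z s := by
  suffices h : 2 ≤ (ZG H m n).dist z s by
    constructor
    · rintro rfl; simp at h
    · intro ha; rw [SimpleGraph.dist_eq_one_iff_adj.2 ha] at h; omega
  rcases h with ⟨h1, rfl⟩ | ⟨h1, h2⟩
  · omega
  · have h3 := (cut_beh (H := H) hx).dist hG h1 hs
    have h4 := (cut_bey (H := H) (w := w) (a := a) hx).dist hG hs
      (show ¬ ¬ Beh w a x (av w a (b2prev n x)) from not_not.2 (cut_beh (H := H) hx).mem)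
    have h5 : (ZG H m n).dist (av w a (b0 n x)) (av w a (b2prev n x)) = 1 :=
      SimpleGraph.dist_eq_one_iff_adj.2 (zg_a (arm_pq hx)).symm
    rw [SimpleGraph.dist_comm (u := s), SimpleGraph.dist_comm (u := s)] at h4
    omega

/-- `z` has index `i` in the copy `T_x` of the arm `(w, a)`. -/
def Idx (w : W) (a : Fin m) (x : Fin n) (i : Fin 5) (z : ZVert W m n) : Prop :=
  z = av w a (.inner x i) ∨ z = av w a (.outer x i)

theorem Idx.unique {w : W} {a : Fin m} {x : Fin n} {i j : Fin 5} {z : ZVert W m n}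
    (h1 : Idx w a x i z) (h2 : Idx w a x j z) : i = j := by
  rcases h1 with rfl | rfl <;> rcases h2 with h | h <;> simpa using h

theorem Idx.not_beh {w : W} {a : Fin m} {x : Fin n} {i : Fin 5} {z : ZVert W m n}
    (h1 : Idx w a x i z) : ¬ Beh w a x z := by
  rcases h1 with rfl | rfl <;> rw [beh_av, not_not] <;> exact le_rfl

theorem Idx.beh {w : W} {a : Fin m} {x : Fin n} {i : Fin 5} {z : ZVert W m n}
    (h1 : Idx w a x i z) : Beh w a (x+1) z := by
  rcases h1 with rfl | rfl <;> rw [beh_av] <;> simp [Bey]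

theorem idx_q {w : W} {a : Fin m} {x : Fin n} :
    Idx w a x 0 (av w a (b0 n x)) := by rw [b0_lt x.2]; exact Or.inr rfl

theorem idx_nbr {w : W} {a : Fin m} {x : Fin n} {i : Fin 5} {s s' : ZVert W m n}
    (h : Idx w a x i s) (hs : s' = s ∨ (ZG H m n).Adj s s') :
    (∃ j, near i j ∧ Idx w a x j s') ∨ (s' = av w a (.center x) ∧ s = av w a (.inner x i)) ∨
    (s' = av w a (b2prev n x) ∧ i = 0 ∧ s = av w a (.outer x 0)) ∨
    (s' = av w a (b0 n (x+1)) ∧ i = 2 ∧ s = av w a (.outer x 2)) := by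
  rcases hs with rfl | hs
  · exact Or.inl ⟨i, Or.inl rfl, h⟩
  rcases h with rfl | rfl
  · rcases zg_a_nbr hs with ⟨t, rfl, ht⟩ | ⟨-, h⟩
    · rcases arm_nbr_inner ht with ⟨j, hj, rfl⟩ | ⟨j, hj, rfl⟩ | rfl
      · exact Or.inl ⟨j, hj, Or.inl rfl⟩
      · exact Or.inl ⟨j, hj, Or.inr rfl⟩
      · exact Or.inr (Or.inl ⟨rfl, rfl⟩)
    · exact (nomatch h)
  · rcases zg_a_nbr hs with ⟨t, rfl, ht⟩ | ⟨-, h⟩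
    · rcases arm_nbr_outer ht with ⟨j, hj, rfl⟩ | ⟨j, hj, rfl⟩ | ⟨rfl, rfl⟩ | ⟨rfl, rfl⟩
      · exact Or.inl ⟨j, hj, Or.inl rfl⟩
      · exact Or.inl ⟨j, Or.inr hj, Or.inr rfl⟩
      · exact Or.inr (Or.inr (Or.inl ⟨rfl, rfl, rfl⟩))
      · exact Or.inr (Or.inr (Or.inr ⟨rfl, rfl, rfl⟩))
    · exact (nomatch h)

/-- Adjacent vertices with indices have near indices. -/
theorem idx_near {w : W} {a : Fin m} {x : Fin n} {i j : Fin 5} {s s' : ZVert W m n}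
    (h : Idx w a x i s) (h' : Idx w a x j s') (hs : s' = s ∨ (ZG H m n).Adj s s') :
    near i j := by
  rcases idx_nbr h hs with ⟨j', hj, hj'⟩ | ⟨rfl, -⟩ | ⟨rfl, -⟩ | ⟨rfl, -⟩
  · rw [h'.unique hj']; exact hj
  · rcases h' with h' | h' <;> simp at h'
  · exact absurd (beh_av.2 (not_bey_b2prev x.2.le)) h'.not_beh
  · exact absurd h'.beh (fun h => beh_av.1 h (bey_b0 x.2))

theorem idx_safe {w : W} {a : Fin m} {x : Fin n} {i j : Fin 5} {z s : ZVert W m n}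
    (h : Idx w a x i z) (h' : Idx w a x j s) (hn : ¬ near i j) :
    z ≠ s ∧ ¬ (ZG H m n).Adj z s :=
  ⟨fun he => hn (idx_near (H := H) h h' (Or.inl he.symm)), fun ha => hn (idx_near h h' (Or.inr ha))⟩

/-- Domination by inner vertices. -/
theorem inner_dom {w : W} {a : Fin m} {x : Fin n} {i j : Fin 5} {s : ZVert W m n}
    (h : Idx w a x j s) (hn : near i j) :
    av w a (.inner x i) = s ∨ (ZG H m n).Adj (av w a (.inner x i)) s := by
  rcases h with rfl | rfl
  · rcases hn with rfl | hn
    · exact Or.inl rfl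
    · exact Or.inr (zg_a (arm_in_in hn))
  · exact Or.inr (zg_a (arm_in_out hn))

/-- Domination by outer vertices. -/
theorem outer_dom {w : W} {a : Fin m} {x : Fin n} {i j : Fin 5} {s : ZVert W m n}
    (h : Idx w a x j s) (hn : near i j) :
    av w a (.outer x i) = s ∨ (ZG H m n).Adj (av w a (.outer x i)) s := by
  rcases h with rfl | rfl
  · exact Or.inr (zg_a (arm_in_out (near_symm _ _ hn)).symm)
  · rcases hn with rfl | hn
    · exact Or.inl rfl
    · exact Or.inr (zg_a (arm_out_out hn))

theorem idx_adj {w : W} {a : Fin m} {x : Fin n} {i j : Fin 5} {z s : ZVert W m n}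
    (h' : Idx w a x i z) (h : Idx w a x j s) (hn : near i j) : z = s ∨ (ZG H m n).Adj z s := by
  rcases h' with rfl | rfl
  · exact inner_dom h hn
  · exact outer_dom h hn

/-- The moves of a zombie at index `i` when the survivor is at an outer vertex of index `j`
at distance two. -/
theorem idx_move (hG : (ZG H m n).Connected) {w : W} {a : Fin m} {x : Fin n} {i j l : Fin 5}
    {z z' : ZVert W m n}
    (hz : Idx w a x i z) (hn : ¬ near i j)
    (hl : ∀ l', near i l' → near l' j → l' = l)
    (hm : ZLeg (ZG H m n) z (av w a (.outer x j)) z') : Idx w a x l z' := by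
  have hs : Idx w a x j (av w a (.outer x j) : ZVert W m n) := Or.inr rfl
  have h2 : (ZG H m n).dist z (av w a (.outer x j)) ≤ 2 := by
    have : ∃ l', near i l' ∧ near l' j ∧ l' ≠ i ∧ l' ≠ j := by
      revert hn; clear * -; revert i j; decide
    obtain ⟨l', h1, h2, h3, h4⟩ := this
    have ha1 := (idx_adj (H := H) hz (Or.inl rfl : Idx w a x l' (av w a (.inner x l'))) h1)
    have ha1' := ha1.resolve_left (by
      rintro rfl
      exact h3 (hz.unique (Or.inl rfl)).symm)
    have ha2 := (inner_dom (H := H) hs h2).resolve_left (by intro h; simp at h)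
    exact dist_le_two hG ha1' ha2
  have h3 := hm.2
  have h4 := dist_le_one hG (u := z') (v := av w a (.outer x j)) (by omega)
  have h5 : z' = (av w a (.outer x j) : ZVert W m n) ∨
      (ZG H m n).Adj (av w a (.outer x j)) z' := h4.imp id (fun h => h.symm)
  rcases idx_nbr hz (Or.inr hm.1) with ⟨l', hl', hi⟩ | ⟨rfl, -⟩ | ⟨rfl, rfl, rfl⟩ | ⟨rfl, rfl, rfl⟩
  · have := hl l' hl' (near_symm _ _ (idx_near hs hi h5))
    rwa [← this]
  · exfalso
    rcases h5 with h5 | h5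
    · simp at h5
    · rcases zg_a_nbr h5 with ⟨t, ht, h6⟩ | ⟨h6, -⟩
      · have : t = .center x := by simpa using ht.symm
        subst this
        obtain ⟨j', hj'⟩ := arm_nbr_center h6.symm
        simp at hj'
      · simp at h6
  · exfalso
    have := cut_beh (H := H) (w := w) (a := a) x.2.le
    rcases h4 with h4 | h4
    · exact hs.not_beh (h4 ▸ this.mem)
    · have := (beh_edge x.2.le this.mem hs.not_beh h4).2
      rw [b0_lt x.2] at this
      have : j = 0 := by simpa using this
      exact hn (Or.inl this.symm)
  · exfalso
    have := cut_bey (H := H) (w := w) (a := a) (x := x+1) x.2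
    rcases h4 with h4 | h4
    · exact this.mem (h4 ▸ hs.beh)
    · have := (beh_edge x.2 hs.beh this.mem h4.symm).1
      rw [b2prev_succ x.2] at this
      have : j = 2 := by simpa using this
      exact hn (Or.inl this.symm)

theorem dist_idx (hG : (ZG H m n).Connected) {w : W} {a : Fin m} {x : Fin n} {i j : Fin 5}
    {z s : ZVert W m n} (hz : Idx w a x i z) (hs : Idx w a x j s) (hn : ¬ near i j) :
    (ZG H m n).dist z s = 2 := by
  have h1 := idx_safe (H := H) hz hs hn
  have h2 := one_lt_dist hG h1.1 h1.2
  have : ∃ l', near i l' ∧ near l' j ∧ l' ≠ i ∧ l' ≠ j := by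
    revert hn; clear * -; revert i j; decide
  obtain ⟨l', h5, h6, h3, h4⟩ := this
  have hl : Idx w a x l' (av w a (.inner x l') : ZVert W m n) := Or.inl rfl
  have ha1 := (idx_adj (H := H) hz hl h5).resolve_left (by
    rintro rfl; exact h3 (hz.unique hl).symm)
  have ha2 := (inner_dom (H := H) hs h6).resolve_left (by
    rintro rfl; exact h4 (hl.unique hs))
  have := dist_le_two hG ha1 ha2
  omega

theorem trk_up (hG : (ZG H m n).Connected) {w : W} {a : Fin m} {x e : ℕ} (hx : x < n)
    {z : ZVert W m n} (h : Trk H w a x e z) : Trk H w a (x+1) (e+3) z := by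
  have hr : Idx w a ⟨x, hx⟩ 2 (av w a (b2prev n (x+1)) : ZVert W m n) := by
    rw [b2prev_succ hx]; exact Or.inr rfl
  have h2 : (ZG H m n).dist (av w a (b0 n x)) (av w a (b2prev n (x+1))) = 2 :=
    dist_idx hG (idx_q (x := ⟨x, hx⟩)) hr (by decide)
  right
  rcases h with ⟨rfl, rfl⟩ | ⟨h1, h3⟩
  · refine ⟨(idx_q (x := ⟨x, hx⟩)).beh, ?_⟩
    omega
  · refine ⟨beh_mono (by omega) h1, ?_⟩
    have h4 := (cut_beh (H := H) hx.le).dist hG h1 hr.not_beh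
    have h5 := (cut_bey (H := H) (w := w) (a := a) hx.le).dist hG hr.not_beh
      (show ¬ ¬ Beh w a x (av w a (b2prev n x)) from not_not.2 (cut_beh (H := H) hx.le).mem)
    have h6 : (ZG H m n).dist (av w a (b0 n x)) (av w a (b2prev n x)) = 1 :=
      SimpleGraph.dist_eq_one_iff_adj.2 (zg_a (arm_pq hx.le)).symm
    rw [SimpleGraph.dist_comm (v := av w a (b2prev n x)),
      SimpleGraph.dist_comm (v := av w a (b0 n x))] at h5
    omega

theorem idx_trk {w : W} {a : Fin m} {x : Fin n} {i : Fin 5} (hi : i = 1 ∨ i = 3)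
    {z : ZVert W m n} (h : Idx w a x i z) : Trk H w a (x+1) 2 z := by
  right
  refine ⟨h.beh, ?_⟩
  have hr : Idx w a x 2 (av w a (b2prev n (x+1)) : ZVert W m n) := by
    rw [b2prev_succ x.2]; exact Or.inr rfl
  have h1 := (idx_adj (H := H) h hr (by rcases hi with rfl | rfl <;> decide)).resolve_left (by
    rintro rfl
    have := h.unique hr
    rcases hi with rfl | rfl <;> exact absurd this (by decide))
  rw [SimpleGraph.dist_eq_one_iff_adj.2 h1]

end

/-! ### Lower bounds -/

section
variable {W : Type*} {H : SimpleGraph W} {m n : ℕ}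

/-- The base vertex. -/
def rho : ZVert W m n → W
  | Sum.inl w => w
  | Sum.inr (Sum.inl (w, _)) => w
  | Sum.inr (Sum.inr (w, _, _)) => w

theorem rho_adj {u v : ZVert W m n} (h : (ZG H m n).Adj u v) :
    rho u = rho v ∨ (u = hv (rho u) ∧ v = hv (rho v) ∧ H.Adj (rho u) (rho v)) := by
  rcases u with u | ⟨u, j⟩ | ⟨u, b, t⟩ <;> rcases v with v | ⟨v, j'⟩ | ⟨v, b', t'⟩
  · exact Or.inr ⟨rfl, rfl, zg_hh.1 h⟩
  · exact Or.inl (zg_hp.1 h).1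
  · exact Or.inl (zg_ha.1 h).1
  · exact Or.inl (zg_hp.1 h.symm).1.symm
  · exact Or.inl (zg_pp.1 h).1
  · exact absurd h zg_pa
  · exact Or.inl (zg_ha.1 h.symm).1.symm
  · exact absurd h.symm zg_pa
  · exact Or.inl (zg_aa.1 h).1

theorem not_copsWin {k j : ℕ} (hH : HProps H k) (hj : j < k) : ¬ CopsWinWith (ZG H m n) j := by
  classical
  refine not_copsWin_of_inv
    (fun z s => ∃ b, s = hv b ∧ ∀ i, rho (z i) ≠ b ∧ ¬ H.Adj (rho (z i)) b) ?_ ?_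
  · rintro z s ⟨b, rfl, hb⟩
    refine ⟨fun i h => (hb i).1 (by rw [h]; rfl), fun z' hz' => ?_⟩
    have hr : ∀ i, rho (z' i) ≠ b := by
      intro i h
      rcases hz' i with h1 | h1
      · rw [h1] at h; exact (hb i).1 h
      · rcases rho_adj h1 with h2 | ⟨-, -, h2⟩
        · exact (hb i).1 (h2.trans h)
        · rw [h] at h2; exact (hb i).2 h2
    refine ⟨fun i h => hr i (by rw [h]; rfl), ?_⟩
    obtain ⟨b', h1, -, h3⟩ := hH.esc (Finset.univ.image fun i => rho (z' i)) b
      (lt_of_le_of_lt Finset.card_image_le (by simpa using hj))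
    refine ⟨hv b', ?_, b', rfl, fun i => ?_⟩
    · rcases h1 with rfl | h1
      · exact Or.inl rfl
      · exact Or.inr (zg_hh.2 h1)
    · exact h3 _ (Finset.mem_image_of_mem _ (Finset.mem_univ i)) (hr i)
  · intro z
    obtain ⟨b, hb⟩ := hH.esc0 (Finset.univ.image fun i => rho (z i))
      (lt_of_le_of_lt Finset.card_image_le (by simpa using hj))
    exact ⟨hv b, b, rfl, fun i => hb _ (Finset.mem_image_of_mem _ (Finset.mem_univ i))⟩

/-- Survivor indices on an arm. -/
def sgm (t : ℕ) : Fin 5 := match t with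
  | 0 => 0
  | 1 => 4
  | 2 => 3
  | 3 => 2
  | _ => 1

/-- Indices of close followers. -/
def tau (t : ℕ) : Fin 5 := match t with
  | 0 => 2
  | 1 => 1
  | 2 => 0
  | 3 => 4
  | _ => 3

/-- A zombie with lag `l` when the survivor is in phase `t` of circling in `T_x`. -/
def SL (H : SimpleGraph W) (w : W) (a : Fin m) (x : Fin n) (t l : ℕ) (z : ZVert W m n) : Prop :=
  (∃ e, Trk H w a x e z ∧ e + t = 2 + l) ∨ (l = 0 ∧ Idx w a x (tau t) z)

theorem sl_move (hG : (ZG H m n).Connected) {w : W} {a : Fin m} {x : Fin n} {t l : ℕ} (ht : t < 4)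
    (hl : t = 3 → l = 0 ∨ 2 ≤ l) {z z' : ZVert W m n} (h : SL H w a x t l z)
    (hm : ZLeg (ZG H m n) z (av w a (.outer x (sgm t))) z') : SL H w a x (t+1) l z' := by
  have hs : Idx w a x (sgm t) (av w a (.outer x (sgm t)) : ZVert W m n) := Or.inr rfl
  rcases h with ⟨e, he, hel⟩ | ⟨rfl, h⟩
  · rcases e with _ | e
    · have : t = 2 ∧ l = 0 := by omega
      obtain ⟨rfl, rfl⟩ := this
      right
      refine ⟨rfl, ?_⟩
      have := trk_zero he
      subst this
      exact idx_move hG idx_q (j := sgm 2) (l := 4) (by decide) (by decide) hm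
    · left
      exact ⟨e, trk_move hG x.2.le he hs.not_beh hm, by omega⟩
  · right
    refine ⟨rfl, ?_⟩
    interval_cases t
    · exact idx_move hG h (j := sgm 0) (l := 1) (by decide) (by decide) hm
    · exact idx_move hG h (j := sgm 1) (l := 0) (by decide) (by decide) hm
    · exact idx_move hG h (j := sgm 2) (l := 4) (by decide) (by decide) hm
    · exact idx_move hG h (j := sgm 3) (l := 3) (by decide) (by decide) hm

theorem sl_exit (hG : (ZG H m n).Connected) {w : W} {a : Fin m} {x : Fin n} {l : ℕ}
    {z z' : ZVert W m n} (h : SL H w a x 3 l z)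
    (hm : ZLeg (ZG H m n) z (av w a (.outer x (sgm 3))) z') :
    Trk H w a (x+1) (2 + (l - 1)) z' := by
  have hs : Idx w a x (sgm 3) (av w a (.outer x (sgm 3)) : ZVert W m n) := Or.inr rfl
  rcases h with ⟨e, he, hel⟩ | ⟨rfl, h⟩
  · rcases e with _ | e
    · obtain rfl : l = 1 := by omega
      have := trk_zero he
      subst this
      exact idx_trk (Or.inl rfl)
        (idx_move hG idx_q (j := sgm 3) (l := 1) (by decide) (by decide) hm)
    · have := trk_up hG x.2 (trk_move hG x.2.le he hs.not_beh hm)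
      have he : e + 3 = 2 + (l-1) := by omega
      rwa [he] at this
  · exact idx_trk (Or.inr rfl) (idx_move hG h (j := sgm 3) (l := 3) (by decide) (by decide) hm)

theorem sl_wrap (hG : (ZG H m n).Connected) {w : W} {a : Fin m} {x : Fin n} {l : ℕ}
    (hl : l = 0 ∨ 5 ≤ l)
    {z z' : ZVert W m n} (h : SL H w a x 4 l z)
    (hm : ZLeg (ZG H m n) z (av w a (.outer x (sgm 4))) z') :
    SL H w a x 0 (l - 5) z' := by
  have hs : Idx w a x (sgm 4) (av w a (.outer x (sgm 4)) : ZVert W m n) := Or.inr rfl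
  rcases h with ⟨e, he, hel⟩ | ⟨rfl, h⟩
  · rcases e with _ | e
    · omega
    · exact Or.inl ⟨e, trk_move hG x.2.le he hs.not_beh hm, by omega⟩
  · exact Or.inr ⟨rfl, idx_move hG h (j := sgm 4) (l := 2) (by decide) (by decide) hm⟩

theorem sl_safe (hG : (ZG H m n).Connected) {w : W} {a : Fin m} {x : Fin n} {t l : ℕ} (ht : t ≤ 4)
    (hl : t = 4 → l = 0 ∨ 5 ≤ l) {z : ZVert W m n} (h : SL H w a x t l z) :
    z ≠ av w a (.outer x (sgm t)) ∧ ¬ (ZG H m n).Adj z (av w a (.outer x (sgm t))) := by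
  have hs : Idx w a x (sgm t) (av w a (.outer x (sgm t)) : ZVert W m n) := Or.inr rfl
  rcases h with ⟨e, he, hel⟩ | ⟨rfl, h⟩
  · refine trk_safe hG x.2.le he hs.not_beh ?_
    by_cases he2 : 2 ≤ e
    · omega
    · have h13 : t = 1 ∨ t = 2 ∨ t = 3 := by omega
      rcases h13 with rfl | rfl | rfl
      · have : (ZG H m n).dist (av w a (b0 n x)) (av w a (.outer x (sgm 1))) ≠ 0 := by
          rw [Ne, hG.dist_eq_zero_iff, b0_lt x.2]
          simp [sgm]
        omega
      · rw [dist_idx hG idx_q hs (by decide)]; omega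
      · rw [dist_idx hG idx_q hs (by decide)]; omega
  · refine idx_safe h hs ?_
    interval_cases t <;> decide

/-- The potential. -/
def Pot {j : ℕ} (n x : ℕ) (l : Fin j → ℕ) : Prop :=
  ∃ (M : ℕ) (S : Finset (Fin j)), M ≤ 4 ∧ (∀ i ∉ S, l i ≤ M) ∧ M + 4 * S.card + x + 1 ≤ n

theorem pot_mono {j n x : ℕ} {l l' : Fin j → ℕ} (h : Pot n x l) (hl : ∀ i, l' i ≤ l i) :
    Pot n x l' := by
  obtain ⟨M, S, h1, h2, h3⟩ := h
  exact ⟨M, S, h1, fun i hi => (hl i).trans (h2 i hi), h3⟩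

theorem pot_step {j n x : ℕ} {l : Fin j → ℕ} (h : Pot n x l) (i : Fin j) (hi : 1 ≤ l i)
    (hi' : l i ≤ 4) : Pot n (x+1) (fun i => l i - 1) := by
  classical
  obtain ⟨M, S, h1, h2, h3⟩ := h
  rcases M with _ | M
  · have hiS : i ∈ S := by
      by_contra hh
      have := h2 i hh
      omega
    refine ⟨3, S.erase i, by omega, fun i' hi2 => ?_, ?_⟩
    · by_cases he : i' = i
      · subst he; simp only; omega
      · have := h2 i' (fun hS => hi2 (Finset.mem_erase.2 ⟨he, hS⟩))
        simp only; omega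
    · rw [Finset.card_erase_of_mem hiS]
      have := Finset.card_pos.2 ⟨i, hiS⟩
      omega
  · refine ⟨M, S, by omega, fun i' hi2 => ?_, by omega⟩
    have := h2 i' hi2
    simp only; omega

/-- The positions from which the survivor evades. -/
inductive SInv (H : SimpleGraph W) (m n : ℕ) {j : ℕ} (z : Fin j → ZVert W m n) :
    ZVert W m n → Prop
  | base (b : W) : (∀ i, z i ≠ hv b ∧ ¬ (ZG H m n).Adj (z i) (hv b)) → SInv H m n z (hv b)
  | flee (b : W) (a : Fin m) (l : Fin j → ℕ) : (∀ i, Trk H b a 0 (3 + l i) (z i)) → Pot n 0 l →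
      SInv H m n z (av b a (b2prev n 0))
  | arm (b : W) (a : Fin m) (x : Fin n) (t : ℕ) (l : Fin j → ℕ) : t ≤ 4 →
      (t = 4 → ∀ i, l i = 0 ∨ 5 ≤ l i) → (∀ i, SL H b a x t (l i) (z i)) → Pot n x l →
      SInv H m n z (av b a (.outer x (sgm t)))

/-- Entering a copy. -/
theorem SInv.enter {j : ℕ} {z : Fin j → ZVert W m n} {b : W} {a : Fin m} {x : ℕ}
    {l : Fin j → ℕ} (h : ∀ i, Trk H b a x (2 + l i) (z i)) (hp : Pot n x l) :
    SInv H m n z (av b a (b0 n x)) := by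
  have hx : x < n := by obtain ⟨M, S, -, -, h⟩ := hp; omega
  rw [b0_lt hx]
  exact SInv.arm b a ⟨x, hx⟩ 0 l (by omega) (by omega) (fun i => Or.inl ⟨_, h i, by omega⟩) hp

theorem SInv.safe (hG : (ZG H m n).Connected) {j : ℕ} {z : Fin j → ZVert W m n}
    {s : ZVert W m n} (h : SInv H m n z s) (i : Fin j) : z i ≠ s ∧ ¬ (ZG H m n).Adj (z i) s := by
  cases h with
  | base b h => exact h i
  | flee b a l h hp =>
    rcases h i with ⟨h, -⟩ | ⟨-, h⟩
    · omega
    · constructor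
      · intro he; rw [he] at h; simp at h; omega
      · intro he; rw [SimpleGraph.dist_eq_one_iff_adj.2 he] at h; omega
  | arm b a x t l ht h4 h hp => exact sl_safe hG ht (fun h => h4 h i) (h i)

/-- Depth at most one. -/
def Shal (H : SimpleGraph W) (u : ZVert W m n) : Prop :=
  u = hv (rho u) ∨ (ZG H m n).Adj u (hv (rho u))

theorem shal_of_adj {u : ZVert W m n} {b : W} (h : u = hv b ∨ (ZG H m n).Adj u (hv b)) :
    Shal H u := by
  rcases h with rfl | h
  · exact Or.inl rfl
  · rcases rho_adj h with h1 | ⟨h1, -⟩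
    · right
      have : (hv (rho u) : ZVert W m n) = hv b := by rw [h1]; rfl
      rw [this]; exact h
    · exact Or.inl h1

theorem shal_dist {k : ℕ} (hH : HProps H k) (hG : (ZG H m n).Connected) {u : ZVert W m n}
    (h : Shal H u) (v : W) : (ZG H m n).dist u (hv v) ≤ 3 := by
  have h1 : (ZG H m n).dist u (hv (rho u)) ≤ 1 := by
    rcases h with h | h
    · rw [← h]; simp
    · rw [SimpleGraph.dist_eq_one_iff_adj.2 h]
  have h2 : (ZG H m n).dist (hv (rho u)) (hv v) ≤ 2 := by
    rcases hH.diam (rho u) v with h | h | ⟨x, h, h'⟩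
    · rw [h]; simp
    · rw [SimpleGraph.dist_eq_one_iff_adj.2 (zg_hh.2 h)]; omega
    · exact dist_le_two hG (zg_hh.2 h) (zg_hh.2 h')
  have := hG.dist_triangle (u := u) (v := hv (rho u)) (w := hv v)
  omega

theorem free_arm {j : ℕ} (hj : j < m) (z : Fin j → ZVert W m n) (b : W) :
    ∃ a : Fin m, ∀ i, OffArm b a (z i) := by
  classical
  by_contra hcon
  unfold OffArm at hcon
  push Not at hcon
  choose f hf using hcon
  have : Function.Injective f := by
    intro a a' h
    obtain ⟨t, ht⟩ := hf a
    obtain ⟨t', ht'⟩ := hf a'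
    rw [h, ht'] at ht
    simp at ht
    exact ht.1.symm
  have := Fintype.card_le_of_injective f this
  simp at this
  omega

theorem pot_close {j k : ℕ} (hj : j < m) (l : Fin j → ℕ) (C : Finset (Fin j)) (hC : k ≤ C.card)
    (hl : ∀ i ∈ C, l i ≤ 3) : Pot (4 * (m - k)) 0 l := by
  classical
  refine ⟨3, Cᶜ, by omega, fun i hi => hl i (by simpa using hi), ?_⟩
  rw [Finset.card_compl, Fintype.card_fin]
  have : C.card ≤ j := by simpa using Finset.card_le_univ C
  omega

theorem not_zombiesWin {k j : ℕ} (hH : HProps H k) (hj : j < m) :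
    ¬ ZombiesWinWith (ZG H m (4 * (m - k))) j := by
  classical
  have hG : (ZG H m (4 * (m - k))).Connected := zg_connected hH.ne hH.diam
  refine not_zombiesWin_of_inv (SInv H m _) ?_ ?_
  · intro z s hI
    have hsafe := hI.safe hG
    refine ⟨fun i => (hsafe i).1, fun z' hz' => ?_⟩
    have hsafe' : ∀ i, z' i ≠ s := fun i h => (hsafe i).2 (h ▸ (hz' i).1)
    refine ⟨hsafe', ?_⟩
    cases hI with
    | base b h =>
      let C : Finset (Fin j) :=
        Finset.univ.filter fun i => (ZG H m (4 * (m - k))).dist (z' i) (hv b) ≤ 3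
      by_cases hC : k ≤ C.card
      · obtain ⟨a, ha⟩ := free_arm hj z' b
        refine ⟨av b a (b2prev _ 0), Or.inr ?_, ?_⟩
        · rw [b2prev_zero]; exact zg_ha.2 ⟨rfl, rfl⟩
        refine SInv.flee b a (fun i => (ZG H m (4 * (m - k))).dist (z' i) (hv b) - 1) ?_ ?_
        · intro i
          have h1 := trk_off hG (ha i)
          have h2 := hG.pos_dist_of_ne (hsafe' i)
          have h3 : 3 + ((ZG H m (4 * (m - k))).dist (z' i) (hv b) - 1) =
            (ZG H m (4 * (m - k))).dist (z' i) (hv b) + 2 := by omega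
          rw [h3]; exact h1
        · refine pot_close hj _ C hC fun i hi => ?_
          have := (Finset.mem_filter.1 hi).2
          omega
      · let S : Finset W := (Finset.univ.filter fun i => Shal H (z' i)).image fun i => rho (z' i)
        have hS : S.card < k := by
          refine lt_of_le_of_lt (Finset.card_image_le.trans (Finset.card_le_card ?_))
            (not_le.1 hC)
          intro i hi
          rw [Finset.mem_filter] at hi ⊢
          exact ⟨hi.1, shal_dist hH hG hi.2 b⟩
        obtain ⟨b', h1, h2, h3⟩ := hH.esc S b hS
        refine ⟨hv b', ?_, SInv.base b' fun i => ?_⟩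
        · rcases h1 with rfl | h1
          · exact Or.inl rfl
          · exact Or.inr (zg_hh.2 h1)
        rw [← not_or]
        intro hcon
        have hsh := shal_of_adj hcon
        have hmem : rho (z' i) ∈ S :=
          Finset.mem_image.2 ⟨i, Finset.mem_filter.2 ⟨Finset.mem_univ i, hsh⟩, rfl⟩
        by_cases hb : rho (z' i) = b
        · have hb' := h2 (hb ▸ hmem)
          rcases hcon with h4 | h4
          · rw [h4] at hb; exact hb' hb
          · rcases rho_adj h4 with h5 | ⟨h5, -, -⟩
            · exact hb' (h5.symm.trans hb)
            · rw [hb] at h5; exact hsafe' i h5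
        · have h6 := h3 _ hmem hb
          rcases hcon with h4 | h4
          · rw [h4] at h6; exact h6.1 rfl
          · rcases rho_adj h4 with h5 | ⟨-, -, h5⟩
            · exact h6.1 h5
            · exact h6.2 h5
    | flee b a l h hp =>
      refine ⟨av b a (b0 _ 0), Or.inr (zg_a (arm_pq (Nat.zero_le _))), ?_⟩
      refine SInv.enter (l := l) (fun i => ?_) hp
      have hb : Beh b a 0 (z i) := by
        have := h i
        rw [show 3 + l i = (2 + l i) + 1 by omega] at this
        exact trk_beh this
      have hd : (ZG H m (4 * (m - k))).dist (z i) (av b a (b2prev _ 0)) = 2 + l i := by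
        rcases h i with ⟨h, -⟩ | ⟨-, h⟩ <;> omega
      refine Or.inr ⟨?_, ?_⟩
      · by_contra hb'
        have := (beh_edge (Nat.zero_le _) hb hb' (hz' i).1).1
        rw [this] at hd
        simp at hd
        omega
      · rw [zleg_dist hG (hz' i), hd]
    | arm b a x t l ht h4 h hp =>
      by_cases ht4 : t = 4
      · subst ht4
        refine ⟨av b a (.outer x (sgm 0)), Or.inr (zg_a (arm_out_out (by decide))), ?_⟩
        exact SInv.arm b a x 0 (fun i => l i - 5) (by omega) (by omega)
          (fun i => sl_wrap hG (h4 rfl i) (h i) (hz' i)) (pot_mono hp fun i => Nat.sub_le _ _)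
      · by_cases hex : t = 3 ∧ ∃ i, 1 ≤ l i ∧ l i ≤ 4
        · obtain ⟨rfl, i, hi, hi'⟩ := hex
          refine ⟨av b a (b0 _ (x+1)), Or.inr (zg_a ?_), ?_⟩
          · have := arm_pq (n := 4 * (m-k)) (x := x+1) x.2
            rwa [b2prev_succ x.2] at this
          · exact SInv.enter (l := fun i => l i - 1) (fun i => sl_exit hG (h i) (hz' i))
              (pot_step hp i hi hi')
        · have hl3 : t = 3 → ∀ i, l i = 0 ∨ 5 ≤ l i := by
            intro h3 i
            by_contra hh
            exact hex ⟨h3, i, by omega, by omega⟩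
          refine ⟨av b a (.outer x (sgm (t+1))), Or.inr (zg_a (arm_out_out ?_)), ?_⟩
          · have : t < 4 := by omega
            interval_cases t <;> decide
          · exact SInv.arm b a x (t+1) l (by omega) (fun h => hl3 (by omega))
              (fun i => sl_move hG (by omega)
                (fun h3 => by have := hl3 h3 i; omega) (h i) (hz' i)) hp
  · intro z
    by_cases hb : ∃ b, ∀ i, z i ≠ hv b ∧ ¬ (ZG H m (4 * (m - k))).Adj (z i) (hv b)
    · obtain ⟨b, hb⟩ := hb
      exact ⟨_, SInv.base b hb⟩
    · let C : Finset (Fin j) := Finset.univ.filter fun i => Shal H (z i)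
      have hC : k ≤ C.card := by
        by_contra hC
        obtain ⟨b, h3⟩ := hH.esc0 (C.image fun i => rho (z i))
          (lt_of_le_of_lt Finset.card_image_le (not_le.1 hC))
        refine hb ⟨b, fun i => ?_⟩
        rw [← not_or]
        intro hcon
        have hsh := shal_of_adj hcon
        have h6 := h3 (rho (z i))
          (Finset.mem_image.2 ⟨i, Finset.mem_filter.2 ⟨Finset.mem_univ i, hsh⟩, rfl⟩)
        rcases hcon with h4 | h4
        · rw [h4] at h6; exact h6.1 rfl
        · rcases rho_adj h4 with h5 | ⟨-, -, h5⟩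
          · exact h6.1 h5
          · exact h6.2 h5
      obtain ⟨v⟩ := hH.ne
      obtain ⟨a, ha⟩ := free_arm hj z v
      refine ⟨av v a (b0 _ 0), SInv.enter
        (l := fun i => (ZG H m (4 * (m - k))).dist (z i) (hv v)) (fun i => ?_) ?_⟩
      · rw [add_comm]; exact trk_off hG (ha i)
      · exact pot_close hj _ C hC fun i hi => shal_dist hH hG (Finset.mem_filter.1 hi).2 v

end

/-! ### The zombies' play on an arm -/

theorem PWin.zm1 {V : Type*} {G : SimpleGraph V} (hG : G.Connected) {J : ℕ}
    {z : Fin J → V} {s : V} (i1 : Fin J) (X : V) (hX : ZLeg G (z i1) s X)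
    (hw : ∀ z' : Fin J → V, (∀ i, ZLeg G (z i) s (z' i)) → z' i1 = X →
      ∀ s', (s' = s ∨ G.Adj s s') → PWin G (ZLeg G) z' s') : PWin G (ZLeg G) z s := by
  refine PWin.zmove hG (fun i u => i = i1 → u = X) (fun i _ => ?_)
    (fun z' h1 h2 => hw z' h1 (h2 i1 rfl))
  by_cases hi : i = i1
  · subst hi; exact Or.inl ⟨X, hX, fun _ => rfl⟩
  · exact Or.inr fun u h => absurd h hi

theorem PWin.zm2 {V : Type*} {G : SimpleGraph V} (hG : G.Connected) {J : ℕ}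
    {z : Fin J → V} {s : V} (i1 i2 : Fin J) (hne : i1 ≠ i2) (X Y : V) (hX : ZLeg G (z i1) s X)
    (hY : ZLeg G (z i2) s Y)
    (hw : ∀ z' : Fin J → V, (∀ i, ZLeg G (z i) s (z' i)) → z' i1 = X → z' i2 = Y →
      ∀ s', (s' = s ∨ G.Adj s s') → PWin G (ZLeg G) z' s') : PWin G (ZLeg G) z s := by
  refine PWin.zmove hG (fun i u => (i = i1 → u = X) ∧ (i = i2 → u = Y)) (fun i _ => ?_)
    (fun z' h1 h2 => hw z' h1 ((h2 i1).1 rfl) ((h2 i2).2 rfl))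
  by_cases hi : i = i1
  · subst hi; exact Or.inl ⟨X, hX, fun _ => rfl, fun h => absurd h hne⟩
  · by_cases hi2 : i = i2
    · subst hi2; exact Or.inl ⟨Y, hY, fun h => absurd h hi, fun _ => rfl⟩
    · exact Or.inr fun u => ⟨fun h => absurd h hi, fun h => absurd h hi2⟩

section
variable {W : Type*} {H : SimpleGraph W} {m n : ℕ}

theorem idx_leg (hG : (ZG H m n).Connected) {w : W} {a : Fin m} {x : Fin n} {i j i' : Fin 5}
    {z s : ZVert W m n} (hz : Idx w a x i z) (hs : Idx w a x j s) (h1 : ¬ near i j)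
    (h2 : near i i') (h3 : near i' j) (h4 : i ≠ i') :
    ZLeg (ZG H m n) z s (av w a (.inner x i')) := by
  have hsafe := idx_safe (H := H) hz hs h1
  have hi : Idx w a x i' (av w a (.inner x i') : ZVert W m n) := Or.inl rfl
  refine zleg_of_adj hG ((idx_adj hz hi h2).resolve_left ?_) (inner_dom hs h3) hsafe.1 hsafe.2
  rintro rfl
  exact h4 (hz.unique hi)

theorem PWin.zidx (hG : (ZG H m n).Connected) {w : W} {a : Fin m} {x : Fin n} {J : ℕ}
    {z : Fin J → ZVert W m n} {i j : Fin 5} {s : ZVert W m n} (i1 : Fin J)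
    (h : Idx w a x i (z i1)) (hs : Idx w a x j s) (hn : near i j) :
    PWin (ZG H m n) (ZLeg (ZG H m n)) z s := PWin.zadj hG i1 (idx_adj h hs hn)

theorem k0_win (hG : (ZG H m n).Connected) {w : W} {a : Fin m} {x : Fin n} {J : ℕ}
    {z : Fin J → ZVert W m n} {s : ZVert W m n} (i1 i2 : Fin J) (c c' : Fin 5)
    (hc : c = 3 ∧ c' = 4 ∨ c = 2 ∧ c' = 1)
    (h1 : Idx w a x c (z i1)) (hs : Idx w a x 0 s) (h2 : Trk H w a x 1 (z i2)) :
    PWin (ZG H m n) (ZLeg (ZG H m n)) z s := by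
  rcases hs with rfl | rfl
  · have hs : Idx w a x 0 (av w a (.inner x 0) : ZVert W m n) := Or.inl rfl
    refine PWin.zm1 hG i1 (av w a (.inner x c')) ?_ ?_
    · refine idx_leg hG h1 hs ?_ ?_ ?_ ?_ <;>
        rcases hc with ⟨rfl, rfl⟩ | ⟨rfl, rfl⟩ <;> decide
    · intro z' hz hz1 s' hs'
      have hq := trk_zero (trk_move hG x.2.le h2 hs.not_beh (hz i2))
      rcases idx_nbr hs hs' with ⟨j, hj, hj'⟩ | ⟨rfl, -⟩ | ⟨-, -, h⟩ | ⟨-, -, h⟩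
      · exact PWin.zidx hG i2 (hq ▸ idx_q) hj' hj
      · exact PWin.zadj hG i1 (Or.inr (hz1 ▸ zg_a arm_in_center))
      · simp at h
      · simp at h
  · refine PWin.zadj hG i2 (Or.inr ?_)
    rw [trk_one hG h2, ← b0_lt x.2]
    exact zg_a (arm_pq x.2.le)

theorem k1_win (hG : (ZG H m n).Connected) {w : W} {a : Fin m} {x : Fin n} {J : ℕ}
    {z : Fin J → ZVert W m n} {s : ZVert W m n} (i1 i2 : Fin J) (c c' d : Fin 5) (e : ℕ)
    (he : 1 ≤ e) (he' : e ≤ 2)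
    (hc : c = 2 ∧ c' = 3 ∧ d = 4 ∨ c = 3 ∧ c' = 2 ∧ d = 1)
    (h1 : Idx w a x c (z i1)) (hs : Idx w a x d s) (h2 : Trk H w a x e (z i2)) :
    PWin (ZG H m n) (ZLeg (ZG H m n)) z s := by
  obtain ⟨e, rfl⟩ : ∃ e', e = e' + 1 := ⟨e - 1, by omega⟩
  refine PWin.zm1 hG i1 (av w a (.inner x c')) ?_ ?_
  · refine idx_leg hG h1 hs ?_ ?_ ?_ ?_ <;>
      rcases hc with ⟨rfl, rfl, rfl⟩ | ⟨rfl, rfl, rfl⟩ <;> decide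
  · intro z' hz hz1 s' hs'
    have hq := trk_move hG x.2.le h2 hs.not_beh (hz i2)
    have hz1' : Idx w a x c' (z' i1) := Or.inl hz1
    rcases idx_nbr hs hs' with ⟨j, hj, hj'⟩ | ⟨rfl, -⟩ | ⟨-, h, -⟩ | ⟨-, h, -⟩
    · have hj2 : near c' j ∨ j = 0 := by
        clear * - hj hc; rcases hc with ⟨rfl, rfl, rfl⟩ | ⟨rfl, rfl, rfl⟩ <;> revert j <;> decide
      rcases hj2 with hj2 | rfl
      · exact PWin.zidx hG i1 hz1' hj' hj2
      · have : e = 0 ∨ e = 1 := by omega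
        rcases this with rfl | rfl
        · exact PWin.zidx hG i2 (trk_zero hq ▸ idx_q) hj' (by decide)
        · rcases hc with ⟨rfl, rfl, rfl⟩ | ⟨rfl, rfl, rfl⟩
          · exact k0_win hG i1 i2 3 4 (by decide) hz1' hj' hq
          · exact k0_win hG i1 i2 2 1 (by decide) hz1' hj' hq
    · exact PWin.zadj hG i1 (Or.inr (hz1 ▸ zg_a arm_in_center))
    · rcases hc with ⟨rfl, rfl, rfl⟩ | ⟨rfl, rfl, rfl⟩ <;> exact absurd h (by decide)
    · rcases hc with ⟨rfl, rfl, rfl⟩ | ⟨rfl, rfl, rfl⟩ <;> exact absurd h (by decide)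

theorem k2_win (hG : (ZG H m n).Connected) {w : W} {a : Fin m} {x : Fin n} {J : ℕ}
    {z : Fin J → ZVert W m n} {s : ZVert W m n} (i1 i2 : Fin J) (e : ℕ) (he' : e ≤ 3)
    (h1 : Idx w a x 1 (z i1)) (hs : Idx w a x 3 s) (h2 : Trk H w a x e (z i2)) :
    PWin (ZG H m n) (ZLeg (ZG H m n)) z s := by
  have hleg : ZLeg (ZG H m n) (z i1) s (av w a (.inner x 2)) :=
    idx_leg hG h1 hs (by decide) (by decide) (by decide) (by decide)
  rcases e with _ | e
  · have hq0 : Idx w a x 0 (z i2) := trk_zero h2 ▸ idx_q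
    have hne : i1 ≠ i2 := by rintro rfl; exact absurd (h1.unique hq0) (by decide)
    refine PWin.zm2 hG i1 i2 hne _ (av w a (.inner x 4)) hleg
      (idx_leg hG hq0 hs (by decide) (by decide) (by decide) (by decide)) ?_
    intro z' hz hz1 hz2 s' hs'
    rcases idx_nbr hs hs' with ⟨j, hj, hj'⟩ | ⟨rfl, -⟩ | ⟨-, h, -⟩ | ⟨-, h, -⟩
    · have hj2 : near 2 j ∨ near 4 j := by clear * - hj; revert j; decide
      rcases hj2 with hj2 | hj2
      · exact PWin.zidx hG i1 (Or.inl hz1) hj' hj2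
      · exact PWin.zidx hG i2 (Or.inl hz2) hj' hj2
    · exact PWin.zadj hG i1 (Or.inr (hz1 ▸ zg_a arm_in_center))
    · exact absurd h (by decide)
    · exact absurd h (by decide)
  · refine PWin.zm1 hG i1 _ hleg ?_
    intro z' hz hz1 s' hs'
    have hq := trk_move hG x.2.le h2 hs.not_beh (hz i2)
    rcases idx_nbr hs hs' with ⟨j, hj, hj'⟩ | ⟨rfl, -⟩ | ⟨-, h, -⟩ | ⟨-, h, -⟩
    · have hj2 : near 2 j ∨ j = 4 := by clear * - hj; revert j; decide
      rcases hj2 with hj2 | rfl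
      · exact PWin.zidx hG i1 (Or.inl hz1) hj' hj2
      · rcases Nat.eq_zero_or_pos e with rfl | hpos
        · exact PWin.zidx hG i2 (trk_zero hq ▸ idx_q) hj' (by decide)
        · exact k1_win hG i1 i2 2 3 4 e hpos (by omega) (by decide) (Or.inl hz1) hj' hq
    · exact PWin.zadj hG i1 (Or.inr (hz1 ▸ zg_a arm_in_center))
    · exact absurd h (by decide)
    · exact absurd h (by decide)

theorem center_nbr {w : W} {a : Fin m} {x : Fin n} {s' : ZVert W m n}
    (h : s' = av w a (.center x) ∨ (ZG H m n).Adj (av w a (.center x)) s') :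
    s' = av w a (.center x) ∨ ∃ i, s' = av w a (.inner x i) := by
  rcases h with h | h
  · exact Or.inl h
  · rcases zg_a_nbr h with ⟨t, rfl, ht⟩ | ⟨-, h⟩
    · obtain ⟨j, rfl⟩ := arm_nbr_center ht
      exact Or.inr ⟨j, rfl⟩
    · exact (nomatch h)

theorem center_not_outer {w : W} {a : Fin m} {x : Fin n} {i : Fin 5} :
    ¬ (ZG H m n).Adj (av w a (.center x)) (av w a (.outer x i)) := by
  intro h
  rcases center_nbr (Or.inr h) with h | ⟨i, h⟩ <;> simp at h

theorem center_not_beh {w : W} {a : Fin m} {x : Fin n} :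
    ¬ Beh (n := n) w a x (av w a (.center x)) := by
  rw [beh_av, not_not]; exact le_rfl

/-- The zombies win when the survivor is at a center. -/
theorem center_win (hG : (ZG H m n).Connected) {w : W} {a : Fin m} {x : Fin n} {J : ℕ}
    {z : Fin J → ZVert W m n} (i1 i2 : Fin J) (e : ℕ) (he : e ≤ 3)
    (h1 : Trk H w a x 0 (z i1)) (h2 : Trk H w a x (e+1) (z i2)) :
    PWin (ZG H m n) (ZLeg (ZG H m n)) z (av w a (.center x)) := by
  have hq : z i1 = av w a (.outer x 0) := by rw [trk_zero h1, b0_lt x.2]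
  refine PWin.zm1 hG i1 (av w a (.inner x 1)) ?_ ?_
  · rw [hq]
    refine zleg_of_adj hG (zg_a (arm_in_out (by decide)).symm) (Or.inr (zg_a arm_in_center))
      (by simp) (fun h => center_not_outer h.symm)
  intro z' hz hz1 s' hs'
  have hq2 := trk_move hG x.2.le h2 center_not_beh (hz i2)
  rcases center_nbr hs' with rfl | ⟨i, rfl⟩
  · exact PWin.zadj hG i1 (Or.inr (hz1 ▸ zg_a arm_in_center))
  have hs : Idx w a x i (av w a (.inner x i) : ZVert W m n) := Or.inl rfl
  have hi : near 1 i ∨ i = 3 ∨ i = 4 := by clear * -; revert i; decide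
  rcases hi with hi | rfl | rfl
  · exact PWin.zidx hG i1 (Or.inl hz1) hs hi
  · exact k2_win hG i1 i2 e he (Or.inl hz1) hs hq2
  rcases e with _ | e
  · exact PWin.zidx hG i2 (trk_zero hq2 ▸ idx_q) hs (by decide)
  have hsafe := idx_safe (H := H) (Or.inl hz1) hs (by decide)
  refine PWin.zm1 hG i1 (av w a (.center x)) ?_ ?_
  · exact zleg_of_adj hG (hz1 ▸ zg_a arm_in_center) (Or.inr (zg_a arm_in_center.symm))
      hsafe.1 hsafe.2
  intro z'' hz' hz1' s'' hs''
  have hq3 := trk_move hG x.2.le hq2 hs.not_beh (hz' i2)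
  rcases idx_nbr hs hs'' with ⟨j, hj, rfl | rfl⟩ | ⟨rfl, -⟩ | ⟨-, h, -⟩ | ⟨-, h, -⟩
  · exact PWin.zadj hG i1 (Or.inr (hz1' ▸ zg_a arm_in_center.symm))
  · have hs2 : Idx w a x j (av w a (.outer x j) : ZVert W m n) := Or.inr rfl
    have hleg : ZLeg (ZG H m n) (z'' i1) (av w a (.outer x j)) (av w a (.inner x j)) := by
      rw [hz1']
      exact zleg_of_adj hG (zg_a arm_in_center.symm) (Or.inr (zg_a (arm_in_out (Or.inl rfl))))
        (by simp) center_not_outer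
    by_cases hj0 : j = 0
    · subst hj0
      have h3 : e = 0 ∨ e = 1 ∨ e = 2 := by omega
      rcases h3 with rfl | rfl | rfl
      · exact PWin.zidx hG i2 (trk_zero hq3 ▸ idx_q) hs2 (by decide)
      · refine PWin.zadj hG i2 (Or.inr ?_)
        rw [trk_one hG hq3, ← b0_lt x.2]
        exact zg_a (arm_pq x.2.le)
      · refine PWin.zm1 hG i1 _ hleg ?_
        intro z3 hz3 hz31 s3 hs3
        have hq4 := trk_one hG (trk_move hG x.2.le hq3 hs2.not_beh (hz3 i2))
        rcases idx_nbr hs2 hs3 with ⟨j, hj, hj'⟩ | ⟨-, h⟩ | ⟨rfl, -, -⟩ | ⟨-, h, -⟩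
        · exact PWin.zidx hG i1 (Or.inl hz31) hj' hj
        · simp at h
        · exact .cap i2 hq4
        · exact absurd h (by decide)
    · refine PWin.zm1 hG i1 _ hleg ?_
      intro z3 hz3 hz31 s3 hs3
      rcases idx_nbr hs2 hs3 with ⟨j, hj, hj'⟩ | ⟨-, h⟩ | ⟨-, h, -⟩ | ⟨-, h, -⟩
      · exact PWin.zidx hG i1 (Or.inl hz31) hj' hj
      · simp at h
      · exact absurd h hj0
      · subst h; exact absurd hj (by decide)
  · exact .cap i1 hz1'
  · exact absurd h (by decide)
  · exact absurd h (by decide)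

/-- The conditions on the lags. -/
structure Lag {J : ℕ} (n x : ℕ) (l : Fin J → ℕ) : Prop where
  zero : ∃ i, l i = 0
  gap : ∀ i, 0 < l i → ∃ i', l i' < l i ∧ l i ≤ l i' + 4
  top : ∃ i, n ≤ l i + x

theorem Lag.first {J n x : ℕ} {l : Fin J → ℕ} (h : Lag n x l) (hx : x < n) :
    ∃ i, 1 ≤ l i ∧ l i ≤ 4 := by
  classical
  obtain ⟨i0, hi0⟩ := h.top
  have hne : (Finset.univ.filter fun i => 0 < l i).Nonempty :=
    ⟨i0, Finset.mem_filter.2 ⟨Finset.mem_univ _, by omega⟩⟩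
  obtain ⟨i, hi, hmin⟩ := Finset.exists_min_image _ l hne
  have hi' := (Finset.mem_filter.1 hi).2
  obtain ⟨i', h1, h2⟩ := h.gap i hi'
  refine ⟨i, hi', ?_⟩
  by_contra hh
  have := hmin i' (Finset.mem_filter.2 ⟨Finset.mem_univ _, by omega⟩)
  omega

theorem Lag.up {J n x : ℕ} {l : Fin J → ℕ} (h : Lag n x l) : Lag n (x+1) l :=
  ⟨h.zero, h.gap, h.top.imp fun _ h => by omega⟩

theorem Lag.up' {J n x : ℕ} {l : Fin J → ℕ} (h : Lag n x l) : Lag n (x+1) (fun i => l i - 1) := by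
  refine ⟨h.zero.imp fun _ h => by omega, fun i hi => ?_, h.top.imp fun _ h => by omega⟩
  obtain ⟨i', h1, h2⟩ := h.gap i (by omega)
  exact ⟨i', by omega, by omega⟩

theorem zleg_cut {V : Type*} {G : SimpleGraph V} (hG : G.Connected) {S : V → Prop} {c : V}
    (hc : IsCut G S c) {z u s : V} (hz : S z) (hu : S u) (hs : ¬ S s) (h : ZLeg G z c u) :
    ZLeg G z s u := by
  refine ⟨h.1, ?_⟩
  rw [hc.dist hG hz hs, hc.dist hG hu hs]
  have := h.2
  omega

/-- Zombies at `b₀ˣ` with the survivor beyond. -/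
theorem good_zero (hG : (ZG H m n).Connected) {w : W} {a : Fin m} {x : ℕ} (hx : x < n) {J : ℕ}
    (IH : ∀ (z : Fin J → ZVert W m n) (s : ZVert W m n) (l : Fin J → ℕ), Lag n (x+1) l →
      ¬ Beh w a (x+1) s → (∀ i, Trk H w a (x+1) (2 + l i) (z i)) →
      PWin (ZG H m n) (ZLeg (ZG H m n)) z s)
    {z : Fin J → ZVert W m n} {s : ZVert W m n} (l : Fin J → ℕ) (hl : Lag n x l)
    (hs : ¬ Beh w a x s) (h : ∀ i, Trk H w a x (l i) (z i)) :
    PWin (ZG H m n) (ZLeg (ZG H m n)) z s := by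
  obtain ⟨X, hX⟩ : ∃ X : Fin n, (X : ℕ) = x := ⟨⟨x, hx⟩, rfl⟩
  subst hX
  have hXe : (⟨X, hx⟩ : Fin n) = X := rfl
  obtain ⟨i1, hi1⟩ := hl.zero
  obtain ⟨i2, hi2, hi2'⟩ := hl.first hx
  have hq : ∀ i, l i = 0 → Idx w a X 0 (z i) := by
    intro i hi
    have := h i
    rw [hi] at this
    exact trk_zero this ▸ idx_q
  -- the moves towards index two or beyond
  have case3 : (Idx w a X 2 s ∨ ¬ Beh w a (X+1) s) →
      PWin (ZG H m n) (ZLeg (ZG H m n)) z s := by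
    intro hs2
    refine PWin.zmove hG (fun i u => l i = 0 → u = av w a (.inner X 1)) (fun i _ => ?_) ?_
    · by_cases hi : l i = 0
      · left
        refine ⟨_, ?_, fun _ => rfl⟩
        rcases hs2 with hs2 | hs2
        · exact idx_leg hG (hq i hi) hs2 (by decide) (by decide) (by decide) (by decide)
        · refine zleg_cut hG (cut_beh (H := H) (w := w) (a := a) (x := X+1) X.2) (hq i hi).beh
            (Idx.beh (i := 1) (Or.inl rfl)) hs2 ?_
          rw [b2prev_succ X.2]
          exact idx_leg hG (hq i hi) (Or.inr rfl : Idx w a X 2 _) (by decide) (by decide)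
            (by decide) (by decide)
      · exact Or.inr fun u h => absurd h hi
    intro z' hz hz' s' hs'
    have htr : ∀ i e, l i = e + 1 → Trk H w a X e (z' i) := by
      intro i e hi
      have := h i
      rw [hi] at this
      exact trk_move hG X.2.le this hs (hz i)
    have hz1 : Idx w a X 1 (z' i1) := Or.inl (hz' i1 hi1)
    have hgood : ¬ Beh w a (X+1) s' → PWin (ZG H m n) (ZLeg (ZG H m n)) z' s' := by
      intro hb
      refine IH z' s' l hl.up hb fun i => ?_
      by_cases hi : l i = 0
      · rw [hi]
        exact idx_trk (Or.inl rfl) (Or.inl (hz' i hi))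
      · have := trk_up hG X.2 (htr i (l i - 1) (by omega))
        rwa [show l i - 1 + 3 = 2 + l i by omega] at this
    rcases hs2 with hs2 | hs2
    · rcases idx_nbr hs2 hs' with ⟨j, hj, hj'⟩ | ⟨rfl, -⟩ | ⟨-, h, -⟩ | ⟨rfl, -, -⟩
      · have hj2 : near 1 j ∨ j = 3 := by clear * - hj; revert j; decide
        rcases hj2 with hj2 | rfl
        · exact PWin.zidx hG i1 hz1 hj' hj2
        · exact k2_win hG i1 i2 (l i2 - 1) (by omega) hz1 hj' (htr i2 _ (by omega))
      · exact PWin.zadj hG i1 (Or.inr (hz' i1 hi1 ▸ zg_a arm_in_center))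
      · exact absurd h (by decide)
      · exact hgood fun h => beh_av.1 h (bey_b0 X.2)
    · by_cases hb : Beh w a (X+1) s'
      · rcases hs' with rfl | hs'
        · exact absurd hb hs2
        · have := (beh_edge X.2 hb hs2 hs'.symm).1
          rw [b2prev_succ X.2] at this
          exact PWin.zidx hG i1 hz1 (Or.inr this : Idx w a X 2 s') (by decide)
      · exact hgood hb
  obtain ⟨t, rfl, ht⟩ : ∃ t, s = av w a t ∧ Bey X t := by
    by_contra hh; exact hs hh
  rcases bey_cases X.2 ht with ⟨i, hi⟩ | rfl | hb
  · have hs0 : Idx w a X i (av w a t : ZVert W m n) := by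
      rcases hi with rfl | rfl
      · exact Or.inl rfl
      · exact Or.inr rfl
    have hi3 : near 0 i ∨ i = 2 ∨ i = 3 := by clear * -; revert i; decide
    rcases hi3 with hi3 | rfl | rfl
    · exact PWin.zidx hG i1 (hq i1 hi1) hs0 hi3
    · exact case3 (Or.inl hs0)
    -- index three
    refine PWin.zmove hG (fun i u => l i = 0 → u = av w a (.inner X 4)) (fun i _ => ?_) ?_
    · by_cases hi : l i = 0
      · exact Or.inl ⟨_, idx_leg hG (hq i hi) hs0 (by decide) (by decide) (by decide) (by decide),
          fun _ => rfl⟩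
      · exact Or.inr fun u h => absurd h hi
    intro z' hz hz' s' hs'
    have htr : ∀ i e, l i = e + 1 → Trk H w a X e (z' i) := by
      intro i e hi
      have := h i
      rw [hi] at this
      exact trk_move hG X.2.le this hs (hz i)
    have hz1 : ∀ i, l i = 0 → Idx w a X 4 (z' i) := fun i hi => Or.inl (hz' i hi)
    rcases idx_nbr hs0 hs' with ⟨j, hj, hj'⟩ | ⟨rfl, -⟩ | ⟨-, h, -⟩ | ⟨-, h, -⟩
    · have hj2 : near 4 j ∨ j = 2 := by clear * - hj; revert j; decide
      rcases hj2 with hj2 | rfl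
      · exact PWin.zidx hG i1 (hz1 i1 hi1) hj' hj2
      -- index two
      have hq1 : ∀ i, l i = 1 → Idx w a X 0 (z' i) := fun i hi => trk_zero (htr i 0 hi) ▸ idx_q
      refine PWin.zmove hG (fun i u => (l i = 0 → u = av w a (.inner X 3)) ∧
        (l i = 1 → u = av w a (.inner X 1))) (fun i _ => ?_) ?_
      · by_cases hi : l i = 0
        · exact Or.inl ⟨_, idx_leg hG (hz1 i hi) hj' (by decide) (by decide) (by decide)
            (by decide), fun _ => rfl, fun h => by omega⟩
        · by_cases hi' : l i = 1
          · exact Or.inl ⟨_, idx_leg hG (hq1 i hi') hj' (by decide) (by decide) (by decide)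
              (by decide), fun h => by omega, fun _ => rfl⟩
          · exact Or.inr fun u => ⟨fun h => absurd h hi, fun h => absurd h hi'⟩
      intro z2 hz2 hz2' s2 hs2
      have htr2 : ∀ i e, l i = e + 2 → Trk H w a X e (z2 i) := fun i e hi =>
        trk_move hG X.2.le (htr i (e+1) hi) hj'.not_beh (hz2 i)
      have hz3 : Idx w a X 3 (z2 i1) := Or.inl ((hz2' i1).1 hi1)
      rcases idx_nbr hj' hs2 with ⟨j, hj, hj2⟩ | ⟨rfl, -⟩ | ⟨-, h, -⟩ | ⟨rfl, -, -⟩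
      · have hj3 : near 3 j ∨ j = 1 := by clear * - hj; revert j; decide
        rcases hj3 with hj3 | rfl
        · exact PWin.zidx hG i1 hz3 hj2 hj3
        · have hg : l i2 = 1 ∨ l i2 = 2 ∨ 3 ≤ l i2 := by omega
          rcases hg with hg | hg | hg
          · exact PWin.zidx hG i2 (Or.inl ((hz2' i2).2 hg)) hj2 (by decide)
          · exact PWin.zidx hG i2 (trk_zero (htr2 i2 0 hg) ▸ idx_q) hj2 (by decide)
          · exact k1_win hG i1 i2 3 2 1 (l i2 - 2) (by omega) (by omega) (by decide) hz3 hj2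
              (htr2 i2 _ (by omega))
      · exact PWin.zadj hG i1 (Or.inr ((hz2' i1).1 hi1 ▸ zg_a arm_in_center))
      · exact absurd h (by decide)
      · refine IH z2 _ _ hl.up' (fun h => beh_av.1 h (bey_b0 X.2)) fun i => ?_
        have h012 : l i = 0 ∨ l i = 1 ∨ 2 ≤ l i := by omega
        rcases h012 with hi | hi | hi
        · rw [hi]; exact idx_trk (Or.inr rfl) (Or.inl ((hz2' i).1 hi))
        · rw [hi]; exact idx_trk (Or.inl rfl) (Or.inl ((hz2' i).2 hi))
        · have := trk_up hG X.2 (htr2 i (l i - 2) (by omega))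
          rwa [show l i - 2 + 3 = 2 + (l i - 1) by omega] at this
    · exact PWin.zadj hG i1 (Or.inr (hz' i1 hi1 ▸ zg_a arm_in_center))
    · exact absurd h (by decide)
    · exact absurd h (by decide)
  · refine center_win hG i1 i2 (l i2 - 1) (by omega) ?_ ?_
    · have := h i1; rwa [hi1] at this
    · have := h i2; rwa [show l i2 - 1 + 1 = l i2 by omega]
  · exact case3 (Or.inr fun h => beh_av.1 h hb)

theorem good_D (hG : (ZG H m n).Connected) {w : W} {a : Fin m} {x : ℕ} (hx : x ≤ n) {J : ℕ}
    (l : Fin J → ℕ) (hl : Lag n x l)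
    (h0 : ∀ (z : Fin J → ZVert W m n) (s : ZVert W m n),
      ¬ Beh w a x s → (∀ i, Trk H w a x (l i) (z i)) →
      PWin (ZG H m n) (ZLeg (ZG H m n)) z s) (D : ℕ) (hD : D ≤ 2) :
    ∀ (z : Fin J → ZVert W m n) (s : ZVert W m n),
      ¬ Beh w a x s → (∀ i, Trk H w a x (D + l i) (z i)) →
      PWin (ZG H m n) (ZLeg (ZG H m n)) z s := by
  induction D with
  | zero =>
    intro z s hs h
    exact h0 z s hs fun i => by have := h i; rwa [Nat.zero_add] at this
  | succ D ih =>
    intro z s hs h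
    refine PWin.zmove hG (fun _ _ => True) (fun i _ => Or.inr fun _ => trivial) ?_
    intro z' hz _ s' hs'
    have htr : ∀ i, Trk H w a x (D + l i) (z' i) := fun i =>
      trk_move hG hx (by have := h i; rwa [show D + 1 + l i = D + l i + 1 by omega] at this) hs (hz i)
    by_cases hb : Beh w a x s'
    · rcases hs' with rfl | hs'
      · exact absurd hb hs
      · have hp := (beh_edge hx hb hs hs'.symm).1
        obtain ⟨i1, hi1⟩ := hl.zero
        have h1 := htr i1
        rw [hi1] at h1
        have hD' : D = 0 ∨ D = 1 := by omega
        rcases hD' with rfl | rfl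
        · refine PWin.zadj hG i1 (Or.inr ?_)
          rw [trk_zero h1, hp]
          exact (zg_a (arm_pq hx)).symm
        · exact .cap i1 (by rw [trk_one hG h1, hp])
    · exact ih (by omega) z' s' hb htr

theorem good_win (hG : (ZG H m n).Connected) {w : W} {a : Fin m} {J : ℕ} (r : ℕ) :
    ∀ x : ℕ, x + r = n → ∀ (z : Fin J → ZVert W m n) (s : ZVert W m n) (l : Fin J → ℕ),
      Lag n x l → ¬ Beh w a x s → (∀ i, Trk H w a x (2 + l i) (z i)) →
      PWin (ZG H m n) (ZLeg (ZG H m n)) z s := by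
  induction r with
  | zero =>
    intro x hx z s l hl hs h
    obtain rfl : x = n := by omega
    refine good_D hG le_rfl l hl (fun z s hs h => ?_) 2 le_rfl z s hs h
    obtain ⟨i1, hi1⟩ := hl.zero
    have h1 := h i1
    rw [hi1] at h1
    obtain ⟨t, rfl, ht⟩ : ∃ t, s = av w a t ∧ Bey x t := by
      by_contra hh; exact hs hh
    exact .cap i1 (by rw [trk_zero h1, bey_top ht])
  | succ r ih =>
    intro x hx z s l hl hs h
    exact good_D hG (by omega) l hl (fun z s hs h =>
      good_zero hG (by omega) (fun z s l hl hs h => ih (x+1) (by omega) z s l hl hs h)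
        l hl hs h) 2 le_rfl z s hs h

end

/-! ### Cops on an arm -/

section
variable {W : Type*} {H : SimpleGraph W} {m n : ℕ}

theorem nb_step {w : W} {a : Fin m} {x : ℕ} (hx : x ≤ n) {s s' : ZVert W m n}
    (hs : ¬ Beh w a x s) (h : s' = s ∨ (ZG H m n).Adj s s') :
    ¬ Beh w a x s' ∨ s' = av w a (b2prev n x) := by
  by_cases hb : Beh w a x s'
  · rcases h with rfl | h
    · exact absurd hb hs
    · exact Or.inr (beh_edge hx hb hs h.symm).1
  · exact Or.inl hb

theorem b2prev_idx {w : W} {a : Fin m} {x : Fin n} :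
    (av w a (b2prev n (x+1)) : ZVert W m n) = av w a (.outer x 2) := by
  rw [b2prev_succ x.2]

theorem b0_not_beh {w : W} {a : Fin m} {x : ℕ} (hx : x ≤ n) :
    ¬ Beh w a x (av w a (b0 n x) : ZVert W m n) := fun h => beh_av.1 h (bey_b0 hx)

theorem cop5 {w : W} {a : Fin m} {x : Fin n} {J : ℕ} (i : Fin J)
    (IH : ∀ (z : Fin J → ZVert W m n) (s : ZVert W m n), z i = av w a (b0 n (x+1)) →
      ¬ Beh w a (x+1) s → PWin (ZG H m n) (CLeg (ZG H m n)) z s)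
    {z : Fin J → ZVert W m n} {s : ZVert W m n} (hz : z i = av w a (.inner x 2))
    (hs : ¬ Beh w a (x+1) s) : PWin (ZG H m n) (CLeg (ZG H m n)) z s := by
  have hx : (x : ℕ) + 1 ≤ n := x.2
  refine PWin.cmove i (av w a (b2prev n (x+1))) ?_ ?_
  · rw [hz, b2prev_idx]; exact zg_a (arm_in_out (by decide))
  intro z' hz' s' hs'
  rcases nb_step hx hs hs' with hs1 | rfl
  swap
  · exact .cap i hz'
  refine PWin.cmove i (av w a (b0 n (x+1))) (hz' ▸ zg_a (arm_pq hx)) ?_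
  intro z2 hz2 s2 hs2
  rcases nb_step hx hs1 hs2 with hs3 | rfl
  · exact IH _ _ hz2 hs3
  · exact .cadj i (Or.inr (hz2 ▸ (zg_a (arm_pq hx)).symm))

theorem cop4 {w : W} {a : Fin m} {x : Fin n} {J : ℕ} (i : Fin J)
    (IH : ∀ (z : Fin J → ZVert W m n) (s : ZVert W m n), z i = av w a (b0 n (x+1)) →
      ¬ Beh w a (x+1) s → PWin (ZG H m n) (CLeg (ZG H m n)) z s)
    {z : Fin J → ZVert W m n} {s : ZVert W m n} (hz : z i = av w a (.center x))
    (hs : ¬ Beh w a (x+1) s ∨ ∃ j, j ≠ 0 ∧ Idx w a x j s) :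
    PWin (ZG H m n) (CLeg (ZG H m n)) z s := by
  have hx : (x : ℕ) + 1 ≤ n := x.2
  rcases hs with hs | ⟨j, hj, rfl | rfl⟩
  · refine PWin.cmove i (av w a (.inner x 2)) (hz ▸ zg_a arm_in_center.symm) ?_
    intro z' hz' s' hs'
    rcases nb_step hx hs hs' with hs1 | rfl
    · exact cop5 i IH hz' hs1
    · refine .cadj i (Or.inr ?_)
      rw [hz', b2prev_idx]; exact zg_a (arm_in_out (by decide))
  · exact .cadj i (Or.inr (hz ▸ zg_a arm_in_center.symm))
  · refine PWin.cmove i (av w a (.inner x j)) (hz ▸ zg_a arm_in_center.symm) ?_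
    intro z' hz' s' hs'
    have hi : Idx w a x j (av w a (.outer x j) : ZVert W m n) := Or.inr rfl
    rcases idx_nbr hi hs' with ⟨l, hl, hl'⟩ | ⟨-, h⟩ | ⟨-, h, -⟩ | ⟨rfl, rfl, -⟩
    · exact .cadj i (hz' ▸ inner_dom hl' hl)
    · simp at h
    · exact absurd h hj
    · exact cop5 i IH hz' (b0_not_beh hx)

theorem cop3 {w : W} {a : Fin m} {x : Fin n} {J : ℕ} (i : Fin J)
    (IH : ∀ (z : Fin J → ZVert W m n) (s : ZVert W m n), z i = av w a (b0 n (x+1)) →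
      ¬ Beh w a (x+1) s → PWin (ZG H m n) (CLeg (ZG H m n)) z s)
    {z : Fin J → ZVert W m n} {s : ZVert W m n} (hz : z i = av w a (.inner x 0))
    (hs : ¬ Beh w a (x+1) s ∨ s = av w a (.center x) ∨ ∃ j, Idx w a x j s) :
    PWin (ZG H m n) (CLeg (ZG H m n)) z s := by
  have hx : (x : ℕ) + 1 ≤ n := x.2
  rcases hs with hs | rfl | ⟨j, hj⟩
  · refine PWin.cmove i (av w a (.center x)) (hz ▸ zg_a arm_in_center) ?_
    intro z' hz' s' hs'
    refine cop4 i IH hz' ((nb_step hx hs hs').imp_right ?_)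
    rintro rfl
    exact ⟨2, by decide, Or.inr b2prev_idx⟩
  · exact .cadj i (Or.inr (hz ▸ zg_a arm_in_center))
  · by_cases hn : near 0 j
    · exact .cadj i (hz ▸ inner_dom hj hn)
    refine PWin.cmove i (av w a (.center x)) (hz ▸ zg_a arm_in_center) ?_
    intro z' hz' s' hs'
    rcases idx_nbr hj hs' with ⟨l, hl, hl'⟩ | ⟨rfl, -⟩ | ⟨-, rfl, -⟩ | ⟨rfl, rfl, -⟩
    · refine cop4 i IH hz' (Or.inr ⟨l, ?_, hl'⟩)
      rintro rfl; exact hn (near_symm _ _ hl)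
    · exact .cap i hz'
    · exact absurd (Or.inl rfl) hn
    · exact cop4 i IH hz' (Or.inl (b0_not_beh hx))

theorem copQ {w : W} {a : Fin m} {J : ℕ} (i : Fin J) (r : ℕ) : ∀ x, x + r = n →
    ∀ (z : Fin J → ZVert W m n) (s : ZVert W m n), z i = av w a (b0 n x) →
      ¬ Beh w a x s → PWin (ZG H m n) (CLeg (ZG H m n)) z s := by
  induction r with
  | zero =>
    intro x hx z s hz hs
    obtain rfl : x = n := hx
    unfold Beh at hs
    push Not at hs
    obtain ⟨t, rfl, ht⟩ := hs
    exact .cap i (by rw [hz, bey_top ht])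
  | succ r ih =>
    intro x hx z s hz hs
    have IH := ih (x+1) (by omega)
    obtain ⟨X, rfl⟩ : ∃ X : Fin n, (X : ℕ) = x := ⟨⟨x, by omega⟩, rfl⟩
    have hx1 : (X : ℕ) + 1 ≤ n := X.2
    unfold Beh at hs
    push Not at hs
    obtain ⟨t, rfl, ht⟩ := hs
    have h0 : Idx w a X 0 (z i) := hz ▸ idx_q
    have hadj : (ZG H m n).Adj (z i) (av w a (.inner X 0)) := by
      rw [hz, b0_lt X.2]; exact (zg_a (arm_in_out (Or.inl rfl))).symm
    rcases bey_cases X.2 ht with ⟨j, hj⟩ | hc | hb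
    · have hj' : Idx w a X j (av w a t : ZVert W m n) := by
        rcases hj with rfl | rfl
        · exact Or.inl rfl
        · exact Or.inr rfl
      by_cases hn : near 0 j
      · exact .cadj i (idx_adj h0 hj' hn)
      refine PWin.cmove i _ hadj ?_
      intro z' hz' s' hs'
      refine cop3 i IH hz' ?_
      rcases idx_nbr hj' hs' with ⟨l, hl, hl'⟩ | ⟨rfl, -⟩ | ⟨-, rfl, -⟩ | ⟨rfl, rfl, -⟩
      · exact Or.inr (Or.inr ⟨l, hl'⟩)
      · exact Or.inr (Or.inl rfl)
      · exact absurd (Or.inl rfl) hn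
      · exact Or.inl (b0_not_beh hx1)
    · subst hc
      refine PWin.cmove i _ hadj ?_
      intro z' hz' s' hs'
      refine cop3 i IH hz' (Or.inr ?_)
      rcases center_nbr hs' with rfl | ⟨j, rfl⟩
      · exact Or.inl rfl
      · exact Or.inr ⟨j, Or.inl rfl⟩
    · have hs : ¬ Beh w a (X+1) (av w a t : ZVert W m n) := fun h => beh_av.1 h hb
      refine PWin.cmove i _ hadj ?_
      intro z' hz' s' hs'
      refine cop3 i IH hz' ((nb_step hx1 hs hs').imp_right ?_)
      rintro rfl
      exact Or.inr ⟨2, Or.inr b2prev_idx⟩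

/-- A cop at the root of an arm catches a robber on it. -/
theorem cop_arm {w : W} {a : Fin m} {J : ℕ} (i : Fin J) {z : Fin J → ZVert W m n}
    {t : ArmVert n} (hz : z i = hv w) :
    PWin (ZG H m n) (CLeg (ZG H m n)) z (av w a t) := by
  have h0 : (av w a (b2prev n 0) : ZVert W m n) = av w a .start := by rw [b2prev_zero]
  by_cases ht : t = .start
  · subst ht; exact .cadj i (Or.inr (hz ▸ zg_ha.2 ⟨rfl, rfl⟩))
  have hs : ¬ Beh w a 0 (av w a t : ZVert W m n) := fun h => beh_av.1 h (bey_zero ht)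
  refine PWin.cmove i (av w a .start) (hz ▸ zg_ha.2 ⟨rfl, rfl⟩) ?_
  intro z' hz' s' hs'
  rcases nb_step (Nat.zero_le n) hs hs' with hs1 | rfl
  swap
  · exact .cap i (by rw [hz', h0])
  refine PWin.cmove i (av w a (b0 n 0)) ?_ ?_
  · rw [hz', ← h0]; exact zg_a (arm_pq (Nat.zero_le n))
  intro z2 hz2 s2 hs2
  rcases nb_step (Nat.zero_le n) hs1 hs2 with hs3 | rfl
  · exact copQ i n 0 (by omega) _ _ hz2 hs3
  · exact .cadj i (Or.inr (hz2 ▸ (zg_a (arm_pq (Nat.zero_le n))).symm))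

end

/-! ### The approach -/

section
variable {W : Type*} {H : SimpleGraph W} {m n : ℕ}

theorem PWin.mono {V : Type*} {G : SimpleGraph V} {L L' : V → V → V → Prop} {J : ℕ}
    (hL : ∀ z s z', L z s z' → L' z s z')
    {z : Fin J → V} {s : V} (h : PWin G L z s) : PWin G L' z s := by
  induction h with
  | cap i hi => exact .cap i hi
  | capm z' i hl hi => exact .capm z' i (fun j => hL _ _ _ (hl j)) hi
  | step z' hl _ ih => exact .step z' (fun j => hL _ _ _ (hl j)) ih

/-- All pursuers make zombie moves; those with a wish get it granted. -/
theorem PWin.gmove {V : Type*} {G : SimpleGraph V} (hG : G.Connected) {J : ℕ}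
    {L : V → V → V → Prop} (hL : ∀ z s z', ZLeg G z s z' → L z s z')
    {z : Fin J → V} {s : V} (P : Fin J → V → Prop)
    (h : ∀ i, z i ≠ s → (∃ u, ZLeg G (z i) s u ∧ P i u) ∨ ∀ u, P i u)
    (hw : ∀ z' : Fin J → V, (∀ i, ZLeg G (z i) s (z' i)) → (∀ i, P i (z' i)) →
      ∀ s', (s' = s ∨ G.Adj s s') → PWin G L z' s') : PWin G L z s := by
  by_cases hc : ∃ j, z j = s
  · obtain ⟨j, hj⟩ := hc; exact .cap j hj
  push Not at hc
  have : ∀ i, ∃ u, ZLeg G (z i) s u ∧ P i u := by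
    intro i
    rcases h i (hc i) with h | h
    · exact h
    · obtain ⟨u, hu⟩ := exists_closer hG (hc i)
      exact ⟨u, hu, h u⟩
  choose z' h1 h2 using this
  exact .step z' (fun i => hL _ _ _ (h1 i)) (hw z' h1 h2)

theorem PWin.gadj {V : Type*} {G : SimpleGraph V} (hG : G.Connected) {J : ℕ}
    {L : V → V → V → Prop} (hL : ∀ z s z', ZLeg G z s z' → L z s z')
    {z : Fin J → V} {s : V} (i : Fin J) (h : z i = s ∨ G.Adj (z i) s) : PWin G L z s :=
  (PWin.zadj hG i h).mono hL

/-- Not on the path attached to `w`. -/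
def OffPath (w : W) (u : ZVert W m n) : Prop := ∀ j, u ≠ pv w j

theorem zg_p_nbr {w : W} {j : Fin n} {u : ZVert W m n} (h : (ZG H m n).Adj (pv w j) u) :
    (u = hv w ∧ (j : ℕ) = 0) ∨ ∃ j' : Fin n, u = pv w j' ∧ ((j : ℕ) + 1 = j' ∨ (j' : ℕ) + 1 = j) := by
  rcases u with u | ⟨u, j'⟩ | ⟨u, b, t⟩
  · obtain ⟨rfl, h1⟩ := zg_hp.1 h.symm
    exact Or.inl ⟨rfl, h1⟩
  · obtain ⟨rfl, h1⟩ := zg_pp.1 h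
    exact Or.inr ⟨j', rfl, h1⟩
  · exact absurd h zg_pa

theorem cut_offPath {w : W} : IsCut (ZG H m n) (OffPath w) (hv w) := by
  refine ⟨fun t h => (nomatch h), fun u v hu hv' h => ?_⟩
  unfold OffPath at hv'
  push Not at hv'
  obtain ⟨j, rfl⟩ := hv'
  rcases zg_p_nbr h.symm with ⟨h, -⟩ | ⟨j', h, -⟩
  · exact h
  · exact absurd h (hu _)

/-- Position `c` on the path attached to `w`. -/
def PathPos (w : W) (c : ℕ) (u : ZVert W m n) : Prop :=
  (c = 0 ∧ u = hv w) ∨ ∃ j : Fin n, c = j + 1 ∧ u = pv w j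

theorem PathPos.adj {w : W} {c : ℕ} {u : ZVert W m n} (h : PathPos w c u) {j : Fin n}
    (hj : (j : ℕ) = c) : (ZG H m n).Adj u (pv w j) := by
  rcases h with ⟨rfl, rfl⟩ | ⟨j', rfl, rfl⟩
  · exact zg_hp.2 ⟨rfl, hj⟩
  · exact zg_pp.2 ⟨rfl, Or.inl hj.symm⟩

theorem PathPos.cut {w : W} {c : ℕ} {u : ZVert W m n} (h : PathPos w c u) :
    IsCut (ZG H m n) (fun y => ∀ j : Fin n, c ≤ j → y ≠ pv w j) u := by
  constructor
  · rcases h with ⟨rfl, rfl⟩ | ⟨j', rfl, rfl⟩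
    · intro j _ h; exact nomatch h
    · intro j hj h
      have : j' = j := by simpa using h
      subst this; omega
  · intro y y' hy hy' ha
    push Not at hy'
    obtain ⟨j, hj, rfl⟩ := hy'
    rcases zg_p_nbr ha.symm with ⟨rfl, hj0⟩ | ⟨j', rfl, hj'⟩
    · rcases h with ⟨rfl, rfl⟩ | ⟨j2, rfl, rfl⟩
      · rfl
      · omega
    · have h1 : ¬ c ≤ (j' : ℕ) := fun hc => hy j' hc rfl
      rcases h with ⟨rfl, rfl⟩ | ⟨j2, rfl, rfl⟩
      · omega
      · have : j2 = j' := Fin.ext (by omega)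
        rw [this]

theorem path_win_aux (hG : (ZG H m n).Connected)
    {L : ZVert W m n → ZVert W m n → ZVert W m n → Prop}
    (hL : ∀ z s z', ZLeg (ZG H m n) z s z' → L z s z') {w : W} {J : ℕ} (i : Fin J) (d : ℕ) :
    ∀ (c : ℕ) (z : Fin J → ZVert W m n) (j : Fin n), c + d = n → PathPos w c (z i) →
      c ≤ j + 1 → PWin (ZG H m n) L z (pv w j) := by
  induction d with
  | zero =>
    intro c z j hc hp hj
    rcases hp with ⟨rfl, hp⟩ | ⟨j', rfl, hp⟩
    · have := j.2; omega
    · have : j' = j := Fin.ext (by have := j.2; omega)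
      subst this; exact .cap i hp
  | succ d ih =>
    intro c z j hc hp hj
    by_cases h1 : c = j + 1
    · rcases hp with ⟨rfl, hp⟩ | ⟨j', hj', hp⟩
      · omega
      · have : j' = j := Fin.ext (by omega)
        subst this; exact .cap i hp
    by_cases h2 : (j : ℕ) = c
    · exact .gadj hG hL i (Or.inr (hp.adj h2))
    refine PWin.gmove hG hL (fun _ _ => True) (fun _ _ => Or.inr fun _ => trivial) ?_
    intro z' hz' _ s' hs'
    have hnS : ¬ ∀ j' : Fin n, c ≤ j' → (pv w j : ZVert W m n) ≠ pv w j' :=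
      fun h => h j (by omega) rfl
    have hm := (hp.cut.move hG (hp.cut (H := H)).mem hnS (hz' i)).2 rfl
    push Not at hm
    obtain ⟨j1, hj1, hj1'⟩ := hm
    have ha := (hz' i).1
    rw [hj1'] at ha
    have hpos : PathPos w (c+1) (z' i) := by
      refine Or.inr ⟨j1, ?_, hj1'⟩
      rcases hp with ⟨rfl, hp⟩ | ⟨j', rfl, hp⟩
      · rw [hp] at ha
        have := (zg_hp.1 ha).2; omega
      · rw [hp] at ha
        have := (zg_pp.1 ha).2; omega
    have : ∃ j' : Fin n, s' = pv w j' ∧ c ≤ j' := by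
      rcases hs' with rfl | hs'
      · exact ⟨j, rfl, by omega⟩
      · rcases zg_p_nbr hs' with ⟨-, h⟩ | ⟨j', rfl, h⟩
        · omega
        · exact ⟨j', rfl, by omega⟩
    obtain ⟨j', rfl, hj'⟩ := this
    exact ih (c+1) z' j' (by omega) hpos (by omega)

theorem path_win (hG : (ZG H m n).Connected)
    {L : ZVert W m n → ZVert W m n → ZVert W m n → Prop}
    (hL : ∀ z s z', ZLeg (ZG H m n) z s z' → L z s z') {w : W} {J : ℕ} (i : Fin J)
    {z : Fin J → ZVert W m n} (hz : z i = hv w) (j : Fin n) : PWin (ZG H m n) L z (pv w j) :=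
  path_win_aux hG hL i n 0 z j (by omega) (Or.inl ⟨rfl, hz⟩) (by omega)

/-! Distances. -/

theorem cut_base {w : W} : IsCut (ZG H m n) (fun u => rho u = w → u = hv w) (hv w) := by
  refine ⟨fun _ => rfl, fun u v hu hv' h => ?_⟩
  push Not at hv'
  rcases rho_adj h with h1 | ⟨h1, h2, -⟩
  · exact hu (h1.trans hv'.1)
  · rw [hv'.1] at h2; exact absurd h2 hv'.2

theorem base_dist (hG : (ZG H m n).Connected) {w : W} {u s : ZVert W m n}
    (hu : rho u = w → u = hv w) (hs : rho s = w) :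
    (ZG H m n).dist u s = (ZG H m n).dist u (hv w) + (ZG H m n).dist (hv w) s := by
  by_cases h : s = hv w
  · subst h; simp
  · exact cut_base.dist hG hu (fun hh => h (hh hs))

theorem toward (hG : (ZG H m n).Connected) {w : W} {z z' s : ZVert W m n}
    (hz : rho z ≠ w) (hs : rho s = w) (h : ZLeg (ZG H m n) z s z') :
    (ZG H m n).dist z' (hv w) + 1 = (ZG H m n).dist z (hv w) := by
  have h1 := base_dist hG (fun h => absurd h hz) hs
  have h2 : rho z' = w → z' = hv w := by
    intro hr
    rcases rho_adj h.1 with h1 | ⟨h1, h2, -⟩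
    · exact absurd (h1.trans hr) hz
    · rw [hr] at h2; exact h2
  have h3 := base_dist hG h2 hs
  have := zleg_dist hG h
  omega

theorem path_dist (hG : (ZG H m n).Connected) {v : W} (j : Fin n) :
    (ZG H m n).dist (pv v j) (hv v) = j + 1 := by
  classical
  apply le_antisymm
  · obtain ⟨c, hc⟩ := j
    induction c with
    | zero =>
      rw [SimpleGraph.dist_eq_one_iff_adj.2 (zg_hp.2 ⟨rfl, rfl⟩).symm]
    | succ c ih =>
      have h1 := ih (by omega)
      have h2 : (ZG H m n).Adj (pv v ⟨c+1, hc⟩) (pv v ⟨c, by omega⟩) :=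
        zg_pp.2 ⟨rfl, Or.inr rfl⟩
      have := adj_dist_le hG h2 (hv v)
      simp only at h1 ⊢
      omega
  · let f : ZVert W m n → ℕ := fun u => match u with
      | Sum.inr (Sum.inl (w, j)) => if w = v then j + 1 else 0
      | _ => 0
    have := dist_lower hG f (hv v) rfl ?_ (pv v j)
    · simpa [f] using this
    · intro a b hab
      rcases a with a | ⟨a, j⟩ | ⟨a, b', t⟩
      · simp [f]
      · rcases zg_p_nbr hab with ⟨rfl, h⟩ | ⟨j', rfl, h⟩
        · simp only [f]; split_ifs <;> omega
        · simp only [f]; split_ifs <;> omega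
      · simp [f]

/-- Entering a branch from distance one. -/
theorem win1 (hG : (ZG H m n).Connected)
    {L : ZVert W m n → ZVert W m n → ZVert W m n → Prop}
    (hL : ∀ z s z', ZLeg (ZG H m n) z s z' → L z s z') {w : W} {J : ℕ} {l : Fin J → ℕ}
    (i0 : Fin J) (hi0 : l i0 = 0) {S : ZVert W m n → Prop} (hc : IsCut (ZG H m n) S (hv w))
    (hW : ∀ (z : Fin J → ZVert W m n) (s : ZVert W m n), ¬ S s →
      (∀ i, S (z i) ∧ (ZG H m n).dist (z i) (hv w) = l i) → PWin (ZG H m n) L z s)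
    {z : Fin J → ZVert W m n} {s : ZVert W m n} (hs : ¬ S s)
    (hz : ∀ i, S (z i) ∧ (ZG H m n).dist (z i) (hv w) = l i + 1) : PWin (ZG H m n) L z s := by
  refine PWin.gmove hG hL (fun _ _ => True) (fun _ _ => Or.inr fun _ => trivial) ?_
  intro z' hz' _ s' hs'
  have hz2 : ∀ i, S (z' i) ∧ (ZG H m n).dist (z' i) (hv w) = l i := by
    intro i
    have := (hc.move hG (hz i).1 hs (hz' i)).1 ?_
    · refine ⟨this.1, ?_⟩
      have h1 := this.2
      rw [(hz i).2] at h1; omega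
    · intro h
      have h1 := (hz i).2
      rw [h] at h1; simp at h1
  by_cases hS : S s'
  · have : s' = hv w := by
      rcases hs' with rfl | hs'
      · exact absurd hS hs
      · exact hc.cut _ _ hS hs hs'.symm
    subst this
    refine .cap i0 (hG.dist_eq_zero_iff.1 ?_)
    rw [(hz2 i0).2, hi0]
  · exact hW z' s' hS hz2

theorem win1' (hG : (ZG H m n).Connected)
    {L : ZVert W m n → ZVert W m n → ZVert W m n → Prop}
    (hL : ∀ z s z', ZLeg (ZG H m n) z s z' → L z s z') {w : W} {J : ℕ} {l : Fin J → ℕ}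
    (i0 : Fin J) (hi0 : l i0 = 0)
    (hArm : ∀ (z : Fin J → ZVert W m n) (w : W) (a : Fin m) (t : ArmVert n),
      (∀ i, OffArm w a (z i) ∧ (ZG H m n).dist (z i) (hv w) = l i) →
      PWin (ZG H m n) L z (av w a t))
    {z : Fin J → ZVert W m n} {s : ZVert W m n} (hs : rho s = w)
    (hz : ∀ i, rho (z i) ≠ w ∧ (ZG H m n).dist (z i) (hv w) = l i + 1) :
    PWin (ZG H m n) L z s := by
  rcases s with u | ⟨u, j⟩ | ⟨u, b, t⟩
  · obtain rfl : u = w := hs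
    refine .gadj hG hL i0 (dist_le_one hG ?_)
    have := (hz i0).2
    rw [hi0] at this
    exact this.le
  · obtain rfl : u = w := hs
    refine win1 hG hL i0 hi0 cut_offPath ?_ (s := pv u j) (fun h => h j rfl) ?_
    · intro z s hs hz
      unfold OffPath at hs
      push Not at hs
      obtain ⟨j, rfl⟩ := hs
      refine path_win hG hL i0 (hG.dist_eq_zero_iff.1 ?_) j
      rw [(hz i0).2, hi0]
    · intro i
      refine ⟨fun j h => (hz i).1 ?_, (hz i).2⟩
      rw [h]; rfl
  · obtain rfl : u = w := hs
    refine win1 hG hL i0 hi0 (cut_off (a := b)) ?_ (s := av u b t) (fun h => h t rfl) ?_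
    · intro z s hs hz
      unfold OffArm at hs
      push Not at hs
      obtain ⟨t, rfl⟩ := hs
      exact hArm z u b t hz
    · intro i
      refine ⟨fun j h => (hz i).1 ?_, (hz i).2⟩
      rw [h]; rfl

theorem approach {k : ℕ} (hH : HProps H k) (hk : 1 ≤ k)
    {L : ZVert W m n → ZVert W m n → ZVert W m n → Prop}
    (hL : ∀ z s z', ZLeg (ZG H m n) z s z' → L z s z') {v : W} {J : ℕ} (hkJ : k ≤ J)
    {l : Fin J → ℕ}
    (hArm : ∀ (z : Fin J → ZVert W m n) (w : W) (a : Fin m) (t : ArmVert n),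
      (∀ i, OffArm w a (z i) ∧ (ZG H m n).dist (z i) (hv w) = l i) →
      PWin (ZG H m n) L z (av w a t))
    {z : Fin J → ZVert W m n}
    (hz : ∀ i : Fin J, ((i : ℕ) < k ∧ z i = hv v ∧ l i = 0) ∨
      (k ≤ (i : ℕ) ∧ ∃ j : Fin n, z i = pv v j ∧ (j : ℕ) + 1 = l i))
    (s : ZVert W m n) : PWin (ZG H m n) L z s := by
  have hG : (ZG H m n).Connected := zg_connected hH.ne hH.diam
  obtain ⟨i0, hi0k⟩ : ∃ i0 : Fin J, (i0 : ℕ) < k := ⟨⟨0, by omega⟩, hk⟩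
  have hlow : ∀ i : Fin J, (i : ℕ) < k → z i = hv v ∧ l i = 0 := by
    intro i hi
    rcases hz i with h | h
    · exact h.2
    · omega
  obtain ⟨hz0, hi0⟩ := hlow i0 hi0k
  have hrho : ∀ i, rho (z i) = v := by
    intro i
    rcases hz i with ⟨-, h, -⟩ | ⟨-, j, h, -⟩ <;> rw [h] <;> rfl
  have hdist : ∀ i w, (ZG H m n).dist (z i) (hv w) = l i + (ZG H m n).dist (hv v) (hv w) := by
    intro i w
    rcases hz i with ⟨-, h, h0⟩ | ⟨-, j, h, hj⟩
    · rw [h, h0]; omega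
    · rw [h, SimpleGraph.dist_comm, base_dist hG (w := v) (fun h => by
        rw [← h]; rfl) rfl, SimpleGraph.dist_comm (u := hv v) (v := pv v j), path_dist hG, hj,
        SimpleGraph.dist_comm]
      omega
  obtain ⟨w, hw⟩ : ∃ w, rho s = w := ⟨_, rfl⟩
  by_cases hvw : v = w
  · subst hvw
    rcases s with u | ⟨u, j⟩ | ⟨u, b, t⟩
    · obtain rfl : u = v := hw
      exact .cap i0 hz0
    · obtain rfl : u = v := hw
      exact path_win hG hL i0 hz0 j
    · obtain rfl : u = v := hw
      refine hArm z u b t fun i => ⟨?_, by rw [hdist]; simp⟩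
      intro t h
      rcases hz i with ⟨-, h', -⟩ | ⟨-, j, h', -⟩ <;> rw [h'] at h <;> exact nomatch h
  by_cases hadj : H.Adj v w
  · refine win1' hG hL i0 hi0 hArm hw fun i => ⟨by rw [hrho]; exact hvw, ?_⟩
    rw [hdist, SimpleGraph.dist_eq_one_iff_adj.2 (zg_hh.2 hadj)]
  obtain ⟨f, hf, hcov⟩ := hH.cover v w hvw hadj
  have h2 : (ZG H m n).dist (hv v) (hv w) = 2 := by
    apply le_antisymm
    · have := hf ⟨0, by omega⟩
      exact dist_le_two hG (zg_hh.2 this.1) (zg_hh.2 this.2)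
    · refine one_lt_dist hG ?_ ?_
      · intro h; exact hvw (Sum.inl_injective h)
      · intro h; exact hadj (zg_hh.1 h)
  refine PWin.gmove hG hL (fun i u => ∀ h : (i : ℕ) < k, u = hv (f ⟨i, h⟩)) ?_ ?_
  · intro i _
    by_cases hi : (i : ℕ) < k
    · left
      refine ⟨hv (f ⟨i, hi⟩), ⟨?_, ?_⟩, fun _ => rfl⟩
      · rw [(hlow i hi).1]; exact zg_hh.2 (hf _).1
      · rw [(hlow i hi).1, base_dist hG (u := hv v) (fun h => absurd h hvw) hw,
          base_dist hG (u := hv (f ⟨i, hi⟩)) (fun h => by rw [← h]; rfl) hw, h2,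
          SimpleGraph.dist_eq_one_iff_adj.2 (zg_hh.2 (hf _).2)]
        omega
    · exact Or.inr fun _ h => absurd h hi
  · intro z' hz' hP s' hs'
    have hcap : ∀ w', (w' = w ∨ H.Adj w w') → PWin (ZG H m n) L z' (hv w') := by
      intro w' hw'
      obtain ⟨i, hi⟩ := hcov w' hw'
      have h1 := hP ⟨i, by omega⟩ i.2
      refine .gadj hG hL ⟨i, by omega⟩ ?_
      rw [h1]
      rcases hi with hi | hi
      · left; rw [← hi]
      · right; exact zg_hh.2 hi
    have hs'' : rho s' = w ∨ ∃ w', s' = hv w' ∧ H.Adj w w' := by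
      rcases hs' with rfl | hs'
      · exact Or.inl hw
      · rcases rho_adj hs' with h | ⟨-, h, h'⟩
        · exact Or.inl (h ▸ hw)
        · exact Or.inr ⟨_, h, hw ▸ h'⟩
    rcases hs'' with hr | ⟨w', rfl, h⟩
    · refine win1' hG hL i0 hi0 hArm hr fun i => ⟨?_, ?_⟩
      · by_cases hi : (i : ℕ) < k
        · rw [hP i hi]; exact (hf _).2.ne
        · rcases hz i with h | ⟨-, j, h, -⟩
          · omega
          · have ha := (hz' i).1
            rw [h] at ha
            rcases zg_p_nbr ha with ⟨h, -⟩ | ⟨j', h, -⟩ <;> rw [h] <;> exact hvw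
      · have := toward hG (by rw [hrho]; exact hvw) hw (hz' i)
        rw [hdist, h2] at this
        omega
    · exact hcap w' (Or.inr h)

/-- `k` cops suffice. -/
theorem copsWin {k : ℕ} (hH : HProps H k) (hk : 1 ≤ k) : CopsWinWith (ZG H m n) k := by
  have hG : (ZG H m n).Connected := zg_connected hH.ne hH.diam
  obtain ⟨v⟩ := hH.ne
  refine copsWin_of_PWin (fun _ => hv v) fun s => ?_
  refine approach hH hk (fun _ _ _ h => Or.inr h.1) le_rfl (l := fun _ => 0) ?_
    (fun i => Or.inl ⟨i.2, rfl, rfl⟩) s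
  intro z w a t hz
  exact cop_arm ⟨0, hk⟩ (hG.dist_eq_zero_iff.1 (hz _).2)

/-- `m` zombies suffice. -/
theorem zombiesWin {k : ℕ} (hH : HProps H k) (hk : 1 ≤ k) (hkm : k ≤ m) :
    ZombiesWinWith (ZG H m (4 * (m - k))) m := by
  have hG : (ZG H m (4 * (m - k))).Connected := zg_connected hH.ne hH.diam
  obtain ⟨v⟩ := hH.ne
  let l : Fin m → ℕ := fun i => 4 * (i + 1 - k)
  have hex : ∀ i : Fin m, ∃ u : ZVert W m (4 * (m - k)),
      ((i : ℕ) < k ∧ u = hv v ∧ l i = 0) ∨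
      (k ≤ (i : ℕ) ∧ ∃ j : Fin (4 * (m - k)), u = pv v j ∧ (j : ℕ) + 1 = l i) := by
    intro i
    by_cases hi : (i : ℕ) < k
    · exact ⟨hv v, Or.inl ⟨hi, rfl, by simp only [l]; omega⟩⟩
    · have := i.2
      exact ⟨pv v ⟨4 * (i + 1 - k) - 1, by omega⟩, Or.inr ⟨by omega, _, rfl, by
        simp only [l]; omega⟩⟩
  choose z0 hz0 using hex
  refine zombiesWin_of_PWin z0 fun s => ?_
  refine approach hH hk (fun _ _ _ h => h) hkm (l := l) ?_ hz0 s
  intro z w a t hz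
  have h0 : l ⟨0, by omega⟩ = 0 := by simp only [l]; omega
  by_cases ht : t = .start
  · subst ht
    refine PWin.zadj hG ⟨0, by omega⟩ (Or.inr ?_)
    rw [hG.dist_eq_zero_iff.1 ((hz ⟨0, by omega⟩).2.trans h0)]
    exact zg_ha.2 ⟨rfl, rfl⟩
  refine good_win hG (w := w) (a := a) (4 * (m - k)) 0 (by omega) z _ l ?_
    (fun h => beh_av.1 h (bey_zero ht)) ?_
  · refine ⟨⟨_, h0⟩, ?_, ⟨⟨m - 1, by omega⟩, by simp only [l]; omega⟩⟩
    intro i hi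
    simp only [l] at hi ⊢
    have := i.2
    exact ⟨⟨i - 1, by omega⟩, by simp only; omega, by simp only; omega⟩
  · intro i
    have := trk_off hG (hz i).1
    rw [(hz i).2, Nat.add_comm] at this
    exact this

end

/-- Let `m ≥ k ≥ 1` and let `H` be a single vertex if `k = 1`, or the block intersection
graph of a balanced incomplete block design with parameters `(v, k, 1)` where
`v > k(k-1)² + 1` if `k ≥ 2`.  Then `c(Z_{k,m}(H)) = k` and `z(Z_{k,m}(H)) = m`. -/
theorem ZGraph_cop_and_zombie_number {W : Type*} (H : SimpleGraph W) (k m : ℕ)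
    (hk : 1 ≤ k) (hkm : k ≤ m)
    (hH : (k = 1 ∧ Nat.card W = 1 ∧ H = ⊥) ∨
      (2 ≤ k ∧ ∃ (P : Type) (B : Finset (Finset P)) (v : ℕ), Finite P ∧
        IsBIBD P B v k ∧ k * (k - 1) ^ 2 + 1 < v ∧ Nonempty (H ≃g blockGraph B))) :
    copNumber (ZGraph H k m) = k ∧ zombieNumber (ZGraph H k m) = m := by
  have hP : HProps H k := HProps.of_hyp H k hH
  have hc : CopsWinWith (ZG H m (4 * (m - k))) k := copsWin hP hk
  have hz : ZombiesWinWith (ZG H m (4 * (m - k))) m := zombiesWin hP hk hkm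
  constructor
  · apply le_antisymm
    · exact Nat.sInf_le hc
    · by_contra hlt
      have hmem : CopsWinWith (ZG H m (4 * (m - k))) (copNumber (ZGraph H k m)) :=
        Nat.sInf_mem (s := {j | CopsWinWith (ZG H m (4 * (m - k))) j}) ⟨k, hc⟩
      exact not_copsWin hP (not_le.1 hlt) hmem
  · apply le_antisymm
    · exact Nat.sInf_le hz
    · by_contra hlt
      have hmem : ZombiesWinWith (ZG H m (4 * (m - k))) (zombieNumber (ZGraph H k m)) :=
        Nat.sInf_mem (s := {j | ZombiesWinWith (ZG H m (4 * (m - k))) j}) ⟨m, hz⟩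
      exact not_zombiesWin hP (not_le.1 hlt) hmem
end
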